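/- Let K ⊆ ℝ² be a compact convex set with nonempty interior whose boundary ∂K is a C² curve of strictly positive curvature, let T be its outer billiard map, and let s be the Santalo point of K. Then T is continuously differentiable on Ω := ℝ² ∖ K, and if ∂K is not an ellipse there exist a point x ∈ Ω and an integer n ≥ 1 such that the differential D(T^n)(x) maps the radial vector x − s to a nonzero scalar multiple of the radial vector T^n(x) − s. -/

import Mathlib

/-!
Parametrize `∂K` by the angle `θ` of its outer normal, with support function `h` based at `s` and
radius of curvature `ρ` (`exists_normalParam`). Every exterior point lies on exactly one clockwise
tangent ray, at some distance `τ` from the point of tangency (`phi`), and `T` reflects it in that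
point (`psi`). This gives `T` of class `C¹` with an explicit differential (`contDiffOn_T`,
`hasFDerivAt_T`), and both `phi` and `psi` have Jacobian `τ` in absolute value, so `T` preserves area.

Suppose that no differential of an iterate of `T` maps a radial vector to a nonzero multiple of a
radial vector. Then, for every `N`, each exterior point `x` carries a direction, transverse to
`x - s`, that `D (T^[N + 1])` makes radial. Its slopes `W_N` are continuous and satisfy the Riccati
recursion `W_{N+1}(x) = -Y₀ + k² / (Y₁ - W_N (T x))` (`ricW`). The denominators never vanish
(`ric_ne`), and since they are positive near infinity they are positive everywhere (`ric_pos`).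

Integrate the recursion over the exterior of `K` against the weight `1 / (1 + ε |x - s|²)`. The
integrals of `W_N` are bounded above because the denominators are positive, while the
arithmetic-geometric mean inequality (`amgm_weight`) bounds their growth from below at each step.
Hence the integral of `Y₀ + Y₁ - 2 k`, suitably weighted, is nonnegative (`integral_jInt_nonneg`).
As `ε → 0` the integral in `τ` can be evaluated in closed form, and the result is
`∫ √(ρ / h) dθ ≥ 2π` (`integral_sqrt_ge`).

On the other hand `(∫ h ρ) (∫ h_c⁻²) ≤ 4π²` for the support function `h_c` based at some interior
point `c` (`exists_bs`), by Wirtinger's inequality on two half turns. The area of the polar dual is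
`(1/2) ∫ h⁻²`, so the inequality also holds with `c` replaced by the Santaló point `s`. By the
Cauchy–Schwarz inequality, `∫ √(ρ / h) = ∫ √(h ρ) h⁻¹ ≤ 2π`, so equality holds throughout and
`ρ h³` is constant (`exists_const`), which characterizes ellipses (`isEllipse_of_const`).
-/

open Real MeasureTheory Set

noncomputable section

/-- Determinant of two plane vectors. -/
def detV (u v : ℝ × ℝ) : ℝ := u.1 * v.2 - u.2 * v.1

/-- The unit vector of polar angle `φ`. -/
def uVec (φ : ℝ) : ℝ × ℝ := (Real.cos φ, Real.sin φ)

/-- The boundary of `K` is a `C²` curve of strictly positive curvature, expressed through the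
radial function `r` of `∂K` with respect to the interior point `O`. -/
def HasC2PosCurvBoundary (K : Set (ℝ × ℝ)) (O : ℝ × ℝ) (r : ℝ → ℝ) : Prop :=
  O ∈ interior K ∧ ContDiff ℝ 2 r ∧ (∀ φ, r (φ + 2 * π) = r φ) ∧ (∀ φ, 0 < r φ) ∧
  (∀ φ, 0 < r φ ^ 2 + 2 * (deriv r φ) ^ 2 - r φ * deriv (deriv r) φ) ∧
  frontier K = {p | ∃ φ, p = O + r φ • uVec φ}

/-- `T` is the outer billiard map of `K`: for `A ∉ K`, the midpoint of `[A, T A]` lies on `∂K`,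
the segment `[A, T A]` meets `K` exactly at this midpoint, and `K` lies to the left of the
oriented segment. -/
def IsOuterBilliard (K : Set (ℝ × ℝ)) (T : ℝ × ℝ → ℝ × ℝ) : Prop :=
  ∀ A, A ∉ K →
    T A ∉ K ∧
    (1 / 2 : ℝ) • (A + T A) ∈ frontier K ∧
    segment ℝ A (T A) ∩ K = {(1 / 2 : ℝ) • (A + T A)} ∧
    ∀ k ∈ K, 0 ≤ detV (T A - A) (k - (1 / 2 : ℝ) • (A + T A))

/-- A set is an ellipse if it is the image of the unit circle under an invertible affine map. -/
def IsEllipse (C : Set (ℝ × ℝ)) : Prop :=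
  ∃ (L : (ℝ × ℝ) →ₗ[ℝ] ℝ × ℝ) (c : ℝ × ℝ), Function.Bijective L ∧
    C = (fun x => c + L x) '' {x : ℝ × ℝ | x.1 ^ 2 + x.2 ^ 2 = 1}

/-- The polar dual of `C` with respect to `x`. -/
def polarDual (C : Set (ℝ × ℝ)) (x : ℝ × ℝ) : Set (ℝ × ℝ) :=
  {y | ∀ c ∈ C, y.1 * (c.1 - x.1) + y.2 * (c.2 - x.2) ≤ 1}

/-- `x` is the Santalo point of `C`: the interior point minimizing the area of the polar dual. -/
def IsSantaloPoint (C : Set (ℝ × ℝ)) (x : ℝ × ℝ) : Prop :=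
  x ∈ interior C ∧ ∀ y ∈ interior C, volume (polarDual C x) ≤ volume (polarDual C y)

/-- The data of a segment `[M₀, M₁]` with `Mᵢ` on the open ray of polar angle `φᵢ`,
tangent to `∂K` exactly at its midpoint. -/
def SegData (K : Set (ℝ × ℝ)) (φ₀ φ₁ : ℝ) (M₀ M₁ : ℝ × ℝ) : Prop :=
  (∃ s > (0 : ℝ), M₀ = s • uVec φ₀) ∧ (∃ s > (0 : ℝ), M₁ = s • uVec φ₁) ∧
  (1 / 2 : ℝ) • (M₀ + M₁) ∈ frontier K ∧
  segment ℝ M₀ M₁ ∩ K = {(1 / 2 : ℝ) • (M₀ + M₁)}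

/-- `S` is the generating function of the outer billiard of `K` (with respect to the origin `0`):
`S φ₀ φ₁` is the area of the triangle `0 M₀ M₁`. -/
def IsGenFun (K : Set (ℝ × ℝ)) (S : ℝ → ℝ → ℝ) : Prop :=
  ∀ φ₀ φ₁ : ℝ, φ₀ < φ₁ → φ₁ < φ₀ + π →
    ∃ M₀ M₁, SegData K φ₀ φ₁ M₀ M₁ ∧ S φ₀ φ₁ = |detV M₀ M₁| / 2

/-- The angular configuration `φ : ℤ → ℝ` is locally minimizing for the generating function `S`. -/
def LocMinConfig (S : ℝ → ℝ → ℝ) (φ : ℤ → ℝ) : Prop :=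
  ∀ M N : ℤ, M ≤ N →
    IsLocalMin (fun x : ℤ → ℝ =>
      S (φ (M - 1)) (x M) + (∑ i ∈ Finset.Icc M (N - 1), S (x i) (x (i + 1))) +
        S (x N) (φ (N + 1))) φ

/-- `φ` is a choice of polar angles for the sequence `A`, with consecutive angles within `(0, π)`
of each other. -/
def IsPolarLift (A : ℤ → ℝ × ℝ) (φ : ℤ → ℝ) : Prop :=
  (∀ n, ∃ ρ > (0 : ℝ), A n = ρ • uVec (φ n)) ∧ ∀ n, φ n < φ (n + 1) ∧ φ (n + 1) < φ n + π

/-- Every orbit of the outer billiard map `T` is locally minimizing with respect to the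
generating function `S`. -/
def AllOrbitsLocMin (K : Set (ℝ × ℝ)) (T : ℝ × ℝ → ℝ × ℝ) (S : ℝ → ℝ → ℝ) : Prop :=
  ∀ A : ℤ → ℝ × ℝ, (∀ n, A n ∉ K) → (∀ n, A (n + 1) = T (A n)) →
    ∀ φ : ℤ → ℝ, IsPolarLift A φ → LocMinConfig S φ

/-! ### Parametrization of the boundary by the normal angle -/

/-- Parametrization of `∂K` by the angle `θ` of the outer normal: `(a θ, b θ)` is the point of
`∂K` with outer normal `(cos θ, sin θ)`, and `ρ θ` is the radius of curvature there. -/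
structure NormalParam (K : Set (ℝ × ℝ)) (a b ρ : ℝ → ℝ) : Prop where
  da : ∀ θ, HasDerivAt a (-(ρ θ * sin θ)) θ
  db : ∀ θ, HasDerivAt b (ρ θ * cos θ) θ
  cρ : Continuous ρ
  pos : ∀ θ, 0 < ρ θ
  pa : ∀ θ, a (θ + 2 * π) = a θ
  pb : ∀ θ, b (θ + 2 * π) = b θ
  pρ : ∀ θ, ρ (θ + 2 * π) = ρ θ
  fr : frontier K = range (fun θ => (a θ, b θ))
  supp : ∀ θ, ∀ k ∈ K, k.1 * cos θ + k.2 * sin θ ≤ a θ * cos θ + b θ * sin θ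

/-- A boundary given by a `C²` radial function with positive curvature can be reparametrized by the angle
of its outer normal: the normal angle `φ - arctan (r' / r)` is a strictly increasing `C¹` function of
the polar angle `φ`. -/
theorem exists_normalParam (K : Set (ℝ × ℝ)) (hconv : Convex ℝ K) (hcomp : IsCompact K)
    (O : ℝ × ℝ) (r : ℝ → ℝ) (h : HasC2PosCurvBoundary K O r) :
    ∃ a b ρ, NormalParam K a b ρ := by
  obtain ⟨hO, hr, hper, hpos, hcurv, hfr⟩ := h
  have hr1 : Differentiable ℝ r := hr.differentiable (by norm_num)
  have hr' : ContDiff ℝ 1 (deriv r) := by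
    have : ContDiff ℝ (1 + 1) r := by simpa [one_add_one_eq_two] using hr
    exact (contDiff_succ_iff_deriv.1 this).2.2
  have hr2 : Differentiable ℝ (deriv r) := hr'.differentiable (by norm_num)
  have hr2c : Continuous (deriv (deriv r)) := hr'.continuous_deriv (by norm_num)
  have hd : ∀ φ, HasDerivAt r (deriv r φ) φ := fun φ => (hr1 φ).hasDerivAt
  have hdd : ∀ φ, HasDerivAt (deriv r) (deriv (deriv r) φ) φ := fun φ => (hr2 φ).hasDerivAt
  have hper' : ∀ φ, deriv r (φ + 2 * π) = deriv r φ := by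
    intro φ
    have : (fun x => r (x + 2 * π)) = r := funext hper
    rw [← deriv_comp_add_const, this]
  have hper'' : ∀ φ, deriv (deriv r) (φ + 2 * π) = deriv (deriv r) φ := by
    intro φ
    have : (fun x => deriv r (x + 2 * π)) = deriv r := funext hper'
    rw [← deriv_comp_add_const, this]
  set q : ℝ → ℝ := fun φ => r φ ^ 2 + deriv r φ ^ 2 with hq
  have hqpos : ∀ φ, 0 < q φ := fun φ => by have := hpos φ; simp only [hq]; positivity
  -- the normal angle as a function of the polar angle
  set v : ℝ → ℝ := fun φ => φ - arctan (deriv r φ / r φ) with hv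
  set g : ℝ → ℝ := fun φ =>
    (r φ ^ 2 + 2 * (deriv r φ) ^ 2 - r φ * deriv (deriv r) φ) / q φ with hg
  have hgpos : ∀ φ, 0 < g φ := fun φ => div_pos (hcurv φ) (hqpos φ)
  have hvd : ∀ φ, HasDerivAt v (g φ) φ := by
    intro φ
    have h0 := (hpos φ).ne'
    have h1 := ((hdd φ).div (hd φ) h0).arctan
    have h2 := (hasDerivAt_id φ).sub h1
    refine h2.congr_deriv ?_
    have h4 : r φ ^ 2 + deriv r φ ^ 2 ≠ 0 := (hqpos φ).ne'
    have h3 : 1 + (deriv r φ / r φ) ^ 2 ≠ 0 := by positivity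
    simp only [hg, hq, Pi.div_apply]
    field_simp
    ring
  have hvm : StrictMono v := strictMono_of_hasDerivAt_pos hvd hgpos
  have hvc : Continuous v := continuous_iff_continuousAt.2 fun φ => (hvd φ).continuousAt
  have hvs : Function.Surjective v := by
    refine hvc.surjective ?_ ?_
    · refine Filter.tendsto_atTop_mono (f := fun φ => φ - π / 2) (fun φ => ?_)
        (Filter.tendsto_atTop_add_const_right _ _ Filter.tendsto_id)
      have := arctan_lt_pi_div_two (deriv r φ / r φ)
      simp only [hv]; linarith
    · refine Filter.tendsto_atBot_mono (g := v) (f := fun φ => φ + π / 2) (fun φ => ?_)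
        (Filter.tendsto_atBot_add_const_right _ _ Filter.tendsto_id)
      have := neg_pi_div_two_lt_arctan (deriv r φ / r φ)
      simp only [hv]; linarith
  set e := StrictMono.orderIsoOfSurjective v hvm hvs with he
  set f : ℝ → ℝ := fun θ => e.symm θ with hf
  have hvf : ∀ θ, v (f θ) = θ := fun θ => e.apply_symm_apply θ
  have hfc : Continuous f := e.symm.continuous
  have hfd : ∀ θ, HasDerivAt f (g (f θ))⁻¹ θ := fun θ =>
    HasDerivAt.of_local_left_inverse hfc.continuousAt (hvd (f θ)) (hgpos _).ne'
      (Filter.Eventually.of_forall hvf)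
  have hvper : ∀ φ, v (φ + 2 * π) = v φ + 2 * π := fun φ => by
    simp only [hv, hper, hper']; ring
  have hfper : ∀ θ, f (θ + 2 * π) = f θ + 2 * π := fun θ => by
    apply hvm.injective
    rw [hvf, hvper, hvf]
  have hqs : ∀ φ, √(q φ) ^ 2 = q φ := fun φ => sq_sqrt (hqpos φ).le
  have hqsp : ∀ φ, 0 < √(q φ) := fun φ => sqrt_pos.2 (hqpos φ)
  have hβ : ∀ φ, √(1 + (deriv r φ / r φ) ^ 2) = √(q φ) / r φ := by
    intro φ
    have h0 := hpos φ
    rw [sqrt_eq_iff_mul_self_eq (by positivity) (by positivity)]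
    have : √(q φ) / r φ * (√(q φ) / r φ) = √(q φ) ^ 2 / r φ ^ 2 := by ring
    rw [this, hqs]; simp only [hq]; field_simp
  have hcos : ∀ φ, cos (v φ) = (r φ * cos φ + deriv r φ * sin φ) / √(q φ) := by
    intro φ
    have h0 := (hpos φ).ne'
    have h1 := (hqsp φ).ne'
    simp only [hv]
    rw [cos_sub, cos_arctan, sin_arctan, hβ]
    field_simp
  have hsin : ∀ φ, sin (v φ) = (r φ * sin φ - deriv r φ * cos φ) / √(q φ) := by
    intro φ
    have h0 := (hpos φ).ne'
    have h1 := (hqsp φ).ne'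
    simp only [hv]
    rw [sin_sub, cos_arctan, sin_arctan, hβ]
    field_simp
  have hx : ∀ φ, HasDerivAt (fun φ => O.1 + r φ * cos φ) (-(√(q φ) * sin (v φ))) φ := by
    intro φ
    refine (((hd φ).mul (hasDerivAt_cos φ)).const_add O.1).congr_deriv ?_
    rw [hsin]; have h1 := (hqsp φ).ne'; field_simp; ring
  have hy : ∀ φ, HasDerivAt (fun φ => O.2 + r φ * sin φ) (√(q φ) * cos (v φ)) φ := by
    intro φ
    refine (((hd φ).mul (hasDerivAt_sin φ)).const_add O.2).congr_deriv ?_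
    rw [hcos]; have h1 := (hqsp φ).ne'; field_simp; ring
  have hgc : Continuous g := by
    have := hr.continuous
    have := hr'.continuous
    refine Continuous.div (by fun_prop) (by fun_prop) fun φ => (hqpos φ).ne'
  have hqc : Continuous q := by
    have := hr.continuous
    have := hr'.continuous
    fun_prop
  have hmem : ∀ φ, (O.1 + r φ * cos φ, O.2 + r φ * sin φ) ∈ frontier K := by
    intro φ; rw [hfr]; exact ⟨φ, by ext <;> simp [uVec]⟩
  refine ⟨fun θ => O.1 + r (f θ) * cos (f θ), fun θ => O.2 + r (f θ) * sin (f θ),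
    fun θ => √(q (f θ)) * (g (f θ))⁻¹, ?_, ?_, ?_, ?_, ?_, ?_, ?_, ?_, ?_⟩
  · intro θ
    have := (hx (f θ)).comp θ (hfd θ)
    rw [hvf] at this
    exact this.congr_deriv (by ring)
  · intro θ
    have := (hy (f θ)).comp θ (hfd θ)
    rw [hvf] at this
    exact this.congr_deriv (by ring)
  · refine Continuous.mul (by fun_prop) (Continuous.inv₀ (by fun_prop) fun θ => (hgpos _).ne')
  · intro θ; exact mul_pos (hqsp _) (inv_pos.2 (hgpos _))
  · intro θ; simp [hfper, hper]
  · intro θ; simp [hfper, hper]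
  · intro θ; simp [hfper, hper, hper', hper'', hq, hg]
  · rw [hfr]; ext p; constructor
    · rintro ⟨φ, rfl⟩
      refine ⟨v φ, ?_⟩
      have : f (v φ) = φ := e.symm_apply_apply φ
      ext <;> simp [uVec, this]
    · rintro ⟨θ, rfl⟩
      exact ⟨f θ, by ext <;> simp [uVec]⟩
  · intro θ
    set φ := f θ with hφ
    set P : ℝ × ℝ := (O.1 + r φ * cos φ, O.2 + r φ * sin φ) with hP
    obtain ⟨F, hF⟩ := geometric_hahn_banach_open_point hconv.interior isOpen_interior
      (show P ∉ interior K from (hmem φ).2)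
    have hFc : ∀ x : ℝ × ℝ, F x = F (1, 0) * x.1 + F (0, 1) * x.2 := by
      intro x
      have : x = x.1 • ((1, 0) : ℝ × ℝ) + x.2 • ((0, 1) : ℝ × ℝ) := by ext <;> simp
      conv_lhs => rw [this]
      rw [map_add, map_smul, map_smul, smul_eq_mul, smul_eq_mul]; ring
    have hFK : ∀ k ∈ K, F k ≤ F P := by
      intro k hk
      have h1 : k ∈ closure (interior K) := by
        rw [hconv.closure_interior_eq_closure_of_nonempty_interior ⟨O, hO⟩]
        exact subset_closure hk
      exact closure_minimal (fun x hx => (hF x hx).le)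
        (isClosed_le F.continuous continuous_const) h1
    set c := F (1, 0)
    set d := F (0, 1)
    have hmax : IsLocalMax (fun φ => c * (O.1 + r φ * cos φ) + d * (O.2 + r φ * sin φ)) φ := by
      refine Filter.Eventually.of_forall fun φ' => ?_
      have := hFK _ (hcomp.isClosed.frontier_subset (hmem φ'))
      rw [hFc, hFc P] at this
      simpa [hP] using this
    have h0 := hmax.hasDerivAt_eq_zero (((hx φ).const_mul c).add ((hy φ).const_mul d))
    rw [hφ, hvf, ← hφ] at h0
    have h0' : -c * sin θ + d * cos θ = 0 := by
      have h1 := (hqsp φ).ne'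
      have : √(q φ) * (-c * sin θ + d * cos θ) = 0 := by linarith
      exact (mul_eq_zero.1 this).resolve_left h1
    set μ := c * cos θ + d * sin θ with hμ
    have hsc := sin_sq_add_cos_sq θ
    have hcμ : c = μ * cos θ := by simp only [hμ]; linear_combination (-c) * hsc + (-sin θ)*h0'
    have hdμ : d = μ * sin θ := by simp only [hμ]; linear_combination (-d) * hsc + (cos θ)*h0'
    have hpr : (P.1 - O.1) * cos θ + (P.2 - O.2) * sin θ = r φ ^ 2 / √(q φ) := by
      have e1 := hcos φ
      have e2 := hsin φ
      rw [hφ, hvf, ← hφ] at e1 e2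
      rw [e1, e2]
      have hsc := sin_sq_add_cos_sq φ
      simp only [hP]
      linear_combination r φ ^ 2 / √(q φ) * hsc
    have hμpos : 0 < μ := by
      have h1 := hF O hO
      rw [hFc, hFc P] at h1
      have h2 : 0 < μ * ((P.1 - O.1) * cos θ + (P.2 - O.2) * sin θ) := by
        have : μ * ((P.1 - O.1) * cos θ + (P.2 - O.2) * sin θ) =
          (c * P.1 + d * P.2) - (c * O.1 + d * O.2) := by rw [hcμ, hdμ]; ring
        rw [this]; linarith
      rw [hpr] at h2
      have h3 : 0 < r φ ^ 2 / √(q φ) := div_pos (pow_pos (hpos φ) 2) (hqsp φ)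
      exact pos_of_mul_pos_left h2 h3.le
    intro k hk
    have h1 := hFK k hk
    rw [hFc, hFc P, hcμ, hdμ] at h1
    have h2 : μ * (k.1 * cos θ + k.2 * sin θ) ≤ μ * (P.1 * cos θ + P.2 * sin θ) := by linarith
    exact le_of_mul_le_mul_left h2 hμpos

/-! ### Tangential coordinates of the exterior -/

/-- The support function of `∂K` with respect to `s`, at the normal angle `θ`. -/
def supH (a b : ℝ → ℝ) (s : ℝ × ℝ) (θ : ℝ) : ℝ := (a θ - s.1) * cos θ + (b θ - s.2) * sin θ

/-- The derivative of the support function: the tangential component of the boundary point. -/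
def supG (a b : ℝ → ℝ) (s : ℝ × ℝ) (θ : ℝ) : ℝ := -(a θ - s.1) * sin θ + (b θ - s.2) * cos θ

/-- The point at distance `τ` from the boundary point `(a θ, b θ)`, clockwise along the tangent. -/
def phi (a b : ℝ → ℝ) (z : ℝ × ℝ) : ℝ × ℝ := (a z.1 + z.2 * sin z.1, b z.1 - z.2 * cos z.1)

/-- The point at distance `τ` from the boundary point `(a θ, b θ)`, counterclockwise along the
tangent; it is the image of `phi a b (θ, τ)` under the outer billiard map. -/
def psi (a b : ℝ → ℝ) (z : ℝ × ℝ) : ℝ × ℝ := (a z.1 - z.2 * sin z.1, b z.1 + z.2 * cos z.1)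

namespace NormalParam

variable {K : Set (ℝ × ℝ)} {a b ρ : ℝ → ℝ}

theorem hasDerivAt_H (hP : NormalParam K a b ρ) (s : ℝ × ℝ) (θ : ℝ) :
    HasDerivAt (supH a b s) (supG a b s θ) θ := by
  refine ((((hP.da θ).sub_const s.1).mul (hasDerivAt_cos θ)).add
    (((hP.db θ).sub_const s.2).mul (hasDerivAt_sin θ))).congr_deriv ?_
  simp only [supG]; ring

theorem hasDerivAt_G (hP : NormalParam K a b ρ) (s : ℝ × ℝ) (θ : ℝ) :
    HasDerivAt (supG a b s) (ρ θ - supH a b s θ) θ := by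
  refine ((((hP.da θ).sub_const s.1).neg.mul (hasDerivAt_sin θ)).add
    (((hP.db θ).sub_const s.2).mul (hasDerivAt_cos θ))).congr_deriv ?_
  simp only [supH, Pi.neg_apply]
  have := sin_sq_add_cos_sq θ
  linear_combination ρ θ * this

theorem ca (hP : NormalParam K a b ρ) : Continuous a :=
  continuous_iff_continuousAt.2 fun φ => (hP.da φ).continuousAt

theorem cb (hP : NormalParam K a b ρ) : Continuous b :=
  continuous_iff_continuousAt.2 fun φ => (hP.db φ).continuousAt

theorem cH (hP : NormalParam K a b ρ) (s : ℝ × ℝ) : Continuous (supH a b s) :=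
  continuous_iff_continuousAt.2 fun φ => (hP.hasDerivAt_H s φ).continuousAt

theorem cG (hP : NormalParam K a b ρ) (s : ℝ × ℝ) : Continuous (supG a b s) :=
  continuous_iff_continuousAt.2 fun φ => (hP.hasDerivAt_G s φ).continuousAt

theorem pH (hP : NormalParam K a b ρ) (s : ℝ × ℝ) (θ : ℝ) :
    supH a b s (θ + 2 * π) = supH a b s θ := by
  simp [supH, hP.pa, hP.pb]

theorem pG (hP : NormalParam K a b ρ) (s : ℝ × ℝ) (θ : ℝ) :
    supG a b s (θ + 2 * π) = supG a b s θ := by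
  simp [supG, hP.pa, hP.pb]

theorem phi_per (hP : NormalParam K a b ρ) (θ τ : ℝ) :
    phi a b (θ + 2 * π, τ) = phi a b (θ, τ) := by
  simp [phi, hP.pa, hP.pb]

theorem psi_per (hP : NormalParam K a b ρ) (θ τ : ℝ) :
    psi a b (θ + 2 * π, τ) = psi a b (θ, τ) := by
  simp [psi, hP.pa, hP.pb]

/-- A function that is `2π`-periodic takes the same value at `θ` and `θ + 2πn`. -/
theorem per_int {α : Type*} {f : ℝ → α} (hf : ∀ θ, f (θ + 2 * π) = f θ) (θ : ℝ) (n : ℤ) :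
    f (θ + n * (2 * π)) = f θ :=
  Function.Periodic.int_mul (show Function.Periodic f (2 * π) from hf) n θ

theorem mem_frontier (hP : NormalParam K a b ρ) (θ : ℝ) : (a θ, b θ) ∈ frontier K := by
  rw [hP.fr]; exact ⟨θ, rfl⟩

theorem mem (hP : NormalParam K a b ρ) (hcomp : IsCompact K) (θ : ℝ) : (a θ, b θ) ∈ K :=
  hcomp.isClosed.frontier_subset (hP.mem_frontier θ)

/-- Strict convexity: only the boundary point with normal angle `θ` maximizes the linear functional
of direction `θ` along the boundary. -/
theorem angle_eq (hP : NormalParam K a b ρ) (θ θ' : ℝ)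
    (h : a θ' * cos θ + b θ' * sin θ = a θ * cos θ + b θ * sin θ) :
    ∃ n : ℤ, θ' = θ + n * (2 * π) := by
  set d : ℝ → ℝ := fun x => a x * cos θ + b x * sin θ with hd
  have hdd : ∀ x, HasDerivAt d (ρ x * sin (θ - x)) x := by
    intro x
    refine (((hP.da x).mul_const _).add ((hP.db x).mul_const _)).congr_deriv ?_
    rw [sin_sub]; ring
  have hdc : Continuous d := continuous_iff_continuousAt.2 fun φ => (hdd φ).continuousAt
  have hpi := pi_pos
  set x := toIocMod two_pi_pos (θ - π) θ' with hx
  have hxm := toIocMod_mem_Ioc two_pi_pos (θ - π) θ'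
  rw [← hx] at hxm
  have hxe : θ' = x + (toIocDiv two_pi_pos (θ - π) θ' : ℤ) * (2 * π) := by
    have := toIocMod_add_toIocDiv_zsmul two_pi_pos (θ - π) θ'
    rw [zsmul_eq_mul] at this
    exact this.symm
  have hdx : d x = d θ := by
    have h1 : a θ' = a x := by rw [hxe]; exact per_int hP.pa _ _
    have h2 : b θ' = b x := by rw [hxe]; exact per_int hP.pb _ _
    rw [h1, h2] at h; exact h
  have key : x = θ := by
    rcases lt_trichotomy x θ with hlt | heq | hgt
    · exfalso
      have hm : StrictMonoOn d (Icc (θ - π) θ) := by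
        refine strictMonoOn_of_deriv_pos (convex_Icc _ _) hdc.continuousOn fun y hy => ?_
        rw [interior_Icc] at hy
        rw [(hdd y).deriv]
        exact mul_pos (hP.pos y) (sin_pos_of_pos_of_lt_pi (by linarith [hy.2]) (by linarith [hy.1]))
      have := hm ⟨hxm.1.le, hlt.le⟩ ⟨by linarith, le_rfl⟩ hlt
      linarith
    · exact heq
    · exfalso
      have hm : StrictAntiOn d (Icc θ (θ + π)) := by
        refine strictAntiOn_of_deriv_neg (convex_Icc _ _) hdc.continuousOn fun y hy => ?_
        rw [interior_Icc] at hy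
        rw [(hdd y).deriv]
        exact mul_neg_of_pos_of_neg (hP.pos y)
          (sin_neg_of_neg_of_neg_pi_lt (by linarith [hy.1]) (by linarith [hy.2]))
      have := hm ⟨le_rfl, by linarith⟩ ⟨hgt.le, by linarith [hxm.2]⟩ hgt
      linarith
  exact ⟨_, by rw [← key]; exact hxe⟩

/-- Strict convexity: `(a θ, b θ)` is the only point of `K` on its supporting line. -/
theorem strict (hP : NormalParam K a b ρ) (θ : ℝ) (k : ℝ × ℝ) (hk : k ∈ K)
    (h : k.1 * cos θ + k.2 * sin θ = a θ * cos θ + b θ * sin θ) : k = (a θ, b θ) := by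
  have hfr : k ∈ frontier K := by
    refine ⟨subset_closure hk, fun hi => ?_⟩
    have hn : ∀ᶠ ε : ℝ in nhds 0, ((k.1 + ε * cos θ, k.2 + ε * sin θ) : ℝ × ℝ) ∈ interior K := by
      have hc : Continuous (fun ε : ℝ => ((k.1 + ε * cos θ, k.2 + ε * sin θ) : ℝ × ℝ)) := by
        fun_prop
      apply hc.continuousAt.eventually_mem
      simpa using isOpen_interior.mem_nhds hi
    obtain ⟨ε, hε, hε0⟩ := ((hn.filter_mono nhdsWithin_le_nhds).and
      (self_mem_nhdsWithin : Ioi (0:ℝ) ∈ nhdsWithin 0 (Ioi 0))).exists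
    have := hP.supp θ _ (interior_subset hε)
    have hsc := sin_sq_add_cos_sq θ
    have hε0 : 0 < ε := hε0
    simp only at this
    nlinarith
  rw [hP.fr] at hfr
  obtain ⟨θ', rfl⟩ := hfr
  obtain ⟨n, rfl⟩ := hP.angle_eq θ θ' h
  simp only [per_int hP.pa, per_int hP.pb]

/-- The support function is positive because the base point is interior. -/
theorem H_pos (hP : NormalParam K a b ρ) {s : ℝ × ℝ} (hs : s ∈ interior K) (θ : ℝ) :
    0 < supH a b s θ := by
  have h1 := hP.supp θ s (interior_subset hs)
  rcases h1.lt_or_eq with h | h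
  · simp only [supH]; linarith
  · exfalso
    have := hP.strict θ s (interior_subset hs) h
    have h2 := hP.mem_frontier θ
    rw [← this] at h2
    exact h2.2 hs

/-- Strict form of the support inequality, for boundary points with different normals. -/
theorem lt_of_mem (hP : NormalParam K a b ρ) (hcomp : IsCompact K) (θ θ' : ℝ)
    (hne : ¬ ∃ n : ℤ, θ' = θ + n * (2 * π)) :
    a θ' * cos θ + b θ' * sin θ < a θ * cos θ + b θ * sin θ :=
  lt_of_le_of_ne (hP.supp θ _ (hP.mem hcomp θ')) fun h => hne (hP.angle_eq θ θ' h)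

theorem phi_notMem (hP : NormalParam K a b ρ) (z : ℝ × ℝ) (hz : 0 < z.2) : phi a b z ∉ K := by
  intro h
  have hsc := sin_sq_add_cos_sq z.1
  have := hP.strict z.1 _ h (by simp only [phi]; ring)
  simp only [phi, Prod.mk.injEq] at this
  have e1 : z.2 * sin z.1 = 0 := by linarith [this.1]
  have e2 : z.2 * cos z.1 = 0 := by linarith [this.2]
  have e3 : z.2 = 0 := by linear_combination sin z.1 * e1 + cos z.1 * e2 - z.2 * hsc
  exact absurd e3 (ne_of_gt hz)

theorem psi_notMem (hP : NormalParam K a b ρ) (z : ℝ × ℝ) (hz : 0 < z.2) : psi a b z ∉ K := by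
  intro h
  have hsc := sin_sq_add_cos_sq z.1
  have := hP.strict z.1 _ h (by simp only [psi]; ring)
  simp only [psi, Prod.mk.injEq] at this
  have e1 : z.2 * sin z.1 = 0 := by linarith [this.1]
  have e2 : z.2 * cos z.1 = 0 := by linarith [this.2]
  have e3 : z.2 = 0 := by linear_combination sin z.1 * e1 + cos z.1 * e2 - z.2 * hsc
  exact absurd e3 (ne_of_gt hz)

/-- The coordinates `(θ, τ)` of an exterior point are unique, up to full turns of `θ`. -/
theorem phi_inj (hP : NormalParam K a b ρ) (hcomp : IsCompact K) (z z' : ℝ × ℝ) (hz : 0 < z.2)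
    (hz' : 0 < z'.2) (h : phi a b z = phi a b z') :
    (∃ n : ℤ, z'.1 = z.1 + n * (2 * π)) ∧ z'.2 = z.2 := by
  have hA : ∃ n : ℤ, z'.1 = z.1 + n * (2 * π) := by
    by_contra hne
    have h1 := hP.lt_of_mem hcomp z.1 z'.1 hne
    have h2 := hP.lt_of_mem hcomp z'.1 z.1 (fun ⟨n, hn⟩ => hne ⟨-n, by push_cast; linarith⟩)
    simp only [phi, Prod.mk.injEq] at h
    obtain ⟨e1, e2⟩ := h
    have e3 : z'.2 * sin (z.1 - z'.1) < 0 := by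
      rw [sin_sub]
      have t : a z'.1 * cos z.1 + b z'.1 * sin z.1 - (a z.1 * cos z.1 + b z.1 * sin z.1) =
        z'.2 * (sin z.1 * cos z'.1 - cos z.1 * sin z'.1) := by
        linear_combination (-cos z.1) * e1 - sin z.1 * e2
      linarith
    have e4 : z.2 * sin (z.1 - z'.1) > 0 := by
      rw [sin_sub]
      have t : a z.1 * cos z'.1 + b z.1 * sin z'.1 - (a z'.1 * cos z'.1 + b z'.1 * sin z'.1) =
        -(z.2 * (sin z.1 * cos z'.1 - cos z.1 * sin z'.1)) := by
        linear_combination (cos z'.1) * e1 + sin z'.1 * e2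
      linarith
    have e5 := (pos_iff_pos_of_mul_pos e4).1 hz
    nlinarith
  obtain ⟨n, hn⟩ := hA
  refine ⟨⟨n, hn⟩, ?_⟩
  simp only [phi, Prod.mk.injEq, hn, per_int hP.pa, per_int hP.pb, sin_add_int_mul_two_pi,
    cos_add_int_mul_two_pi] at h
  obtain ⟨e1, e2⟩ := h
  have hsc := sin_sq_add_cos_sq z.1
  linear_combination (-sin z.1) * e1 + cos z.1 * e2 + (z.2 - z'.2) * hsc

theorem psi_inj (hP : NormalParam K a b ρ) (hcomp : IsCompact K) (z z' : ℝ × ℝ) (hz : 0 < z.2)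
    (hz' : 0 < z'.2) (h : psi a b z = psi a b z') :
    (∃ n : ℤ, z'.1 = z.1 + n * (2 * π)) ∧ z'.2 = z.2 := by
  have hA : ∃ n : ℤ, z'.1 = z.1 + n * (2 * π) := by
    by_contra hne
    have h1 := hP.lt_of_mem hcomp z.1 z'.1 hne
    have h2 := hP.lt_of_mem hcomp z'.1 z.1 (fun ⟨n, hn⟩ => hne ⟨-n, by push_cast; linarith⟩)
    simp only [psi, Prod.mk.injEq] at h
    obtain ⟨e1, e2⟩ := h
    have e3 : z'.2 * sin (z.1 - z'.1) > 0 := by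
      rw [sin_sub]
      have t : a z'.1 * cos z.1 + b z'.1 * sin z.1 - (a z.1 * cos z.1 + b z.1 * sin z.1) =
        -(z'.2 * (sin z.1 * cos z'.1 - cos z.1 * sin z'.1)) := by
        linear_combination (-cos z.1) * e1 - sin z.1 * e2
      linarith
    have e4 : z.2 * sin (z.1 - z'.1) < 0 := by
      rw [sin_sub]
      have t : a z.1 * cos z'.1 + b z.1 * sin z'.1 - (a z'.1 * cos z'.1 + b z'.1 * sin z'.1) =
        (z.2 * (sin z.1 * cos z'.1 - cos z.1 * sin z'.1)) := by
        linear_combination (cos z'.1) * e1 + sin z'.1 * e2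
      linarith
    have e5 := (pos_iff_pos_of_mul_pos e3).1 hz'
    nlinarith
  obtain ⟨n, hn⟩ := hA
  refine ⟨⟨n, hn⟩, ?_⟩
  simp only [psi, Prod.mk.injEq, hn, per_int hP.pa, per_int hP.pb, sin_add_int_mul_two_pi,
    cos_add_int_mul_two_pi] at h
  obtain ⟨e1, e2⟩ := h
  have hsc := sin_sq_add_cos_sq z.1
  linear_combination (sin z.1) * e1 - cos z.1 * e2 + (z.2 - z'.2) * hsc

/-- Every exterior point lies on the clockwise half of a tangent line, and the outer billiard map
reflects it in the point of tangency. -/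
theorem exists_phi (hP : NormalParam K a b ρ) (hcomp : IsCompact K)
    {T : ℝ × ℝ → ℝ × ℝ} (hT : IsOuterBilliard K T) (A : ℝ × ℝ) (hA : A ∉ K) :
    ∃ z : ℝ × ℝ, 0 < z.2 ∧ A = phi a b z ∧ T A = psi a b z := by
  obtain ⟨h1, h2, h3, h4⟩ := hT A hA
  set M : ℝ × ℝ := (1 / 2 : ℝ) • (A + T A) with hM
  have hMK : M ∈ K := hcomp.isClosed.frontier_subset h2
  have hm := h2
  rw [hP.fr] at hm
  obtain ⟨θ, hθ⟩ := hm
  set V := T A - A with hV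
  -- the linear functional `det (V, ·)` is minimal on the boundary at the tangency point
  have hmin : IsLocalMin (fun x => V.1 * (b x - M.2) - V.2 * (a x - M.1)) θ := by
    refine Filter.Eventually.of_forall fun x => ?_
    have := h4 _ (hP.mem hcomp x)
    simp only [detV] at this
    rw [← hθ]
    rw [← hθ] at this
    simp only [Prod.fst_sub, Prod.snd_sub] at this ⊢
    linarith
  have h0 := hmin.hasDerivAt_eq_zero ((((hP.db θ).sub_const M.2).const_mul V.1).sub
    (((hP.da θ).sub_const M.1).const_mul V.2))
  have hsc := sin_sq_add_cos_sq θ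
  have h0' : V.1 * cos θ + V.2 * sin θ = 0 := by
    have : ρ θ * (V.1 * cos θ + V.2 * sin θ) = 0 := by linarith
    exact (mul_eq_zero.1 this).resolve_left (hP.pos θ).ne'
  set c := -V.1 * sin θ + V.2 * cos θ with hc
  have hV1 : V.1 = -c * sin θ := by
    simp only [hc]; linear_combination (-V.1) * hsc + cos θ * h0'
  have hV2 : V.2 = c * cos θ := by
    simp only [hc]; linear_combination (-V.2) * hsc + sin θ * h0'
  have hM1 : a θ = (A.1 + (T A).1) / 2 := by
    have := congrArg Prod.fst hθ
    simp [hM] at this; linarith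
  have hM2 : b θ = (A.2 + (T A).2) / 2 := by
    have := congrArg Prod.snd hθ
    simp [hM] at this; linarith
  have hVd1 : V.1 = (T A).1 - A.1 := rfl
  have hVd2 : V.2 = (T A).2 - A.2 := rfl
  have hcne : c ≠ 0 := by
    intro h
    rw [h] at hV1 hV2
    apply hA
    have : A = M := by
      rw [← hθ]
      ext
      · simp only; linarith
      · simp only; linarith
    rw [this]; exact hMK
  have hcpos : 0 < c := by
    -- test the orientation with the boundary point opposite to the tangency point
    have h5 := h4 _ (hP.mem hcomp (θ + π))
    have h6 := hP.lt_of_mem hcomp θ (θ + π) (by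
      rintro ⟨n, hn⟩
      have hpi := pi_pos
      have h7 : (1 : ℝ) = n * 2 := by
        have : π * (n * 2 - 1) = 0 := by linarith
        rcases mul_eq_zero.1 this with h | h <;> linarith
      have h8 : (1 : ℤ) = n * 2 := by exact_mod_cast h7
      omega)
    simp only [detV] at h5
    rw [hV1, hV2, ← hθ] at h5
    simp only [Prod.fst_sub, Prod.snd_sub] at h5
    have h7 : 0 ≤ c * ((a θ * cos θ + b θ * sin θ) -
      (a (θ + π) * cos θ + b (θ + π) * sin θ)) := by linarith
    have h8 : 0 ≤ c := nonneg_of_mul_nonneg_left h7 (by linarith)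
    exact lt_of_le_of_ne h8 hcne.symm
  refine ⟨(θ, c / 2), by simpa using hcpos, ?_, ?_⟩
  · ext <;> simp only [phi] <;> linarith
  · ext <;> simp only [psi] <;> linarith

/-- In the coordinates given by `phi`, the outer billiard map is `psi`. -/
theorem T_phi (hP : NormalParam K a b ρ) (hcomp : IsCompact K)
    {T : ℝ × ℝ → ℝ × ℝ} (hT : IsOuterBilliard K T) (z : ℝ × ℝ) (hz : 0 < z.2) :
    T (phi a b z) = psi a b z := by
  obtain ⟨z', hz', h1, h2⟩ := hP.exists_phi hcomp hT _ (hP.phi_notMem z hz)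
  obtain ⟨⟨n, hn⟩, h4⟩ := hP.phi_inj hcomp z z' hz hz' h1
  rw [h2]
  simp only [psi, hn, per_int hP.pa, per_int hP.pb, sin_add_int_mul_two_pi,
    cos_add_int_mul_two_pi, h4]

/-- Every exterior point lies on the counterclockwise half of a tangent line. -/
theorem exists_psi (hP : NormalParam K a b ρ) (hcomp : IsCompact K)
    (hint : (interior K).Nonempty) (B : ℝ × ℝ) (hB : B ∉ K) :
    ∃ z : ℝ × ℝ, 0 < z.2 ∧ B = psi a b z := by
  obtain ⟨s, hs⟩ := hint
  set g : ℝ → ℝ := fun θ => -supH a b B θ with hg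
  have hgd : ∀ θ, HasDerivAt g (-supG a b B θ) θ := fun θ => (hP.hasDerivAt_H B θ).neg
  have hgc : Continuous g := (hP.cH B).neg
  -- the supporting line at some normal angle separates `B` from `K`
  have hpos : ∃ θ, 0 < g θ := by
    by_contra hcon
    push Not at hcon
    -- the segment from `s` to `B` leaves `K` through a boundary point
    obtain ⟨m, hm, hmK⟩ : ∃ m ∈ segment ℝ s B, m ∈ frontier K := by
      have hpre : IsPreconnected (segment ℝ s B) := (convex_segment s B).isPreconnected
      by_contra hno
      push Not at hno
      obtain ⟨m, -, h1, h2⟩ := hpre (interior K) Kᶜ isOpen_interior hcomp.isClosed.isOpen_compl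
        (fun m hm => by
          by_cases hmK : m ∈ K
          · left
            by_contra hmi
            exact hno m hm ⟨subset_closure hmK, hmi⟩
          · exact Or.inr hmK)
        ⟨s, left_mem_segment ℝ s B, hs⟩ ⟨B, right_mem_segment ℝ s B, hB⟩
      exact h2 (interior_subset h1)
    rw [hP.fr] at hmK
    obtain ⟨θ, rfl⟩ := hmK
    obtain ⟨u, v, hu, hv, huv, he⟩ := hm
    have e1 := congrArg Prod.fst he
    have e2 := congrArg Prod.snd he
    simp at e1 e2
    have h1 := hP.H_pos hs θ
    have h2 := hcon θ
    simp only [hg, supH] at h1 h2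
    rcases hu.eq_or_lt with h0 | h0
    · rw [← h0] at e1 e2 huv
      have hv1 : v = 1 := by linarith
      apply hB
      rw [hv1] at e1 e2
      have : B = (a θ, b θ) := by ext <;> simp only <;> linarith
      rw [this]; exact hP.mem hcomp θ
    · have h3 : u * ((a θ - s.1) * cos θ + (b θ - s.2) * sin θ) +
        v * ((a θ - B.1) * cos θ + (b θ - B.2) * sin θ) = 0 := by
        linear_combination (a θ * cos θ + b θ * sin θ) * huv - cos θ * e1 - sin θ * e2
      nlinarith [mul_pos h0 h1]
  obtain ⟨θ₁, hθ₁⟩ := hpos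
  -- some earlier supporting line does not separate
  have hneg : ∃ θ₀, θ₀ ≤ θ₁ ∧ g θ₀ ≤ 0 := by
    obtain ⟨θ₂, h2⟩ : ∃ θ, g θ ≤ 0 := by
      by_contra hcon
      push Not at hcon
      -- otherwise `B - s` would have positive inner product with opposite directions
      have h1 := hcon 0
      have h2 := hcon π
      have e1 := hP.H_pos hs 0
      have e2 := hP.H_pos hs π
      simp only [hg, supH, sin_zero, cos_zero, sin_pi, cos_pi] at h1 h2 e1 e2
      linarith
    obtain ⟨n, hn⟩ := exists_nat_gt ((θ₂ - θ₁) / (2 * π))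
    refine ⟨θ₂ + ((-n : ℤ) : ℝ) * (2 * π), ?_, ?_⟩
    · rw [div_lt_iff₀ two_pi_pos] at hn
      push_cast; linarith
    · simp only [hg]
      rw [per_int (hP.pH B)]; exact h2
  obtain ⟨θ₀, h01, hθ₀⟩ := hneg
  set S := {θ | θ ≤ θ₁ ∧ g θ ≤ 0} with hS
  have hSc : IsClosed S := isClosed_Iic.inter (isClosed_le hgc continuous_const)
  have hSn : S.Nonempty := ⟨θ₀, h01, hθ₀⟩
  have hSb : BddAbove S := ⟨θ₁, fun x hx => hx.1⟩
  set t := sSup S with ht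
  have htS : t ∈ S := hSc.csSup_mem hSn hSb
  have htlt : t < θ₁ := lt_of_le_of_ne htS.1 fun h => by
    have := htS.2; rw [h] at this; linarith
  have hgpos : ∀ x ∈ Ioc t θ₁, 0 < g x := by
    intro x hx
    by_contra hcon
    exact absurd (le_csSup hSb (⟨hx.2, not_lt.1 hcon⟩ : x ∈ S)) (not_le.2 hx.1)
  have hright : ∀ᶠ x in nhdsWithin t (Ioi t), 0 < g x :=
    Filter.eventually_of_mem (Ioc_mem_nhdsGT htlt) hgpos
  have hg0 : g t = 0 := by
    refine le_antisymm htS.2 ?_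
    exact ge_of_tendsto (hgc.continuousAt.tendsto.mono_left nhdsWithin_le_nhds)
      (hright.mono fun x hx => hx.le)
  have hder : 0 ≤ -supG a b B t := by
    have h1 := (hgd t).hasDerivWithinAt (s := Ioi t)
    rw [hasDerivWithinAt_iff_tendsto_slope' (by simp)] at h1
    refine ge_of_tendsto h1 ?_
    filter_upwards [hright, self_mem_nhdsWithin] with x hx hx'
    rw [slope_def_field, hg0]
    have : t < x := hx'
    exact div_nonneg (by linarith) (by linarith)
  have hsc := sin_sq_add_cos_sq t
  have hB1 : B.1 = a t - (-supG a b B t) * sin t := by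
    simp only [supG]; simp only [hg, supH] at hg0
    linear_combination (a t - B.1) * hsc + cos t * hg0
  have hB2 : B.2 = b t + (-supG a b B t) * cos t := by
    simp only [supG]; simp only [hg, supH] at hg0
    linear_combination (b t - B.2) * hsc + sin t * hg0
  refine ⟨(t, -supG a b B t), lt_of_le_of_ne hder fun h => ?_, ?_⟩
  · apply hB
    simp only at h
    rw [← h] at hB1 hB2
    have : B = (a t, b t) := by ext <;> simp only <;> linarith
    rw [this]; exact hP.mem hcomp t
  · ext
    · exact hB1
    · exact hB2

end NormalParam

/-! ### Differentiability of the outer billiard map -/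

/-- The linear map of the plane with matrix `(p q; r s)`. -/
def mat2 (p q r s : ℝ) : (ℝ × ℝ) →L[ℝ] (ℝ × ℝ) :=
  LinearMap.toContinuousLinearMap
    (Matrix.toLin (Module.Basis.finTwoProd ℝ) (Module.Basis.finTwoProd ℝ) !![p, q; r, s])

theorem mat2_apply (p q r s : ℝ) (v : ℝ × ℝ) :
    mat2 p q r s v = (p * v.1 + q * v.2, r * v.1 + s * v.2) := by
  simp [mat2, Matrix.toLin_finTwoProd_apply]

theorem mat2_det (p q r s : ℝ) : (mat2 p q r s).det = p * s - q * r := by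
  conv_lhs => rw [mat2, LinearMap.det_toContinuousLinearMap, LinearMap.det_toLin]
  simp [Matrix.det_fin_two_of]

/-- The differential of `phi`. -/
def phiD (ρ : ℝ → ℝ) (z : ℝ × ℝ) : (ℝ × ℝ) →L[ℝ] (ℝ × ℝ) :=
  mat2 (-(ρ z.1 * sin z.1) + z.2 * cos z.1) (sin z.1) (ρ z.1 * cos z.1 + z.2 * sin z.1) (-cos z.1)

/-- The differential of `psi`. -/
def psiD (ρ : ℝ → ℝ) (z : ℝ × ℝ) : (ℝ × ℝ) →L[ℝ] (ℝ × ℝ) :=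
  mat2 (-(ρ z.1 * sin z.1) - z.2 * cos z.1) (-sin z.1) (ρ z.1 * cos z.1 - z.2 * sin z.1) (cos z.1)

/-- The differential of the outer billiard map at `phi a b z`: the tangent direction is reversed,
and the normal direction is reversed and sheared along the tangent. -/
def TD (ρ : ℝ → ℝ) (z : ℝ × ℝ) : (ℝ × ℝ) →L[ℝ] (ℝ × ℝ) :=
  mat2 (-1 - 2 * ρ z.1 / z.2 * (cos z.1 * sin z.1)) (-(2 * ρ z.1 / z.2) * sin z.1 ^ 2)
    (2 * ρ z.1 / z.2 * cos z.1 ^ 2) (-1 + 2 * ρ z.1 / z.2 * (cos z.1 * sin z.1))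

theorem phiD_det (ρ : ℝ → ℝ) (z : ℝ × ℝ) : (phiD ρ z).det = -z.2 := by
  rw [phiD, mat2_det]; linear_combination (-z.2) * sin_sq_add_cos_sq z.1

theorem psiD_det (ρ : ℝ → ℝ) (z : ℝ × ℝ) : (psiD ρ z).det = -z.2 := by
  rw [psiD, mat2_det]; linear_combination (-z.2) * sin_sq_add_cos_sq z.1

theorem TD_comp_phiD (ρ : ℝ → ℝ) (z : ℝ × ℝ) (hz : 0 < z.2) :
    (TD ρ z).comp (phiD ρ z) = psiD ρ z := by
  ext
  all_goals
    simp [TD, phiD, psiD, mat2_apply]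
    field_simp
  · linear_combination (-2 * ρ z.1 * z.2 * sin z.1) * sin_sq_add_cos_sq z.1
  · linear_combination (2 * ρ z.1 * z.2 * cos z.1) * sin_sq_add_cos_sq z.1
  · ring
  · ring

namespace NormalParam

variable {K : Set (ℝ × ℝ)} {a b ρ : ℝ → ℝ}

theorem contDiff_a (hP : NormalParam K a b ρ) : ContDiff ℝ 1 a := by
  rw [contDiff_one_iff_deriv]
  refine ⟨fun θ => (hP.da θ).differentiableAt, ?_⟩
  rw [show deriv a = _ from funext fun θ => (hP.da θ).deriv]
  have := hP.cρ
  fun_prop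

theorem contDiff_b (hP : NormalParam K a b ρ) : ContDiff ℝ 1 b := by
  rw [contDiff_one_iff_deriv]
  refine ⟨fun θ => (hP.db θ).differentiableAt, ?_⟩
  rw [show deriv b = _ from funext fun θ => (hP.db θ).deriv]
  have := hP.cρ
  fun_prop

theorem contDiff_phi (hP : NormalParam K a b ρ) : ContDiff ℝ 1 (phi a b) := by
  have := hP.contDiff_a
  have := hP.contDiff_b
  have h1 : ContDiff ℝ 1 sin := contDiff_sin
  have h2 : ContDiff ℝ 1 cos := contDiff_cos
  unfold phi
  fun_prop

theorem contDiff_psi (hP : NormalParam K a b ρ) : ContDiff ℝ 1 (psi a b) := by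
  have := hP.contDiff_a
  have := hP.contDiff_b
  have h1 : ContDiff ℝ 1 sin := contDiff_sin
  have h2 : ContDiff ℝ 1 cos := contDiff_cos
  unfold psi
  fun_prop

theorem hasFDerivAt_phi (hP : NormalParam K a b ρ) (z : ℝ × ℝ) :
    HasFDerivAt (phi a b) (phiD ρ z) z := by
  have f1 : HasFDerivAt (fun z : ℝ × ℝ => z.1) (ContinuousLinearMap.fst ℝ ℝ ℝ) z := hasFDerivAt_fst
  have f2 : HasFDerivAt (fun z : ℝ × ℝ => z.2) (ContinuousLinearMap.snd ℝ ℝ ℝ) z := hasFDerivAt_snd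
  refine ((((hP.da z.1).comp_hasFDerivAt z f1).add (f2.mul
    ((hasDerivAt_sin z.1).comp_hasFDerivAt z f1))).prodMk (((hP.db z.1).comp_hasFDerivAt z f1).sub
    (f2.mul ((hasDerivAt_cos z.1).comp_hasFDerivAt z f1)))).congr_fderiv ?_
  ext <;> simp [phiD, mat2_apply]

theorem hasFDerivAt_psi (hP : NormalParam K a b ρ) (z : ℝ × ℝ) :
    HasFDerivAt (psi a b) (psiD ρ z) z := by
  have f1 : HasFDerivAt (fun z : ℝ × ℝ => z.1) (ContinuousLinearMap.fst ℝ ℝ ℝ) z := hasFDerivAt_fst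
  have f2 : HasFDerivAt (fun z : ℝ × ℝ => z.2) (ContinuousLinearMap.snd ℝ ℝ ℝ) z := hasFDerivAt_snd
  refine ((((hP.da z.1).comp_hasFDerivAt z f1).sub (f2.mul
    ((hasDerivAt_sin z.1).comp_hasFDerivAt z f1))).prodMk (((hP.db z.1).comp_hasFDerivAt z f1).add
    (f2.mul ((hasDerivAt_cos z.1).comp_hasFDerivAt z f1)))).congr_fderiv ?_
  ext <;> simp [psiD, mat2_apply] <;> ring

/-- `phi` has a local `C¹` inverse at each point of the open half-plane `τ > 0`. -/
theorem exists_localInverse (hP : NormalParam K a b ρ) (z : ℝ × ℝ) (hz : 0 < z.2) :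
    ∃ g : ℝ × ℝ → ℝ × ℝ, ContDiffAt ℝ 1 g (phi a b z) ∧ g (phi a b z) = z ∧
      ∀ᶠ y in nhds (phi a b z), 0 < (g y).2 ∧ phi a b (g y) = y := by
  have hdet : (phiD ρ z).det ≠ 0 := by rw [phiD_det]; linarith
  have hd : HasFDerivAt (phi a b) (((phiD ρ z).toContinuousLinearEquivOfDetNeZero hdet :
      (ℝ × ℝ) ≃L[ℝ] (ℝ × ℝ)) : (ℝ × ℝ) →L[ℝ] (ℝ × ℝ)) z := by
    rw [ContinuousLinearMap.coe_toContinuousLinearEquivOfDetNeZero]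
    exact hP.hasFDerivAt_phi z
  have hcd := hP.contDiff_phi.contDiffAt (x := z)
  refine ⟨hcd.localInverse hd one_ne_zero, hcd.to_localInverse hd one_ne_zero,
    hcd.localInverse_apply_image hd one_ne_zero, ?_⟩
  have h1 := (hcd.hasStrictFDerivAt' hd one_ne_zero).eventually_right_inverse
  have hc : ContinuousAt (hcd.localInverse hd one_ne_zero) (phi a b z) :=
    (hcd.to_localInverse hd one_ne_zero).continuousAt
  have h2 : ∀ᶠ y in nhds (phi a b z), 0 < (hcd.localInverse hd one_ne_zero y).2 := by
    have : ContinuousAt (fun y => (hcd.localInverse hd one_ne_zero y).2) (phi a b z) := hc.snd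
    refine this.eventually_mem (Ioi_mem_nhds ?_)
    rw [hcd.localInverse_apply_image hd one_ne_zero]; exact hz
  filter_upwards [h1, h2] with y hy1 hy2
  exact ⟨hy2, hy1⟩

variable {T : ℝ × ℝ → ℝ × ℝ}

/-- The outer billiard map is locally `psi` composed with a `C¹` inverse of `phi`. -/
theorem contDiffOn_T (hP : NormalParam K a b ρ) (hcomp : IsCompact K) (hT : IsOuterBilliard K T) :
    ContDiffOn ℝ 1 T Kᶜ := by
  intro x hx
  obtain ⟨z, hz, rfl, -⟩ := hP.exists_phi hcomp hT x hx
  obtain ⟨g, hg, hgz, he⟩ := hP.exists_localInverse z hz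
  have h1 : ContDiffAt ℝ 1 (fun y => psi a b (g y)) (phi a b z) :=
    (hP.contDiff_psi.contDiffAt).comp _ hg
  refine (h1.congr_of_eventuallyEq ?_).contDiffWithinAt
  filter_upwards [he] with y hy
  conv_lhs => rw [← hy.2]
  exact hP.T_phi hcomp hT _ hy.1

theorem hasFDerivAt_T (hP : NormalParam K a b ρ) (hcomp : IsCompact K) (hT : IsOuterBilliard K T)
    (z : ℝ × ℝ) (hz : 0 < z.2) : HasFDerivAt T (TD ρ z) (phi a b z) := by
  have hd : DifferentiableAt ℝ T (phi a b z) :=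
    ((hP.contDiffOn_T hcomp hT).contDiffAt (hcomp.isClosed.isOpen_compl.mem_nhds
      (hP.phi_notMem z hz))).differentiableAt one_ne_zero
  have h1 := hd.hasFDerivAt.comp z (hP.hasFDerivAt_phi z)
  have h2 : HasFDerivAt (T ∘ phi a b) (psiD ρ z) z := by
    refine (hP.hasFDerivAt_psi z).congr_of_eventuallyEq ?_
    have : ∀ᶠ w : ℝ × ℝ in nhds z, 0 < w.2 := continuous_snd.continuousAt.eventually_mem
      (Ioi_mem_nhds hz)
    filter_upwards [this] with w hw
    exact hP.T_phi hcomp hT w hw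
  have h3 := h1.unique h2
  rw [← TD_comp_phiD ρ z hz] at h3
  have hdet : (phiD ρ z).det ≠ 0 := by rw [phiD_det]; linarith
  have h4 : fderiv ℝ T (phi a b z) = TD ρ z := by
    refine ContinuousLinearMap.ext fun v => ?_
    have h5 := congrArg (fun A : (ℝ × ℝ) →L[ℝ] (ℝ × ℝ) =>
      A (((phiD ρ z).toContinuousLinearEquivOfDetNeZero hdet).symm v)) h3
    have h6 : phiD ρ z (((phiD ρ z).toContinuousLinearEquivOfDetNeZero hdet).symm v) = v :=
      ((phiD ρ z).toContinuousLinearEquivOfDetNeZero hdet).apply_symm_apply v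
    simpa [h6] using h5
  rw [← h4]; exact hd.hasFDerivAt

/-- A function on the exterior of `K` is continuous if it is so in the coordinates `(θ, τ)`. -/
theorem continuousOn_of_phi (hP : NormalParam K a b ρ) (hcomp : IsCompact K)
    (hT : IsOuterBilliard K T) {G : ℝ × ℝ → ℝ}
    (hG : ContinuousOn (fun z => G (phi a b z)) {z | 0 < z.2}) : ContinuousOn G Kᶜ := by
  intro x hx
  obtain ⟨z, hz, rfl, -⟩ := hP.exists_phi hcomp hT x hx
  obtain ⟨g, hg, hgz, he⟩ := hP.exists_localInverse z hz
  have ho : IsOpen {z : ℝ × ℝ | 0 < z.2} := isOpen_lt continuous_const continuous_snd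
  have h1 : ContinuousAt (fun y => G (phi a b (g y))) (phi a b z) := by
    have h2 : ContinuousAt (fun z => G (phi a b z)) (g (phi a b z)) := by
      rw [hgz]; exact hG.continuousAt (ho.mem_nhds hz)
    exact h2.comp hg.continuousAt
  refine (h1.congr ?_).continuousWithinAt
  filter_upwards [he] with y hy
  rw [hy.2]

theorem image_phi (hP : NormalParam K a b ρ) (hcomp : IsCompact K) (hT : IsOuterBilliard K T) :
    phi a b '' {z | 0 < z.2} = Kᶜ := by
  ext x
  constructor
  · rintro ⟨z, hz, rfl⟩; exact hP.phi_notMem z hz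
  · intro hx
    obtain ⟨z, hz, rfl, -⟩ := hP.exists_phi hcomp hT x hx
    exact ⟨z, hz, rfl⟩

theorem T_iter_notMem (hT : IsOuterBilliard K T) (n : ℕ) :
    ∀ x, x ∉ K → T^[n] x ∉ K := by
  induction n with
  | zero => intro x hx; exact hx
  | succ n ih => intro x hx; rw [Function.iterate_succ_apply]; exact ih _ (hT x hx).1

theorem differentiableAt_iter (hP : NormalParam K a b ρ) (hcomp : IsCompact K)
    (hT : IsOuterBilliard K T) (n : ℕ) : ∀ x, x ∉ K → DifferentiableAt ℝ (T^[n]) x := by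
  induction n with
  | zero => intro x _; exact differentiableAt_id
  | succ n ih =>
    intro x hx
    obtain ⟨z, hz, rfl, -⟩ := hP.exists_phi hcomp hT x hx
    rw [Function.iterate_succ]
    exact (ih _ (hT _ hx).1).comp _ (hP.hasFDerivAt_T hcomp hT z hz).differentiableAt

theorem fderiv_iter_succ (hP : NormalParam K a b ρ) (hcomp : IsCompact K)
    (hT : IsOuterBilliard K T) (n : ℕ) (z : ℝ × ℝ) (hz : 0 < z.2) (v : ℝ × ℝ) :
    fderiv ℝ (T^[n + 1]) (phi a b z) v = fderiv ℝ (T^[n]) (psi a b z) (TD ρ z v) := by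
  have h1 := hP.hasFDerivAt_T hcomp hT z hz
  have hx := hP.phi_notMem z hz
  have h2 := (hP.differentiableAt_iter hcomp hT n _ (hT _ hx).1).hasFDerivAt
  have h3 := h2.comp (phi a b z) h1
  rw [Function.iterate_succ, h3.fderiv, ← hP.T_phi hcomp hT z hz]
  rfl

end NormalParam

/-! ### The Riccati recursion along orbits -/

/-- Rotation by a right angle, divided by the squared length. The vector `rotInv v` spans a unit area
with `v`, so `v` and `rotInv v` form a symplectic basis of the plane for `v ≠ 0`. -/
def rotInv (v : ℝ × ℝ) : ℝ × ℝ := (1 / (v.1 ^ 2 + v.2 ^ 2)) • (-v.2, v.1)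

/-- The vector with components `α`, `β` along the normal `(cos θ, sin θ)` and the tangent
`(-sin θ, cos θ)`. -/
def frm (θ α β : ℝ) : ℝ × ℝ := (α * cos θ - β * sin θ, α * sin θ + β * cos θ)

/-- The coefficient `k` of the Riccati recursion, in terms of the support function `h`, the
radius of curvature `r` and the half-length `t`. -/
def rk (h r t : ℝ) : ℝ := t / (2 * (h * r + t ^ 2) * h)

/-- The coefficient `Y₀` of the Riccati recursion; `g` is the derivative of the support function. -/
def rY (h g r t : ℝ) : ℝ :=
  (2 * r * h * (t - g) + t * (t ^ 2 - g ^ 2 - h ^ 2)) /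
    (2 * (h * r + t ^ 2) * h * (h ^ 2 + (g - t) ^ 2))

/-- The Riccati coefficient `k` at the point `phi a b z`. -/
def zk (a b ρ : ℝ → ℝ) (s z : ℝ × ℝ) : ℝ := rk (supH a b s z.1) (ρ z.1) z.2

/-- The Riccati coefficient `Y₀` at the point `phi a b z`. -/
def zY0 (a b ρ : ℝ → ℝ) (s z : ℝ × ℝ) : ℝ := rY (supH a b s z.1) (supG a b s z.1) (ρ z.1) z.2

/-- The Riccati coefficient `Y₁` at the point `phi a b z`. -/
def zY1 (a b ρ : ℝ → ℝ) (s z : ℝ × ℝ) : ℝ := rY (supH a b s z.1) (-supG a b s z.1) (ρ z.1) z.2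

theorem smul_frm (c θ α β : ℝ) : c • frm θ α β = frm θ (c * α) (c * β) := by
  ext <;> simp [frm] <;> ring

theorem add_frm (θ α β α' β' : ℝ) : frm θ α β + frm θ α' β' = frm θ (α + α') (β + β') := by
  ext <;> simp [frm] <;> ring

theorem rotInv_frm (θ α β : ℝ) :
    rotInv (frm θ α β) = frm θ (-β / (α ^ 2 + β ^ 2)) (α / (α ^ 2 + β ^ 2)) := by
  have h : (frm θ α β).1 ^ 2 + (frm θ α β).2 ^ 2 = α ^ 2 + β ^ 2 := by
    simp only [frm]; linear_combination (α ^ 2 + β ^ 2) * sin_sq_add_cos_sq θ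
  rw [rotInv, h]
  ext <;> simp [frm] <;> ring

theorem TD_frm (ρ : ℝ → ℝ) (z : ℝ × ℝ) (α β : ℝ) :
    TD ρ z (frm z.1 α β) = frm z.1 (-α) (-β + 2 * ρ z.1 / z.2 * α) := by
  rw [TD, mat2_apply]
  have := sin_sq_add_cos_sq z.1
  ext
  · simp only [frm]
    linear_combination (-(2 * ρ z.1 / z.2 * α * sin z.1)) * this
  · simp only [frm]
    linear_combination ((2 * ρ z.1 / z.2 * α * cos z.1)) * this

theorem phi_sub (a b : ℝ → ℝ) (s z : ℝ × ℝ) :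
    phi a b z - s = frm z.1 (supH a b s z.1) (supG a b s z.1 - z.2) := by
  have := sin_sq_add_cos_sq z.1
  ext
  · simp only [phi, frm, supH, supG, Prod.fst_sub]
    linear_combination (-(a z.1 - s.1)) * this
  · simp only [phi, frm, supH, supG, Prod.snd_sub]
    linear_combination (-(b z.1 - s.2)) * this

theorem psi_sub (a b : ℝ → ℝ) (s z : ℝ × ℝ) :
    psi a b z - s = frm z.1 (supH a b s z.1) (supG a b s z.1 + z.2) := by
  have := sin_sq_add_cos_sq z.1
  ext
  · simp only [psi, frm, supH, supG, Prod.fst_sub]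
    linear_combination (-(a z.1 - s.1)) * this
  · simp only [psi, frm, supH, supG, Prod.snd_sub]
    linear_combination (-(b z.1 - s.2)) * this

theorem rk_pos {h r t : ℝ} (hh : 0 < h) (hr : 0 < r) (ht : 0 < t) : 0 < rk h r t := by
  unfold rk; positivity

section riccati
variable {a b ρ : ℝ → ℝ} {s z : ℝ × ℝ}

/-- The image of a radial vector under the differential, in the symplectic basis at the image
point. -/
theorem TD_radial (hh : 0 < supH a b s z.1) (hr : 0 < ρ z.1) (ht : 0 < z.2) :
    TD ρ z (zk a b ρ s z • (phi a b z - s)) =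
      zY1 a b ρ s z • (psi a b z - s) + rotInv (psi a b z - s) := by
  rw [phi_sub, psi_sub, smul_frm, TD_frm, rotInv_frm, smul_frm, add_frm]
  unfold zk zY1 rk rY
  set h := supH a b s z.1
  set g := supG a b s z.1
  set t := z.2
  set r := ρ z.1
  have h1 : 0 < h * r + t ^ 2 := by positivity
  have h2 : 0 < h ^ 2 + (g + t) ^ 2 := by positivity
  have h3 : h ^ 2 + (-g - t) ^ 2 = h ^ 2 + (g + t) ^ 2 := by ring
  rw [h3]
  congr 1
  · field_simp; ring
  · field_simp; ring

/-- The vector whose image under the differential is radial. -/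
theorem TD_to_radial (hh : 0 < supH a b s z.1) (hr : 0 < ρ z.1) (ht : 0 < z.2) :
    TD ρ z (-zY0 a b ρ s z • (phi a b z - s) + rotInv (phi a b z - s)) =
      -zk a b ρ s z • (psi a b z - s) := by
  rw [phi_sub, psi_sub, smul_frm, rotInv_frm, add_frm, TD_frm, smul_frm]
  unfold zk zY0 rk rY
  set h := supH a b s z.1
  set g := supG a b s z.1
  set t := z.2
  set r := ρ z.1
  have h1 : 0 < h * r + t ^ 2 := by positivity
  have h2 : 0 < h ^ 2 + (g - t) ^ 2 := by positivity
  congr 1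
  · field_simp; ring
  · field_simp; ring

end riccati

open Classical in
/-- Coordinates `(θ, τ)` of an exterior point; `θ` is one choice among its translates by full turns,
and points of `K` get the value `0`. -/
def crd (a b : ℝ → ℝ) (x : ℝ × ℝ) : ℝ × ℝ :=
  if h : ∃ z : ℝ × ℝ, 0 < z.2 ∧ phi a b z = x then h.choose else 0

/-- The Riccati recursion: if there are no conjugate points up to time `N + 1`, then
`ricW N x • (x - s) + rotInv (x - s)` is mapped to a radial vector by the differential of
`T^[N + 1]`. If some denominator vanishes, the value is meaningless. -/
def ricW (a b ρ : ℝ → ℝ) (s : ℝ × ℝ) (T : ℝ × ℝ → ℝ × ℝ) : ℕ → ℝ × ℝ → ℝ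
  | 0, x => -zY0 a b ρ s (crd a b x)
  | N + 1, x => -zY0 a b ρ s (crd a b x) +
      zk a b ρ s (crd a b x) ^ 2 / (zY1 a b ρ s (crd a b x) - ricW a b ρ s T N (T x))

namespace NormalParam

variable {K : Set (ℝ × ℝ)} {a b ρ : ℝ → ℝ} {T : ℝ × ℝ → ℝ × ℝ} {s : ℝ × ℝ}

theorem crd_phi (hP : NormalParam K a b ρ) (hcomp : IsCompact K) (z : ℝ × ℝ) (hz : 0 < z.2) :
    ∃ n : ℤ, crd a b (phi a b z) = (z.1 + n * (2 * π), z.2) := by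
  have h : ∃ w : ℝ × ℝ, 0 < w.2 ∧ phi a b w = phi a b z := ⟨z, hz, rfl⟩
  obtain ⟨h1, h2⟩ := h.choose_spec
  rw [crd, dif_pos h]
  obtain ⟨⟨n, hn⟩, h3⟩ := hP.phi_inj hcomp z _ hz h1 h2.symm
  exact ⟨n, Prod.ext hn h3⟩

/-- The Riccati coefficients do not depend on the choice of `θ` made in `crd`. -/
theorem crd_coeff (hP : NormalParam K a b ρ) (hcomp : IsCompact K) (s : ℝ × ℝ) (z : ℝ × ℝ)
    (hz : 0 < z.2) :
    zk a b ρ s (crd a b (phi a b z)) = zk a b ρ s z ∧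
    zY0 a b ρ s (crd a b (phi a b z)) = zY0 a b ρ s z ∧
    zY1 a b ρ s (crd a b (phi a b z)) = zY1 a b ρ s z := by
  obtain ⟨n, hn⟩ := hP.crd_phi hcomp z hz
  rw [hn]
  simp only [zk, zY0, zY1, per_int (hP.pH s), per_int (hP.pG s), per_int hP.pρ, and_self]

theorem ricW_zero (hP : NormalParam K a b ρ) (hcomp : IsCompact K) (z : ℝ × ℝ) (hz : 0 < z.2) :
    ricW a b ρ s T 0 (phi a b z) = -zY0 a b ρ s z := by
  rw [ricW, (hP.crd_coeff hcomp s z hz).2.1]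

theorem ricW_succ (hP : NormalParam K a b ρ) (hcomp : IsCompact K) (hT : IsOuterBilliard K T)
    (N : ℕ) (z : ℝ × ℝ) (hz : 0 < z.2) :
    ricW a b ρ s T (N + 1) (phi a b z) = -zY0 a b ρ s z +
      zk a b ρ s z ^ 2 / (zY1 a b ρ s z - ricW a b ρ s T N (psi a b z)) := by
  obtain ⟨h1, h2, h3⟩ := hP.crd_coeff hcomp s z hz
  rw [ricW, h1, h2, h3, hP.T_phi hcomp hT z hz]

/-- In the absence of conjugate points the Riccati recursion never breaks down: a vanishing denominator
would make the differential of an iterate map a radial vector to a radial vector. -/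
theorem ric_ne (hP : NormalParam K a b ρ) (hcomp : IsCompact K) (hT : IsOuterBilliard K T)
    (hs : s ∈ interior K)
    (hN : ∀ x, x ∉ K → ∀ n : ℕ, 1 ≤ n → ∀ c : ℝ, c ≠ 0 →
      fderiv ℝ (T^[n]) x (x - s) ≠ c • (T^[n] x - s)) (N : ℕ) :
    (∀ x, x ∉ K → ∃ c : ℝ, c ≠ 0 ∧
      fderiv ℝ (T^[N + 1]) x (ricW a b ρ s T N x • (x - s) + rotInv (x - s)) =
        c • (T^[N + 1] x - s)) ∧
    ∀ z : ℝ × ℝ, 0 < z.2 → zY1 a b ρ s z - ricW a b ρ s T N (psi a b z) ≠ 0 := by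
  -- the second claim follows from the first by composing with one more application of `T`
  have hstep : ∀ N, (∀ x, x ∉ K → ∃ c : ℝ, c ≠ 0 ∧
      fderiv ℝ (T^[N + 1]) x (ricW a b ρ s T N x • (x - s) + rotInv (x - s)) =
        c • (T^[N + 1] x - s)) →
      ∀ z : ℝ × ℝ, 0 < z.2 → zY1 a b ρ s z - ricW a b ρ s T N (psi a b z) ≠ 0 := by
    intro N h z hz h0
    have hk : 0 < zk a b ρ s z := rk_pos (hP.H_pos hs z.1) (hP.pos z.1) hz
    obtain ⟨c, hc, h1⟩ := h (psi a b z) (hP.psi_notMem z hz)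
    have h2 := TD_radial (hP.H_pos hs z.1) (hP.pos z.1) hz
    rw [sub_eq_zero.1 h0] at h2
    rw [← h2, ← hP.fderiv_iter_succ hcomp hT (N + 1) z hz, map_smul,
      ← hP.T_phi hcomp hT z hz, ← Function.iterate_succ_apply] at h1
    refine hN _ (hP.phi_notMem z hz) (N + 1 + 1) (by omega) (c / zk a b ρ s z)
      (div_ne_zero hc hk.ne') ?_
    rw [div_eq_inv_mul, mul_smul, ← h1, smul_smul, inv_mul_cancel₀ hk.ne', one_smul]
  have hmain : ∀ N, (∀ x, x ∉ K → ∃ c : ℝ, c ≠ 0 ∧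
      fderiv ℝ (T^[N + 1]) x (ricW a b ρ s T N x • (x - s) + rotInv (x - s)) =
        c • (T^[N + 1] x - s)) := by
    intro N
    induction N with
    | zero =>
      intro x hx
      obtain ⟨z, hz, rfl, hTz⟩ := hP.exists_phi hcomp hT x hx
      have hk : 0 < zk a b ρ s z := rk_pos (hP.H_pos hs z.1) (hP.pos z.1) hz
      refine ⟨-zk a b ρ s z, neg_ne_zero.2 hk.ne', ?_⟩
      rw [hP.fderiv_iter_succ hcomp hT 0 z hz, hP.ricW_zero hcomp z hz,
        TD_to_radial (hP.H_pos hs z.1) (hP.pos z.1) hz]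
      simp [hTz]
    | succ N ih =>
      intro x hx
      obtain ⟨z, hz, rfl, hTz⟩ := hP.exists_phi hcomp hT x hx
      have hk : 0 < zk a b ρ s z := rk_pos (hP.H_pos hs z.1) (hP.pos z.1) hz
      obtain ⟨c, hc, h1⟩ := ih (psi a b z) (hP.psi_notMem z hz)
      have hne := hstep N ih z hz
      have hA := TD_radial (hP.H_pos hs z.1) (hP.pos z.1) hz
      have hB := TD_to_radial (hP.H_pos hs z.1) (hP.pos z.1) hz
      set A := zY1 a b ρ s z - ricW a b ρ s T N (psi a b z) with hAd
      refine ⟨zk a b ρ s z / A * c, mul_ne_zero (div_ne_zero hk.ne' hne) hc, ?_⟩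
      rw [hP.fderiv_iter_succ hcomp hT (N + 1) z hz, hP.ricW_succ hcomp hT N z hz, ← hAd]
      have hv : (-zY0 a b ρ s z + zk a b ρ s z ^ 2 / A) • (phi a b z - s) +
          rotInv (phi a b z - s) =
          (-zY0 a b ρ s z • (phi a b z - s) + rotInv (phi a b z - s)) +
          (zk a b ρ s z / A) • (zk a b ρ s z • (phi a b z - s)) := by
        rw [smul_smul, add_smul]
        have : zk a b ρ s z / A * zk a b ρ s z = zk a b ρ s z ^ 2 / A := by ring
        rw [this]; abel
      rw [hv, map_add, map_smul (TD ρ z) (zk a b ρ s z / A), hA, hB]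
      have hw : -zk a b ρ s z • (psi a b z - s) +
          (zk a b ρ s z / A) • (zY1 a b ρ s z • (psi a b z - s) + rotInv (psi a b z - s)) =
          (zk a b ρ s z / A) • (ricW a b ρ s T N (psi a b z) • (psi a b z - s) +
            rotInv (psi a b z - s)) := by
        have : ricW a b ρ s T N (psi a b z) = zY1 a b ρ s z - A := by rw [hAd]; ring
        rw [this, smul_add, smul_add, ← add_assoc, smul_smul, smul_smul, ← add_smul]
        congr 2
        field_simp
        ring
      rw [hw, map_smul, h1, smul_smul, ← hTz, ← Function.iterate_succ_apply]
  exact ⟨hmain N, hstep N (hmain N)⟩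

theorem contOn_zk (hP : NormalParam K a b ρ) (hs : s ∈ interior K) :
    ContinuousOn (zk a b ρ s) {z | 0 < z.2} := by
  have h1 := hP.cH s
  have h3 := hP.cρ
  unfold zk rk
  refine ContinuousOn.div (by fun_prop) (by fun_prop) fun z hz => ?_
  have := hP.H_pos hs z.1
  have := hP.pos z.1
  have : 0 < z.2 := hz
  positivity

theorem contOn_zY0 (hP : NormalParam K a b ρ) (hs : s ∈ interior K) :
    ContinuousOn (zY0 a b ρ s) {z | 0 < z.2} := by
  have h1 := hP.cH s
  have h2 := hP.cG s
  have h3 := hP.cρ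
  unfold zY0 rY
  refine ContinuousOn.div (by fun_prop) (by fun_prop) fun z hz => ?_
  have := hP.H_pos hs z.1
  have := hP.pos z.1
  have : 0 < z.2 := hz
  positivity

theorem contOn_zY1 (hP : NormalParam K a b ρ) (hs : s ∈ interior K) :
    ContinuousOn (zY1 a b ρ s) {z | 0 < z.2} := by
  have h1 := hP.cH s
  have h2 := hP.cG s
  have h3 := hP.cρ
  unfold zY1 rY
  refine ContinuousOn.div (by fun_prop) (by fun_prop) fun z hz => ?_
  have := hP.H_pos hs z.1
  have := hP.pos z.1
  have : 0 < z.2 := hz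
  positivity

theorem contOn_ricW (hP : NormalParam K a b ρ) (hcomp : IsCompact K) (hT : IsOuterBilliard K T)
    (hs : s ∈ interior K)
    (hne : ∀ N, ∀ z : ℝ × ℝ, 0 < z.2 → zY1 a b ρ s z - ricW a b ρ s T N (psi a b z) ≠ 0) (N : ℕ) :
    ContinuousOn (ricW a b ρ s T N) Kᶜ := by
  induction N with
  | zero =>
    refine hP.continuousOn_of_phi hcomp hT ?_
    refine (hP.contOn_zY0 hs).neg.congr fun z hz => ?_
    exact hP.ricW_zero hcomp z hz
  | succ N ih =>
    refine hP.continuousOn_of_phi hcomp hT ?_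
    have h1 : ContinuousOn (fun z => ricW a b ρ s T N (psi a b z)) {z | 0 < z.2} :=
      ih.comp hP.contDiff_psi.continuous.continuousOn fun z hz => hP.psi_notMem z hz
    refine ((hP.contOn_zY0 hs).neg.add (((hP.contOn_zk hs).pow 2).div
      ((hP.contOn_zY1 hs).sub h1) fun z hz => hne N z hz)).congr fun z hz => ?_
    exact hP.ricW_succ hcomp hT N z hz

end NormalParam

/-! ### Asymptotics and positivity of the recursion -/

theorem rk_le {h r t : ℝ} (hh : 0 < h) (hr : 0 < r) (ht : 0 < t) : t * rk h r t ≤ 1 / (2 * h) := by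
  unfold rk
  rw [mul_div_assoc', div_le_div_iff₀ (by positivity) (by positivity)]
  nlinarith [mul_pos hh (mul_pos hh hr)]

/-- As the distance `t` to the point of tangency tends to infinity, `t * Y` is eventually not much
smaller than `1 / (2 h)`, uniformly in the remaining data. -/
theorem rY_asym {m B η : ℝ} (hm : 0 < m) (hB : 1 ≤ B) (hη : 0 < η) :
    ∃ R : ℝ, 1 ≤ R ∧ ∀ h g r t : ℝ, m ≤ h → h ≤ B → |g| ≤ B → 0 < r → r ≤ B → R ≤ t →
      1 / (2 * h) - η ≤ t * rY h g r t := by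
  refine ⟨2 * B + 16 * B ^ 4 / (m * η), by have : 0 ≤ 16 * B ^ 4 / (m * η) := by positivity
                                           linarith, ?_⟩
  intro h g r t hmh hhB hg hr hrB ht
  have hh : 0 < h := by linarith
  obtain ⟨hg1, hg2⟩ := abs_le.1 hg
  have ht2 : 2 * B ≤ t := by
    have : 0 ≤ 16 * B ^ 4 / (m * η) := by positivity
    linarith
  have ht1 : 1 ≤ t := by linarith
  have ht0 : 0 < t := by linarith
  have ht3 : 16 * B ^ 4 ≤ m * η * t := by
    have h1 : 16 * B ^ 4 / (m * η) ≤ t := by linarith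
    rw [div_le_iff₀ (by positivity)] at h1
    linarith
  set Dn := (h * r + t ^ 2) * (h ^ 2 + (g - t) ^ 2) with hDn
  have hDpos : 0 < Dn := by
    have : 0 < t - g := by linarith
    have : 0 < (g - t) ^ 2 := by nlinarith
    positivity
  have hrw : t * rY h g r t = 1 / (2 * h) -
      (-2 * g * t ^ 3 + (2 * (h ^ 2 + g ^ 2) - h * r) * t ^ 2 + h * r * (h ^ 2 + g ^ 2)) /
        (2 * h * Dn) := by
    have hd2 : 2 * (h * r + t ^ 2) * h * (h ^ 2 + (g - t) ^ 2) = 2 * h * Dn := by rw [hDn]; ring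
    rw [rY, hd2]
    field_simp
    rw [hDn]
    ring
  rw [hrw]
  have hg2' : g ^ 2 ≤ B ^ 2 := by nlinarith
  have hh2 : h ^ 2 ≤ B ^ 2 := by nlinarith
  have hhr : h * r ≤ B ^ 2 := by nlinarith
  have hhr0 : 0 < h * r := by positivity
  have hnum : -2 * g * t ^ 3 + (2 * (h ^ 2 + g ^ 2) - h * r) * t ^ 2 + h * r * (h ^ 2 + g ^ 2) ≤
      8 * B ^ 4 * t ^ 3 := by
    have e1 : -2 * g * t ^ 3 ≤ 2 * B * t ^ 3 := by
      have : 0 < t ^ 3 := by positivity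
      nlinarith
    have e2 : (2 * (h ^ 2 + g ^ 2) - h * r) * t ^ 2 ≤ 4 * B ^ 2 * t ^ 2 := by
      have : 0 < t ^ 2 := by positivity
      nlinarith
    have e3 : h * r * (h ^ 2 + g ^ 2) ≤ 2 * B ^ 4 := by
      calc h * r * (h ^ 2 + g ^ 2) ≤ B ^ 2 * (B ^ 2 + B ^ 2) := by gcongr
        _ = _ := by ring
    have e4 : t ^ 2 ≤ t ^ 3 := pow_le_pow_right₀ ht1 (by norm_num)
    have e5 : 1 ≤ t ^ 3 := one_le_pow₀ ht1
    have e6 : B ≤ B ^ 4 := le_self_pow₀ hB (by norm_num)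
    have e7 : B ^ 2 ≤ B ^ 4 := pow_le_pow_right₀ hB (by norm_num)
    have e8 : B * t ^ 3 ≤ B ^ 4 * t ^ 3 := by gcongr
    have e9 : B ^ 2 * t ^ 2 ≤ B ^ 4 * t ^ 3 := by gcongr
    have e10 : B ^ 4 * 1 ≤ B ^ 4 * t ^ 3 := by gcongr
    linarith
  have hden : t ^ 4 / 4 ≤ Dn := by
    have e1 : t ^ 2 ≤ h * r + t ^ 2 := by linarith
    have e2 : t ^ 2 / 4 ≤ h ^ 2 + (g - t) ^ 2 := by nlinarith
    calc t ^ 4 / 4 = t ^ 2 * (t ^ 2 / 4) := by ring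
      _ ≤ Dn := by rw [hDn]; gcongr
  have : (-2 * g * t ^ 3 + (2 * (h ^ 2 + g ^ 2) - h * r) * t ^ 2 + h * r * (h ^ 2 + g ^ 2)) /
        (2 * h * Dn) ≤ η := by
    rw [div_le_iff₀ (by positivity)]
    refine hnum.trans ?_
    calc 8 * B ^ 4 * t ^ 3 = (16 * B ^ 4) * t ^ 3 / 2 := by ring
      _ ≤ (m * η * t) * t ^ 3 / 2 := by gcongr
      _ = η * (2 * m * (t ^ 4 / 4)) := by ring
      _ ≤ η * (2 * h * Dn) := by gcongr
  linarith

namespace NormalParam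

variable {K : Set (ℝ × ℝ)} {a b ρ : ℝ → ℝ} {T : ℝ × ℝ → ℝ × ℝ} {s : ℝ × ℝ}

/-- A continuous `2π`-periodic function attains its minimum and its maximum. -/
theorem per_bounds {f : ℝ → ℝ} (hf : Continuous f) (hper : ∀ θ, f (θ + 2 * π) = f θ) :
    ∃ θ₀ θ₁, ∀ θ, f θ₀ ≤ f θ ∧ f θ ≤ f θ₁ := by
  have hc : IsCompact (range f) :=
    Function.Periodic.compact_of_continuous (show Function.Periodic f (2 * π) from hper)
      two_pi_pos.ne' hf
  obtain ⟨_, ⟨θ₀, rfl⟩, h0⟩ := hc.exists_isLeast (range_nonempty f)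
  obtain ⟨_, ⟨θ₁, rfl⟩, h1⟩ := hc.exists_isGreatest (range_nonempty f)
  exact ⟨θ₀, θ₁, fun θ => ⟨h0 ⟨θ, rfl⟩, h1 ⟨θ, rfl⟩⟩⟩

theorem bounds (hP : NormalParam K a b ρ) (hs : s ∈ interior K) :
    ∃ m B : ℝ, 0 < m ∧ 1 ≤ B ∧ ∀ θ, m ≤ supH a b s θ ∧ supH a b s θ ≤ B ∧ |supG a b s θ| ≤ B ∧
      m ≤ ρ θ ∧ ρ θ ≤ B := by
  obtain ⟨h0, h1, hh⟩ := per_bounds (hP.cH s) (hP.pH s)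
  obtain ⟨g0, g1, hg⟩ := per_bounds (hP.cG s).abs (fun θ => by rw [hP.pG])
  obtain ⟨r0, r1, hr⟩ := per_bounds hP.cρ hP.pρ
  refine ⟨min (supH a b s h0) (ρ r0), max 1 (max (supH a b s h1) (max |supG a b s g1| (ρ r1))),
    lt_min (hP.H_pos hs _) (hP.pos _), le_max_left _ _, fun θ => ?_⟩
  refine ⟨(min_le_left _ _).trans (hh θ).1, ?_, ?_, (min_le_right _ _).trans (hr θ).1, ?_⟩
  · exact (hh θ).2.trans ((le_max_left _ _).trans (le_max_right _ _))
  · exact (hg θ).2.trans ((le_max_left _ _).trans ((le_max_right _ _).trans (le_max_right _ _)))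
  · exact (hr θ).2.trans ((le_max_right _ _).trans ((le_max_right _ _).trans (le_max_right _ _)))

/-- Far from `K` the outer billiard map moves the half-length `τ` only moderately. -/
theorem far (hP : NormalParam K a b ρ) (hs : s ∈ interior K) (R : ℝ) (hR : 0 ≤ R) :
    ∃ R' : ℝ, ∀ z z' : ℝ × ℝ, 0 < z'.2 → R' ≤ z.2 → psi a b z = phi a b z' →
      R ≤ z'.2 ∧ z'.2 ≤ 2 * z.2 := by
  obtain ⟨m, B, hm, hB, hbd⟩ := hP.bounds hs
  refine ⟨R + 4 * B, fun z z' hz' hz he => ?_⟩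
  have h1 : supH a b s z.1 ^ 2 + (supG a b s z.1 + z.2) ^ 2 =
      supH a b s z'.1 ^ 2 + (supG a b s z'.1 - z'.2) ^ 2 := by
    have e : psi a b z - s = phi a b z' - s := by rw [he]
    rw [psi_sub, phi_sub] at e
    have e1 := congrArg Prod.fst e
    have e2 := congrArg Prod.snd e
    simp only [frm] at e1 e2
    have q1 := sin_sq_add_cos_sq z.1
    have q2 := sin_sq_add_cos_sq z'.1
    have e3 := congrArg₂ (fun x y : ℝ => x ^ 2 + y ^ 2) e1 e2
    linear_combination e3 - (supH a b s z.1 ^ 2 + (supG a b s z.1 + z.2) ^ 2) * q1 +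
      (supH a b s z'.1 ^ 2 + (supG a b s z'.1 - z'.2) ^ 2) * q2
  obtain ⟨a1, a2, a3, -, -⟩ := hbd z.1
  obtain ⟨b1, b2, b3, -, -⟩ := hbd z'.1
  obtain ⟨a3, a4⟩ := abs_le.1 a3
  obtain ⟨b3, b4⟩ := abs_le.1 b3
  constructor
  · by_contra! hcon
    have e1 : (z.2 - B) ^ 2 ≤ (supG a b s z.1 + z.2) ^ 2 := by
      apply pow_le_pow_left₀ <;> linarith
    have e2 : (supG a b s z'.1 - z'.2) ^ 2 ≤ (B + R) ^ 2 := by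
      apply sq_le_sq' <;> linarith
    have e3 : (R + 3 * B) ^ 2 ≤ (z.2 - B) ^ 2 := by
      apply pow_le_pow_left₀ <;> linarith
    have e4 : supH a b s z'.1 ^ 2 ≤ B ^ 2 := by
      apply pow_le_pow_left₀ <;> linarith
    nlinarith [sq_nonneg (supH a b s z.1)]
  · by_contra! hcon
    have e1 : (supG a b s z.1 + z.2) ^ 2 ≤ (B + z.2) ^ 2 := by
      apply pow_le_pow_left₀ <;> linarith
    have e2 : (2 * z.2 - B) ^ 2 ≤ (z'.2 - supG a b s z'.1) ^ 2 := by
      apply pow_le_pow_left₀ <;> linarith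
    have e4 : supH a b s z.1 ^ 2 ≤ B ^ 2 := by
      apply pow_le_pow_left₀ <;> linarith
    have hq := sq_nonneg (supH a b s z'.1)
    nlinarith [hq]

/-- Far from `K` the Riccati recursion stays negative, with a definite margin. -/
theorem ricW_far (hP : NormalParam K a b ρ) (hcomp : IsCompact K) (hT : IsOuterBilliard K T)
    (hs : s ∈ interior K) (N : ℕ) :
    ∃ δ R : ℝ, 0 < δ ∧ 1 ≤ R ∧ ∀ z : ℝ × ℝ, R ≤ z.2 →
      ricW a b ρ s T N (phi a b z) ≤ -δ / z.2 := by
  obtain ⟨m, B, hm, hB, hbd⟩ := hP.bounds hs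
  have hγ : ∀ θ, 1 / (2 * B) ≤ 1 / (2 * supH a b s θ) := fun θ => by
    obtain ⟨a1, a2, -⟩ := hbd θ
    apply one_div_le_one_div_of_le <;> linarith
  have hγ0 : 0 < 1 / (2 * B) := by positivity
  induction N with
  | zero =>
    obtain ⟨R, hR, h⟩ := rY_asym hm hB (half_pos hγ0)
    refine ⟨1 / (2 * B) / 2, R, half_pos hγ0, hR, fun z hz => ?_⟩
    have hz0 : 0 < z.2 := by linarith
    obtain ⟨a1, a2, a3, a4, a5⟩ := hbd z.1
    have h1 := h _ _ _ _ a1 a2 a3 (hP.pos z.1) a5 hz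
    rw [hP.ricW_zero hcomp z hz0, zY0, neg_div, neg_le_neg_iff, div_le_iff₀ hz0]
    have := hγ z.1
    linarith
  | succ N ih =>
    obtain ⟨δ, R, hδ, hR, hW⟩ := ih
    set η := min (δ / 12) (1 / (2 * B) / 4) with hη
    have hη0 : 0 < η := lt_min (by positivity) (by positivity)
    have hη1 : η ≤ δ / 12 := min_le_left _ _
    have hη2 : η ≤ 1 / (2 * B) / 4 := min_le_right _ _
    obtain ⟨R1, hR1, h⟩ := rY_asym hm hB hη0
    obtain ⟨R2, hfar⟩ := hP.far hs R (by linarith)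
    refine ⟨η, max R1 R2, hη0, le_max_of_le_left hR1, fun z hz => ?_⟩
    have hz1 : R1 ≤ z.2 := (le_max_left _ _).trans hz
    have hz2 : R2 ≤ z.2 := (le_max_right _ _).trans hz
    have hz0 : 0 < z.2 := by linarith
    obtain ⟨a1, a2, a3, a4, a5⟩ := hbd z.1
    have h0 := h _ _ _ _ a1 a2 a3 (hP.pos z.1) a5 hz1
    have h1 := h _ (-supG a b s z.1) _ _ a1 a2 (by rwa [abs_neg]) (hP.pos z.1) a5 hz1
    have hk := rk_le (hP.H_pos hs z.1) (hP.pos z.1) hz0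
    have hk0 := rk_pos (hP.H_pos hs z.1) (hP.pos z.1) hz0
    obtain ⟨z', hz', he, -⟩ := hP.exists_phi hcomp hT _ (hP.psi_notMem z hz0)
    obtain ⟨f1, f2⟩ := hfar z z' hz' hz2 he
    have hW' := hW z' f1
    rw [← he] at hW'
    have hW2 : ricW a b ρ s T N (psi a b z) ≤ -(δ / 2) / z.2 := by
      refine hW'.trans ?_
      rw [neg_div, neg_div, neg_le_neg_iff, div_div]
      gcongr
    have hW3 : z.2 * ricW a b ρ s T N (psi a b z) ≤ -(δ / 2) := by
      rw [le_div_iff₀ hz0] at hW2; linarith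
    rw [hP.ricW_succ hcomp hT N z hz0, zY0, zY1, zk, le_div_iff₀ hz0]
    set γ := 1 / (2 * supH a b s z.1) with hγd
    have hγ1 := hγ z.1
    rw [← hγd] at hγ1
    set k := rk (supH a b s z.1) (ρ z.1) z.2
    set Y0 := rY (supH a b s z.1) (supG a b s z.1) (ρ z.1) z.2
    set Y1 := rY (supH a b s z.1) (-supG a b s z.1) (ρ z.1) z.2
    set w := ricW a b ρ s T N (psi a b z)
    have hA : γ - η + δ / 2 ≤ z.2 * (Y1 - w) := by linarith
    have hA0 : 0 < γ - η + δ / 2 := by linarith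
    have hA1 : 0 < Y1 - w := by
      by_contra! hc
      have := mul_nonpos_of_nonneg_of_nonpos hz0.le hc
      linarith
    have hmain : k ^ 2 / (Y1 - w) * z.2 ≤ γ - 2 * η := by
      have e1 : k ^ 2 / (Y1 - w) * z.2 = (z.2 * k) ^ 2 / (z.2 * (Y1 - w)) := by
        field_simp
      rw [e1, div_le_iff₀ (by positivity)]
      have e2 : (z.2 * k) ^ 2 ≤ γ ^ 2 := by
        have : 0 < z.2 * k := by positivity
        gcongr
      have e3 : (γ - 2 * η) * (γ - η + δ / 2) ≤ (γ - 2 * η) * (z.2 * (Y1 - w)) := by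
        apply mul_le_mul_of_nonneg_left hA; linarith
      nlinarith [mul_pos hη0 hδ]
    linarith

/-- If no denominator in the Riccati recursion vanishes, then all are positive: they are positive far
from `K`, and the half-plane of coordinates is connected. -/
theorem ric_pos (hP : NormalParam K a b ρ) (hcomp : IsCompact K) (hT : IsOuterBilliard K T)
    (hs : s ∈ interior K)
    (hne : ∀ N, ∀ z : ℝ × ℝ, 0 < z.2 → zY1 a b ρ s z - ricW a b ρ s T N (psi a b z) ≠ 0) (N : ℕ)
    (z : ℝ × ℝ) (hz : 0 < z.2) : 0 < zY1 a b ρ s z - ricW a b ρ s T N (psi a b z) := by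
  obtain ⟨m, B, hm, hB, hbd⟩ := hP.bounds hs
  obtain ⟨δ, R, hδ, hR, hW⟩ := hP.ricW_far hcomp hT hs N
  obtain ⟨R1, hR1, h⟩ := rY_asym hm hB (η := 1 / (2 * B)) (by positivity)
  obtain ⟨R2, hfar⟩ := hP.far hs R (by linarith)
  have hlarge : ∃ w : ℝ × ℝ, 0 < w.2 ∧ 0 < zY1 a b ρ s w - ricW a b ρ s T N (psi a b w) := by
    refine ⟨(0, max R1 R2), by simp only; exact lt_max_of_lt_left (by linarith), ?_⟩
    set w : ℝ × ℝ := (0, max R1 R2) with hw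
    have hw1 : R1 ≤ w.2 := le_max_left _ _
    have hw2 : R2 ≤ w.2 := le_max_right _ _
    have hw0 : 0 < w.2 := by linarith
    obtain ⟨a1, a2, a3, a4, a5⟩ := hbd w.1
    have h1 := h _ (-supG a b s w.1) _ _ a1 a2 (by rwa [abs_neg]) (hP.pos w.1) a5 hw1
    have h2 : 1 / (2 * B) ≤ 1 / (2 * supH a b s w.1) := by
      apply one_div_le_one_div_of_le <;> linarith
    have h3 : 0 ≤ zY1 a b ρ s w := nonneg_of_mul_nonneg_right (a := w.2) (by
      rw [zY1]; linarith) hw0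
    obtain ⟨w', hw', he, -⟩ := hP.exists_phi hcomp hT _ (hP.psi_notMem w hw0)
    obtain ⟨f1, f2⟩ := hfar w w' hw' hw2 he
    have hW' := hW w' f1
    rw [← he] at hW'
    have : -δ / w'.2 < 0 := div_neg_of_neg_of_pos (by linarith) hw'
    linarith
  obtain ⟨w, hw, hwp⟩ := hlarge
  by_contra! hcon
  have hU : IsPreconnected {z : ℝ × ℝ | 0 < z.2} := by
    have : {z : ℝ × ℝ | 0 < z.2} = univ ×ˢ Ioi 0 := by ext; simp
    rw [this]
    exact isPreconnected_univ.prod isPreconnected_Ioi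
  have hc : ContinuousOn (fun z => zY1 a b ρ s z - ricW a b ρ s T N (psi a b z))
      {z : ℝ × ℝ | 0 < z.2} :=
    (hP.contOn_zY1 hs).sub ((hP.contOn_ricW hcomp hT hs hne N).comp
      hP.contDiff_psi.continuous.continuousOn fun z hz => hP.psi_notMem z hz)
  obtain ⟨y, hy, hy0⟩ := hU.intermediate_value hz hw hc ⟨hcon, hwp.le⟩
  exact hne N y hy hy0

end NormalParam

/-! ### The weighted integral inequality -/

/-- Bounds on the support function `h`, its derivative `g` and the radius of curvature `r`. -/
def Bd (m B h g r : ℝ) : Prop := m ≤ h ∧ h ≤ B ∧ |g| ≤ B ∧ m ≤ r ∧ r ≤ B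

theorem Bd.neg {m B h g r : ℝ} (H : Bd m B h g r) : Bd m B h (-g) r := by
  obtain ⟨h1, h2, h3, h4, h5⟩ := H
  exact ⟨h1, h2, by rwa [abs_neg], h4, h5⟩

/-- The quadratic denominators are comparable to `1 + t ^ 2`. -/
theorem den_bounds {m B : ℝ} (hm : 0 < m) (hB : 1 ≤ B) :
    ∃ c : ℝ, 0 < c ∧ ∀ h g r t : ℝ, Bd m B h g r →
      c * (1 + t ^ 2) ≤ h * r + t ^ 2 ∧ c * (1 + t ^ 2) ≤ h ^ 2 + (g - t) ^ 2 := by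
  set C := (1 + 2 * B ^ 2) / m ^ 2 + 2 with hC
  have hC0 : 2 < C := by have : 0 < (1 + 2 * B ^ 2) / m ^ 2 := by positivity
                         linarith
  refine ⟨1 / C, by positivity, fun h g r t ⟨h1, h2, h3, h4, h5⟩ => ⟨?_, ?_⟩⟩
  · rw [div_mul_eq_mul_div, one_mul, div_le_iff₀ (by positivity)]
    have e1 : m ^ 2 ≤ h * r := by nlinarith
    have e2 : 1 ≤ m ^ 2 * C := by
      rw [hC, mul_add, mul_div_cancel₀ _ (by positivity)]
      nlinarith
    nlinarith [sq_nonneg t]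
  · rw [div_mul_eq_mul_div, one_mul, div_le_iff₀ (by positivity)]
    have e1 : m ^ 2 ≤ h ^ 2 := by nlinarith
    have e2 : 1 + 2 * B ^ 2 ≤ m ^ 2 * C := by
      rw [hC, mul_add, mul_div_cancel₀ _ (by positivity)]
      nlinarith
    have e3 : g ^ 2 ≤ B ^ 2 := sq_le_sq' (abs_le.1 h3).1 (abs_le.1 h3).2
    have e4 : t ^ 2 ≤ 2 * g ^ 2 + 2 * (g - t) ^ 2 := by nlinarith [sq_nonneg (2 * g - t)]
    have e5 : m ^ 2 * C ≤ h ^ 2 * C := by gcongr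
    have e6 : 2 * (g - t) ^ 2 ≤ (g - t) ^ 2 * C := by nlinarith [sq_nonneg (g - t)]
    nlinarith

/-- The function `rY` is `O (1 / t)`, uniformly in the remaining data. -/
theorem rY_bound {m B : ℝ} (hm : 0 < m) (hB : 1 ≤ B) :
    ∃ C : ℝ, 0 < C ∧ ∀ h g r t : ℝ, 0 < t → Bd m B h g r → |t * rY h g r t| ≤ C := by
  obtain ⟨c, hc, hden⟩ := den_bounds hm hB
  refine ⟨7 * B ^ 3 / (2 * m * c ^ 2), by positivity, fun h g r t ht H => ?_⟩
  obtain ⟨d1, d2⟩ := hden h g r t H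
  obtain ⟨h1, h2, h3, h4, h5⟩ := H
  have hω : 1 ≤ 1 + t ^ 2 := by nlinarith
  have htω : t ≤ 1 + t ^ 2 := by nlinarith
  have hg2 : g ^ 2 ≤ B ^ 2 := sq_le_sq' (abs_le.1 h3).1 (abs_le.1 h3).2
  have hB2 : B ^ 2 ≤ B ^ 3 := pow_le_pow_right₀ hB (by norm_num)
  have hh : 0 < h := by linarith
  have hr : 0 < r := by linarith
  have hD : 0 < h * r + t ^ 2 := by positivity
  have hq : 0 < h ^ 2 + (g - t) ^ 2 := by positivity
  rw [rY, mul_div_assoc', abs_div, div_le_div_iff₀ (by positivity) (by positivity),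
    abs_of_pos (show 0 < 2 * (h * r + t ^ 2) * h * (h ^ 2 + (g - t) ^ 2) by positivity)]
  have hnum : |t * (2 * r * h * (t - g) + t * (t ^ 2 - g ^ 2 - h ^ 2))| ≤
      7 * B ^ 3 * (1 + t ^ 2) ^ 2 := by
    have e0 : |t - g| ≤ t + B := by
      refine (abs_sub _ _).trans ?_
      rw [abs_of_pos ht]; linarith
    have e1 : |2 * r * h * t * (t - g)| ≤ 4 * B ^ 3 * (1 + t ^ 2) ^ 2 := by
      rw [abs_mul, abs_of_pos (by positivity)]
      calc 2 * r * h * t * |t - g| ≤ 2 * B * B * t * (t + B) := by gcongr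
        _ = 2 * B ^ 2 * t ^ 2 + 2 * B ^ 3 * t := by ring
        _ ≤ 2 * B ^ 3 * (1 + t ^ 2) + 2 * B ^ 3 * (1 + t ^ 2) := by
          gcongr; linarith
        _ = 4 * B ^ 3 * (1 + t ^ 2) ^ 1 := by ring
        _ ≤ _ := by gcongr 4 * B ^ 3 * ?_; exact pow_le_pow_right₀ hω (by norm_num)
    have e2 : |t ^ 2 * (t ^ 2 - g ^ 2 - h ^ 2)| ≤ 3 * B ^ 3 * (1 + t ^ 2) ^ 2 := by
      have hB1 : 1 ≤ B ^ 3 := one_le_pow₀ hB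
      have f1 : |t ^ 2 - g ^ 2 - h ^ 2| ≤ 3 * B ^ 3 * (1 + t ^ 2) := by
        have : h ^ 2 ≤ B ^ 2 := by nlinarith
        have f3 : 2 * B ^ 3 ≤ 2 * B ^ 3 * (1 + t ^ 2) := le_mul_of_one_le_right (by positivity) hω
        have f4 : 1 + t ^ 2 ≤ B ^ 3 * (1 + t ^ 2) := le_mul_of_one_le_left (by positivity) hB1
        rw [abs_le]; constructor <;> nlinarith [sq_nonneg g, sq_nonneg h]
      rw [abs_mul, abs_of_nonneg (by positivity)]
      calc t ^ 2 * |t ^ 2 - g ^ 2 - h ^ 2| ≤ (1 + t ^ 2) * (3 * B ^ 3 * (1 + t ^ 2)) := by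
            gcongr; linarith
        _ = _ := by ring
    calc |t * (2 * r * h * (t - g) + t * (t ^ 2 - g ^ 2 - h ^ 2))|
        = |2 * r * h * t * (t - g) + t ^ 2 * (t ^ 2 - g ^ 2 - h ^ 2)| := by congr 1; ring
      _ ≤ _ := (abs_add_le _ _).trans (by linarith)
  calc |t * (2 * r * h * (t - g) + t * (t ^ 2 - g ^ 2 - h ^ 2))| * (2 * m * c ^ 2)
      ≤ (7 * B ^ 3 * (1 + t ^ 2) ^ 2) * (2 * m * c ^ 2) := by gcongr
    _ = 7 * B ^ 3 * (2 * (c * (1 + t ^ 2)) * m * (c * (1 + t ^ 2))) := by ring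
    _ ≤ 7 * B ^ 3 * (2 * (h * r + t ^ 2) * h * (h ^ 2 + (g - t) ^ 2)) := by gcongr

/-- The coordinate domain: a full turn of normal angles and all positive half-lengths. -/
def Dom : Set (ℝ × ℝ) := Ioc 0 (2 * π) ×ˢ Ioi 0

theorem measurableSet_Dom : MeasurableSet Dom := measurableSet_Ioc.prod measurableSet_Ioi

theorem Dom_pos {z : ℝ × ℝ} (hz : z ∈ Dom) : 0 < z.2 := hz.2

theorem exists_Ioc (θ : ℝ) : ∃ n : ℤ, θ + n * (2 * π) ∈ Ioc 0 (2 * π) := by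
  obtain ⟨n, hn, -⟩ := existsUnique_add_zsmul_mem_Ioc two_pi_pos θ 0
  exact ⟨n, by simpa using hn⟩

theorem Dom_inj {z z' : ℝ × ℝ} (hz : z ∈ Dom) (hz' : z' ∈ Dom)
    (h : (∃ n : ℤ, z'.1 = z.1 + n * (2 * π)) ∧ z'.2 = z.2) : z = z' := by
  obtain ⟨⟨n, hn⟩, h2⟩ := h
  have h1 := hz.1
  have h3 := hz'.1
  rw [hn] at h3
  have hpi := two_pi_pos
  have n0 : n = 0 := by
    have e1 : (n : ℝ) < 1 := by
      by_contra! hc; nlinarith [h1.1, h3.2]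
    have e2 : (-1 : ℝ) < n := by
      by_contra! hc; nlinarith [h1.2, h3.1]
    have e1' : n < 1 := by exact_mod_cast e1
    have e2' : -1 < n := by exact_mod_cast e2
    omega
  rw [n0] at hn
  exact Prod.ext (by simpa using hn.symm) h2.symm

/-- A continuous function with decay `1 / (1 + τ ^ 2)` is integrable on the coordinate domain. -/
theorem integrableOn_Dom {f : ℝ × ℝ → ℝ} (hf : ContinuousOn f {z | 0 < z.2}) (C : ℝ)
    (hC : ∀ z : ℝ × ℝ, 0 < z.2 → |f z| ≤ C * (1 + z.2 ^ 2)⁻¹) : IntegrableOn f Dom := by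
  have h1 : IntegrableOn (fun z : ℝ × ℝ => C * (1 + z.2 ^ 2)⁻¹) Dom := by
    have e1 : Integrable (fun _ : ℝ => C) (volume.restrict (Ioc 0 (2 * π))) :=
      integrableOn_const measure_Ioc_lt_top.ne
    have e2 : Integrable (fun t : ℝ => (1 + t ^ 2)⁻¹) (volume.restrict (Ioi 0)) :=
      integrable_inv_one_add_sq.integrableOn
    have := e1.mul_prod e2
    rwa [Measure.prod_restrict] at this
  refine Integrable.mono' h1 ?_ ?_
  · exact (hf.mono fun z hz => Dom_pos hz).aestronglyMeasurable measurableSet_Dom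
  · rw [ae_restrict_iff' measurableSet_Dom]
    exact Filter.Eventually.of_forall fun z hz => hC z (Dom_pos hz)

/-- The squared distance from `s` to `phi a b z`. -/
def zq0 (a b : ℝ → ℝ) (s z : ℝ × ℝ) : ℝ := supH a b s z.1 ^ 2 + (supG a b s z.1 - z.2) ^ 2

/-- The squared distance from `s` to `psi a b z`. -/
def zq1 (a b : ℝ → ℝ) (s z : ℝ × ℝ) : ℝ := supH a b s z.1 ^ 2 + (supG a b s z.1 + z.2) ^ 2

/-- The mean of `zq0` and `zq1`. -/
def zP (a b : ℝ → ℝ) (s z : ℝ × ℝ) : ℝ := supH a b s z.1 ^ 2 + supG a b s z.1 ^ 2 + z.2 ^ 2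

/-- The radial weight used to make integrals over the exterior of `K` converge. -/
def wt (ε : ℝ) (s x : ℝ × ℝ) : ℝ := 1 / (1 + ε * ((x - s).1 ^ 2 + (x - s).2 ^ 2))

theorem wt_phi (a b : ℝ → ℝ) (ε : ℝ) (s z : ℝ × ℝ) :
    wt ε s (phi a b z) = 1 / (1 + ε * zq0 a b s z) := by
  rw [wt, phi_sub, zq0]
  congr 3
  simp only [frm]
  linear_combination (supH a b s z.1 ^ 2 + (supG a b s z.1 - z.2) ^ 2) * sin_sq_add_cos_sq z.1

theorem wt_psi (a b : ℝ → ℝ) (ε : ℝ) (s z : ℝ × ℝ) :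
    wt ε s (psi a b z) = 1 / (1 + ε * zq1 a b s z) := by
  rw [wt, psi_sub, zq1]
  congr 3
  simp only [frm]
  linear_combination (supH a b s z.1 ^ 2 + (supG a b s z.1 + z.2) ^ 2) * sin_sq_add_cos_sq z.1

/-- The integrand of the weighted inequality, in the coordinates `(θ, τ)`. -/
def jInt (a b ρ : ℝ → ℝ) (s : ℝ × ℝ) (ε : ℝ) (z : ℝ × ℝ) : ℝ :=
  z.2 * (1 / (1 + ε * zq0 a b s z) * zY0 a b ρ s z + 1 / (1 + ε * zq1 a b s z) * zY1 a b ρ s z -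
    2 * zk a b ρ s z / (1 + ε * zP a b s z))

/-- The arithmetic-geometric mean inequality behind the weighted integral inequality. -/
theorem amgm_weight {q0 q1 P ε k A : ℝ} (hε : 0 < ε) (h0 : 0 ≤ q0) (h1 : 0 ≤ q1)
    (hP : q0 + q1 = 2 * P) (hk : 0 < k) (hA : 0 < A) :
    2 * k / (1 + ε * P) ≤ 1 / (1 + ε * q0) * (k ^ 2 / A) + 1 / (1 + ε * q1) * A := by
  have hP' : P = (q0 + q1) / 2 := by linarith
  have u0 : 0 < 1 + ε * q0 := by positivity
  have u1 : 0 < 1 + ε * q1 := by positivity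
  have e : 1 + ε * P = ((1 + ε * q0) + (1 + ε * q1)) / 2 := by rw [hP']; ring
  rw [e]
  set x := 1 + ε * q0
  set y := 1 + ε * q1
  have e2 : 1 / x * (k ^ 2 / A) + 1 / y * A = (k ^ 2 * y + A ^ 2 * x) / (x * y * A) := by
    field_simp
  rw [e2, div_le_div_iff₀ (by positivity) (by positivity)]
  have e3 : 0 ≤ x * y * (A - k) ^ 2 := by positivity
  have e4 : 0 ≤ (A * x - k * y) ^ 2 := sq_nonneg _
  linarith

namespace NormalParam

variable {K : Set (ℝ × ℝ)} {a b ρ : ℝ → ℝ} {T : ℝ × ℝ → ℝ × ℝ} {s : ℝ × ℝ}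

theorem phi_injOn (hP : NormalParam K a b ρ) (hcomp : IsCompact K) : InjOn (phi a b) Dom :=
  fun _ hz _ hz' h => Dom_inj hz hz' (hP.phi_inj hcomp _ _ (Dom_pos hz) (Dom_pos hz') h)

theorem psi_injOn (hP : NormalParam K a b ρ) (hcomp : IsCompact K) : InjOn (psi a b) Dom :=
  fun _ hz _ hz' h => Dom_inj hz hz' (hP.psi_inj hcomp _ _ (Dom_pos hz) (Dom_pos hz') h)

theorem phi_image_Dom (hP : NormalParam K a b ρ) (hcomp : IsCompact K)
    (hT : IsOuterBilliard K T) : phi a b '' Dom = Kᶜ := by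
  ext x
  constructor
  · rintro ⟨z, hz, rfl⟩; exact hP.phi_notMem z (Dom_pos hz)
  · intro hx
    obtain ⟨z, hz, rfl, -⟩ := hP.exists_phi hcomp hT x hx
    obtain ⟨n, hn⟩ := exists_Ioc z.1
    refine ⟨(z.1 + n * (2 * π), z.2), ⟨hn, hz⟩, ?_⟩
    exact per_int (f := fun θ => phi a b (θ, z.2)) (fun θ => hP.phi_per θ z.2) z.1 n

theorem psi_image_Dom (hP : NormalParam K a b ρ) (hcomp : IsCompact K)
    (hint : (interior K).Nonempty) : psi a b '' Dom = Kᶜ := by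
  ext x
  constructor
  · rintro ⟨z, hz, rfl⟩; exact hP.psi_notMem z (Dom_pos hz)
  · intro hx
    obtain ⟨z, hz, rfl⟩ := hP.exists_psi hcomp hint x hx
    obtain ⟨n, hn⟩ := exists_Ioc z.1
    refine ⟨(z.1 + n * (2 * π), z.2), ⟨hn, hz⟩, ?_⟩
    exact per_int (f := fun θ => psi a b (θ, z.2)) (fun θ => hP.psi_per θ z.2) z.1 n

/-- Change of variables `(θ, τ) ↦ phi a b (θ, τ)`, whose Jacobian is `τ`. -/
theorem integral_phi (hP : NormalParam K a b ρ) (hcomp : IsCompact K)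
    (hT : IsOuterBilliard K T) (F : ℝ × ℝ → ℝ) :
    ∫ x in Kᶜ, F x = ∫ z in Dom, z.2 * F (phi a b z) := by
  rw [← hP.phi_image_Dom hcomp hT, integral_image_eq_integral_abs_det_fderiv_smul volume
    measurableSet_Dom (fun z _ => (hP.hasFDerivAt_phi z).hasFDerivWithinAt) (hP.phi_injOn hcomp)]
  refine setIntegral_congr_fun measurableSet_Dom fun z hz => ?_
  simp only [phiD_det, abs_neg, abs_of_pos (Dom_pos hz), smul_eq_mul]

/-- Change of variables `(θ, τ) ↦ psi a b (θ, τ)`, whose Jacobian is `τ`. -/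
theorem integral_psi (hP : NormalParam K a b ρ) (hcomp : IsCompact K)
    (hint : (interior K).Nonempty) (F : ℝ × ℝ → ℝ) :
    ∫ x in Kᶜ, F x = ∫ z in Dom, z.2 * F (psi a b z) := by
  rw [← hP.psi_image_Dom hcomp hint, integral_image_eq_integral_abs_det_fderiv_smul volume
    measurableSet_Dom (fun z _ => (hP.hasFDerivAt_psi z).hasFDerivWithinAt) (hP.psi_injOn hcomp)]
  refine setIntegral_congr_fun measurableSet_Dom fun z hz => ?_
  simp only [psiD_det, abs_neg, abs_of_pos (Dom_pos hz), smul_eq_mul]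

theorem integrable_phi (hP : NormalParam K a b ρ) (hcomp : IsCompact K)
    (hT : IsOuterBilliard K T) (F : ℝ × ℝ → ℝ) :
    IntegrableOn F Kᶜ ↔ IntegrableOn (fun z => z.2 * F (phi a b z)) Dom := by
  rw [← hP.phi_image_Dom hcomp hT, integrableOn_image_iff_integrableOn_abs_det_fderiv_smul volume
    measurableSet_Dom (fun z _ => (hP.hasFDerivAt_phi z).hasFDerivWithinAt) (hP.phi_injOn hcomp)]
  refine integrableOn_congr_fun (fun z hz => ?_) measurableSet_Dom
  simp only [phiD_det, abs_neg, abs_of_pos (Dom_pos hz), smul_eq_mul]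

theorem integrable_psi (hP : NormalParam K a b ρ) (hcomp : IsCompact K)
    (hint : (interior K).Nonempty) (F : ℝ × ℝ → ℝ) :
    IntegrableOn F Kᶜ ↔ IntegrableOn (fun z => z.2 * F (psi a b z)) Dom := by
  rw [← hP.psi_image_Dom hcomp hint, integrableOn_image_iff_integrableOn_abs_det_fderiv_smul volume
    measurableSet_Dom (fun z _ => (hP.hasFDerivAt_psi z).hasFDerivWithinAt) (hP.psi_injOn hcomp)]
  refine integrableOn_congr_fun (fun z hz => ?_) measurableSet_Dom
  simp only [psiD_det, abs_neg, abs_of_pos (Dom_pos hz), smul_eq_mul]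

theorem exists_Bd (hP : NormalParam K a b ρ) (hs : s ∈ interior K) :
    ∃ m B : ℝ, 0 < m ∧ 1 ≤ B ∧ ∀ θ, Bd m B (supH a b s θ) (supG a b s θ) (ρ θ) :=
  hP.bounds hs

theorem cont_zq0 (hP : NormalParam K a b ρ) (s : ℝ × ℝ) : Continuous (zq0 a b s) := by
  have h1 := hP.cH s
  have h2 := hP.cG s
  unfold zq0; fun_prop

theorem cont_zq1 (hP : NormalParam K a b ρ) (s : ℝ × ℝ) : Continuous (zq1 a b s) := by
  have h1 := hP.cH s
  have h2 := hP.cG s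
  unfold zq1; fun_prop

theorem cont_zP (hP : NormalParam K a b ρ) (s : ℝ × ℝ) : Continuous (zP a b s) := by
  have h1 := hP.cH s
  have h2 := hP.cG s
  unfold zP; fun_prop

theorem one_add_ne {ε q : ℝ} (hε : 0 < ε) (hq : 0 ≤ q) : 1 + ε * q ≠ 0 := by positivity

theorem contOn_V0 (hP : NormalParam K a b ρ) (s : ℝ × ℝ) {ε : ℝ} (hε : 0 < ε) :
    Continuous (fun z => 1 / (1 + ε * zq0 a b s z)) := by
  have := hP.cont_zq0 s
  exact continuous_const.div (by fun_prop) fun z => one_add_ne hε (by unfold zq0; positivity)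

theorem contOn_V1 (hP : NormalParam K a b ρ) (s : ℝ × ℝ) {ε : ℝ} (hε : 0 < ε) :
    Continuous (fun z => 1 / (1 + ε * zq1 a b s z)) := by
  have := hP.cont_zq1 s
  exact continuous_const.div (by fun_prop) fun z => one_add_ne hε (by unfold zq1; positivity)

/-- Integrability of the three terms of the weighted inequality. -/
theorem integrable_terms (hP : NormalParam K a b ρ) (hs : s ∈ interior K) {ε : ℝ} (hε : 0 < ε) :
    IntegrableOn (fun z => z.2 * (1 / (1 + ε * zq0 a b s z) * zY0 a b ρ s z)) Dom ∧
    IntegrableOn (fun z => z.2 * (1 / (1 + ε * zq1 a b s z) * zY1 a b ρ s z)) Dom ∧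
    IntegrableOn (fun z => z.2 * (2 * zk a b ρ s z / (1 + ε * zP a b s z))) Dom := by
  obtain ⟨m, B, hm, hB, hbd⟩ := hP.exists_Bd hs
  obtain ⟨c, hc, hden⟩ := den_bounds hm hB
  obtain ⟨C, hC, hY⟩ := rY_bound hm hB
  have hw : ∀ q t : ℝ, c * (1 + t ^ 2) ≤ q → 1 / (1 + ε * q) ≤ (ε * c)⁻¹ * (1 + t ^ 2)⁻¹ := by
    intro q t hq
    rw [← mul_inv, one_div]
    apply inv_anti₀ (by positivity)
    nlinarith
  have hgen : ∀ q t Y : ℝ, 0 ≤ q → c * (1 + t ^ 2) ≤ q → |t * Y| ≤ C →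
      |t * (1 / (1 + ε * q) * Y)| ≤ C * (ε * c)⁻¹ * (1 + t ^ 2)⁻¹ := by
    intro q t Y hq0 hq hY
    have : t * (1 / (1 + ε * q) * Y) = (t * Y) * (1 / (1 + ε * q)) := by ring
    rw [this, abs_mul, abs_of_pos (show 0 < 1 / (1 + ε * q) by positivity), mul_assoc]
    exact mul_le_mul hY (hw q t hq) (by positivity) hC.le
  refine ⟨integrableOn_Dom ?_ (C * (ε * c)⁻¹) fun z hz => ?_,
    integrableOn_Dom ?_ (C * (ε * c)⁻¹) fun z hz => ?_,
    integrableOn_Dom ?_ (1 / m * (ε * c)⁻¹) fun z hz => ?_⟩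
  · exact continuousOn_snd.mul ((hP.contOn_V0 s hε).continuousOn.mul (hP.contOn_zY0 hs))
  · exact hgen _ _ _ (by unfold zq0; positivity) (hden _ _ _ _ (hbd z.1)).2
      (hY _ _ _ _ hz (hbd z.1))
  · exact continuousOn_snd.mul ((hP.contOn_V1 s hε).continuousOn.mul (hP.contOn_zY1 hs))
  · refine hgen _ _ _ (by unfold zq1; positivity) ?_ (hY _ _ _ _ hz (hbd z.1).neg)
    refine (hden _ _ _ _ (hbd z.1).neg).2.trans (le_of_eq ?_)
    rw [zq1]; ring
  · refine continuousOn_snd.mul (ContinuousOn.div (continuousOn_const.mul (hP.contOn_zk hs)) ?_ ?_)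
    · have := hP.cont_zP s
      fun_prop
    · intro z _
      exact one_add_ne hε (by unfold zP; positivity)
  · have h1 := rk_le (hP.H_pos hs z.1) (hP.pos z.1) hz
    have h2 := rk_pos (hP.H_pos hs z.1) (hP.pos z.1) hz
    have hP1 : c * (1 + z.2 ^ 2) ≤ zP a b s z := by
      have e1 := (hden _ _ _ z.2 (hbd z.1)).2
      have e2 := (hden _ _ _ z.2 (hbd z.1).neg).2
      unfold zP; nlinarith
    have hP0 : 0 ≤ zP a b s z := by unfold zP; positivity
    have e3 : z.2 * (2 * zk a b ρ s z / (1 + ε * zP a b s z)) =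
        2 * (z.2 * zk a b ρ s z) * (1 / (1 + ε * zP a b s z)) := by ring
    have h3 : 0 < zk a b ρ s z := h2
    rw [e3, abs_of_pos (by positivity), mul_assoc (1 / m)]
    have e4 : 2 * (z.2 * zk a b ρ s z) ≤ 1 / m := by
      have : 1 / (2 * supH a b s z.1) ≤ 1 / (2 * m) := by
        have := (hbd z.1).1
        gcongr
      have e5 : (1 : ℝ) / (2 * m) = 1 / m / 2 := by field_simp
      unfold zk
      linarith
    exact mul_le_mul e4 (hw _ _ hP1) (by positivity) (by positivity)

/-- The weighted integral inequality: in the absence of conjugate points, the integral of `jInt` is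
nonnegative. Otherwise the weighted integrals of the Riccati functions would grow without bound. -/
theorem integral_jInt_nonneg (hP : NormalParam K a b ρ) (hcomp : IsCompact K)
    (hT : IsOuterBilliard K T) (hs : s ∈ interior K)
    (hN : ∀ x, x ∉ K → ∀ n : ℕ, 1 ≤ n → ∀ c : ℝ, c ≠ 0 →
      fderiv ℝ (T^[n]) x (x - s) ≠ c • (T^[n] x - s)) {ε : ℝ} (hε : 0 < ε) :
    0 ≤ ∫ z in Dom, jInt a b ρ s ε z := by
  have hne := fun N => (hP.ric_ne hcomp hT hs hN N).2
  have hpos := fun N => hP.ric_pos hcomp hT hs hne N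
  have hcont := fun N => hP.contOn_ricW hcomp hT hs hne N
  obtain ⟨i0, i1, i2⟩ := hP.integrable_terms hs hε
  set W := ricW a b ρ s T with hW
  have hint : (interior K).Nonempty := ⟨s, hs⟩
  have hKm : MeasurableSet (Kᶜ : Set (ℝ × ℝ)) := hcomp.isClosed.measurableSet.compl
  have hwt : Continuous (wt ε s) := by
    unfold wt
    refine continuous_const.div (by fun_prop) fun x => ?_
    positivity
  have hwt0 : ∀ x, 0 < wt ε s x := fun x => by unfold wt; positivity
  have hlow : ∀ N z, 0 < z.2 → -zY0 a b ρ s z ≤ W N (phi a b z) := by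
    intro N z hz
    cases N with
    | zero => rw [hW, hP.ricW_zero hcomp z hz]
    | succ N =>
      rw [hW, hP.ricW_succ hcomp hT N z hz]
      have := hpos N z hz
      have : 0 ≤ zk a b ρ s z ^ 2 / (zY1 a b ρ s z - ricW a b ρ s T N (psi a b z)) := by
        positivity
      linarith
  have hFc : ∀ N, ContinuousOn (fun x => wt ε s x * W N x) Kᶜ := fun N =>
    hwt.continuousOn.mul (hcont N)
  have hFm : ∀ N, AEStronglyMeasurable (fun x => wt ε s x * W N x) (volume.restrict Kᶜ) :=
    fun N => (hFc N).aestronglyMeasurable hKm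
  -- the positive part is controlled through `psi`, the negative part through `phi`
  have hFi : ∀ N, IntegrableOn (fun x => wt ε s x * W N x) Kᶜ := by
    intro N
    have p1 : IntegrableOn (fun x => max (wt ε s x * W N x) 0) Kᶜ := by
      rw [hP.integrable_psi hcomp hint]
      refine Integrable.mono i1 ?_ ?_
      · refine ContinuousOn.aestronglyMeasurable ?_ measurableSet_Dom
        refine continuousOn_snd.mul (ContinuousOn.sup ?_ continuousOn_const)
        exact (hFc N).comp hP.contDiff_psi.continuous.continuousOn
          fun z hz => hP.psi_notMem z (Dom_pos hz)
      · rw [ae_restrict_iff' measurableSet_Dom]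
        refine Filter.Eventually.of_forall fun z hz => ?_
        have hz := Dom_pos hz
        rw [norm_mul, norm_mul]
        gcongr
        rw [Real.norm_eq_abs, Real.norm_eq_abs, abs_of_nonneg (le_max_right _ _)]
        refine max_le (le_trans ?_ (le_abs_self _)) (abs_nonneg _)
        rw [wt_psi]
        have h1 := hpos N z hz
        have h2 : (0:ℝ) ≤ 1 / (1 + ε * zq1 a b s z) := by unfold zq1; positivity
        exact mul_le_mul_of_nonneg_left (by rw [hW]; linarith) h2
    have p2 : IntegrableOn (fun x => max (-(wt ε s x * W N x)) 0) Kᶜ := by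
      rw [hP.integrable_phi hcomp hT]
      refine Integrable.mono i0 ?_ ?_
      · refine ContinuousOn.aestronglyMeasurable ?_ measurableSet_Dom
        refine continuousOn_snd.mul (ContinuousOn.sup ?_ continuousOn_const)
        exact (hFc N).neg.comp hP.contDiff_phi.continuous.continuousOn
          fun z hz => hP.phi_notMem z (Dom_pos hz)
      · rw [ae_restrict_iff' measurableSet_Dom]
        refine Filter.Eventually.of_forall fun z hz => ?_
        have hz := Dom_pos hz
        rw [norm_mul, norm_mul]
        gcongr
        rw [Real.norm_eq_abs, Real.norm_eq_abs, abs_of_nonneg (le_max_right _ _)]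
        refine max_le (le_trans ?_ (le_abs_self _)) (abs_nonneg _)
        rw [wt_phi, ← mul_neg]
        have h1 := hlow N z hz
        have h2 : (0:ℝ) ≤ 1 / (1 + ε * zq0 a b s z) := by unfold zq0; positivity
        exact mul_le_mul_of_nonneg_left (by linarith) h2
    have := p1.sub p2
    refine this.congr (Filter.Eventually.of_forall fun x => ?_)
    simp only [Pi.sub_apply]
    rcases le_total (wt ε s x * W N x) 0 with h | h
    · rw [max_eq_right h, max_eq_left (by linarith)]; ring
    · rw [max_eq_left h, max_eq_right (by linarith)]; ring
  -- `c` is bounded above by `M`, but each step of the recursion increases it by at least `-I`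
  set c : ℕ → ℝ := fun N => ∫ x in Kᶜ, wt ε s x * W N x with hc
  set M := ∫ z in Dom, z.2 * (1 / (1 + ε * zq1 a b s z) * zY1 a b ρ s z) with hM
  set I := ∫ z in Dom, jInt a b ρ s ε z with hI
  have hjI : IntegrableOn (jInt a b ρ s ε) Dom := by
    refine ((i0.add i1).sub i2).congr (Filter.Eventually.of_forall fun z => ?_)
    simp only [Pi.sub_apply, Pi.add_apply, jInt]; ring
  have hup : ∀ N, c N ≤ M := by
    intro N
    simp only [hc]
    rw [hP.integral_psi hcomp hint]
    refine setIntegral_mono_on ((hP.integrable_psi hcomp hint _).1 (hFi N)) i1 measurableSet_Dom ?_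
    intro z hz
    have hz := Dom_pos hz
    rw [wt_psi]
    have h1 := hpos N z hz
    have h2 : (0:ℝ) ≤ 1 / (1 + ε * zq1 a b s z) := by unfold zq1; positivity
    refine mul_le_mul_of_nonneg_left (mul_le_mul_of_nonneg_left ?_ h2) hz.le
    rw [hW]; linarith
  have hstep : ∀ N, c N - I ≤ c (N + 1) := by
    intro N
    simp only [hc]
    rw [hP.integral_psi hcomp hint, hP.integral_phi hcomp hT (fun x => wt ε s x * W (N + 1) x), hI,
      ← integral_sub ((hP.integrable_psi hcomp hint _).1 (hFi N)) hjI]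
    refine setIntegral_mono_on (((hP.integrable_psi hcomp hint _).1 (hFi N)).sub hjI)
      ((hP.integrable_phi hcomp hT _).1 (hFi (N + 1))) measurableSet_Dom ?_
    intro z hz
    have hz := Dom_pos hz
    have hk := rk_pos (hP.H_pos hs z.1) (hP.pos z.1) hz
    have hA := hpos N z hz
    rw [wt_psi, wt_phi, jInt, hW, hP.ricW_succ hcomp hT N z hz]
    set A := zY1 a b ρ s z - ricW a b ρ s T N (psi a b z) with hAd
    have hw : ricW a b ρ s T N (psi a b z) = zY1 a b ρ s z - A := by rw [hAd]; ring
    rw [hw, ← mul_sub]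
    refine mul_le_mul_of_nonneg_left ?_ hz.le
    have h3 : 0 < zk a b ρ s z := hk
    have := amgm_weight (q0 := zq0 a b s z) (q1 := zq1 a b s z) (P := zP a b s z) hε
      (by unfold zq0; positivity) (by unfold zq1; positivity)
      (by unfold zq0 zq1 zP; ring) h3 hA
    linarith
  have hlin : ∀ N : ℕ, c 0 - N * I ≤ c N := by
    intro N
    induction N with
    | zero => simp
    | succ N ih => have := hstep N; push_cast; linarith
  by_contra! hneg
  obtain ⟨N, hNl⟩ := exists_nat_gt ((M - c 0) / (-I))
  rw [div_lt_iff₀ (by linarith)] at hNl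
  have := hlin N
  have := hup N
  linarith

end NormalParam

/-! ### The limit of vanishing weight parameter -/

/-- The function `rY` differs from `rk` by `O (1 / t ^ 2)`. -/
theorem rY_sub_bound {m B : ℝ} (hm : 0 < m) (hB : 1 ≤ B) :
    ∃ C : ℝ, 0 < C ∧ ∀ h g r t : ℝ, 0 < t → Bd m B h g r →
      |rY h g r t - rk h r t| * (1 + t ^ 2) ≤ C := by
  obtain ⟨c, hc, hden⟩ := den_bounds hm hB
  refine ⟨10 * B ^ 3 / (2 * m * c ^ 2), by positivity, fun h g r t ht H => ?_⟩
  obtain ⟨d1, d2⟩ := hden h g r t H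
  obtain ⟨h1, h2, h3, h4, h5⟩ := H
  have hh : 0 < h := by linarith
  have hr : 0 < r := by linarith
  have hD : 0 < h * r + t ^ 2 := by positivity
  have hq : 0 < h ^ 2 + (g - t) ^ 2 := by positivity
  have e0 : rY h g r t - rk h r t =
      (2 * r * h * (t - g) + 2 * t * (g * t - g ^ 2 - h ^ 2)) /
        (2 * (h * r + t ^ 2) * h * (h ^ 2 + (g - t) ^ 2)) := by
    rw [rY, rk]; field_simp; ring
  have hB0 : 0 < B := by linarith
  have hB2 : B ^ 2 ≤ B ^ 3 := pow_le_pow_right₀ hB (by norm_num)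
  have hB1 : B ≤ B ^ 2 := by nlinarith
  have hω : 1 ≤ 1 + t ^ 2 := by nlinarith
  have htω : t ≤ 1 + t ^ 2 := by nlinarith
  have hnum : |2 * r * h * (t - g) + 2 * t * (g * t - g ^ 2 - h ^ 2)| ≤
      10 * B ^ 3 * (1 + t ^ 2) := by
    have hg2 : g ^ 2 ≤ B ^ 2 := sq_le_sq' (abs_le.1 h3).1 (abs_le.1 h3).2
    have hh2 : h ^ 2 ≤ B ^ 2 := by nlinarith
    have a1 : |2 * r * h * (t - g)| ≤ 2 * B * B * (t + B) := by
      rw [abs_mul, abs_of_pos (by positivity)]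
      gcongr
      refine (abs_sub _ _).trans ?_
      rw [abs_of_pos ht]; linarith
    have a2 : |2 * t * (g * t - g ^ 2 - h ^ 2)| ≤ 2 * t * (B * t + 2 * B ^ 2) := by
      rw [abs_mul, abs_of_pos (by positivity)]
      gcongr
      have := abs_le.1 h3
      rw [abs_le]
      constructor <;> nlinarith
    refine (abs_add_le _ _).trans ((add_le_add a1 a2).trans ?_)
    have b1 : B ^ 2 * t ≤ B ^ 3 * (1 + t ^ 2) := by gcongr
    have b2 : B ^ 3 * 1 ≤ B ^ 3 * (1 + t ^ 2) := by gcongr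
    have b3 : B * t ^ 2 ≤ B ^ 3 * (1 + t ^ 2) := by
      gcongr
      · linarith
      · linarith
    nlinarith
  rw [e0, abs_div, abs_of_pos (show 0 < 2 * (h * r + t ^ 2) * h * (h ^ 2 + (g - t) ^ 2) by
    positivity), div_mul_eq_mul_div, div_le_div_iff₀ (by positivity) (by positivity)]
  calc _ ≤ (10 * B ^ 3 * (1 + t ^ 2)) * (1 + t ^ 2) * (2 * m * c ^ 2) := by gcongr
    _ = 10 * B ^ 3 * (2 * (c * (1 + t ^ 2)) * m * (c * (1 + t ^ 2))) := by ring
    _ ≤ _ := by gcongr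

/-- The limiting integrand, in a form that can be integrated explicitly in `t`. -/
theorem limit_eq {h g r t : ℝ} (hh : 0 < h) (hr : 0 < r) :
    t * (rY h g r t + rY h (-g) r t - 2 * rk h r t) =
      2 / h * (h * r / (t ^ 2 + h * r) - ((h ^ 2 - g ^ 2) * t ^ 2 + (h ^ 2 + g ^ 2) ^ 2) /
        ((h ^ 2 + (g - t) ^ 2) * (h ^ 2 + (g + t) ^ 2))) := by
  have hD : 0 < h * r + t ^ 2 := by positivity
  have hD' : 0 < t ^ 2 + h * r := by positivity
  have hq : 0 < h ^ 2 + (g - t) ^ 2 := by positivity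
  have hq1 : 0 < h ^ 2 + (g + t) ^ 2 := by positivity
  have hq' : h ^ 2 + (-g - t) ^ 2 = h ^ 2 + (g + t) ^ 2 := by ring
  rw [rY, rY, rk, hq', add_comm (t ^ 2) (h * r)]
  field_simp
  ring

/-- The limiting integrand is `O (1 / t ^ 2)`, uniformly in the remaining data. -/
theorem limit_bound {m B : ℝ} (hm : 0 < m) (hB : 1 ≤ B) :
    ∃ C : ℝ, 0 < C ∧ ∀ h g r t : ℝ, 0 < t → Bd m B h g r →
      |t * (rY h g r t + rY h (-g) r t - 2 * rk h r t)| * (1 + t ^ 2) ≤ C := by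
  obtain ⟨c, hc, hden⟩ := den_bounds hm hB
  refine ⟨2 / m * (B ^ 2 / c + 6 * B ^ 4 / c ^ 2), by positivity, fun h g r t ht H => ?_⟩
  obtain ⟨d1, d2⟩ := hden h g r t H
  have d3 := (hden h (-g) r t H.neg).2
  have hq' : h ^ 2 + (-g - t) ^ 2 = h ^ 2 + (g + t) ^ 2 := by ring
  rw [hq'] at d3
  obtain ⟨h1, h2, h3, h4, h5⟩ := H
  have hh : 0 < h := by linarith
  have hr : 0 < r := by linarith
  rw [limit_eq hh hr, abs_mul, abs_of_pos (by positivity), mul_assoc]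
  have hω : 1 ≤ 1 + t ^ 2 := by nlinarith
  have hB0 : 0 < B := by linarith
  have hg2 : g ^ 2 ≤ B ^ 2 := sq_le_sq' (abs_le.1 h3).1 (abs_le.1 h3).2
  have hh2 : h ^ 2 ≤ B ^ 2 := by nlinarith
  refine mul_le_mul (div_le_div_of_nonneg_left (by norm_num) hm h1) ?_ (by positivity) (by positivity)
  refine (mul_le_mul_of_nonneg_right (abs_sub _ _) (by positivity)).trans ?_
  rw [add_mul]
  refine add_le_add ?_ ?_
  · rw [abs_of_pos (by positivity), div_mul_eq_mul_div, add_comm (t ^ 2),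
      div_le_div_iff₀ (by positivity) hc]
    calc h * r * (1 + t ^ 2) * c = (h * r) * (c * (1 + t ^ 2)) := by ring
      _ ≤ (B * B) * (h * r + t ^ 2) := by gcongr
      _ = _ := by ring
  · have hN : |(h ^ 2 - g ^ 2) * t ^ 2 + (h ^ 2 + g ^ 2) ^ 2| ≤ 6 * B ^ 4 * (1 + t ^ 2) := by
      have b0 : 1 ≤ B ^ 2 := one_le_pow₀ hB
      have b1 : B ^ 2 ≤ B ^ 4 := pow_le_pow_right₀ hB (by norm_num)
      have a1 : |(h ^ 2 - g ^ 2) * t ^ 2| ≤ B ^ 4 * t ^ 2 := by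
        rw [abs_mul, abs_of_nonneg (sq_nonneg t)]
        gcongr
        rw [abs_le]; constructor <;> nlinarith [sq_nonneg g, sq_nonneg h]
      have a2 : |(h ^ 2 + g ^ 2) ^ 2| ≤ 4 * B ^ 4 := by
        rw [abs_of_nonneg (by positivity)]
        calc (h ^ 2 + g ^ 2) ^ 2 ≤ (B ^ 2 + B ^ 2) ^ 2 := by gcongr
          _ = _ := by ring
      refine (abs_add_le _ _).trans ((add_le_add a1 a2).trans ?_)
      nlinarith [show 0 ≤ B ^ 4 * t ^ 2 by positivity, show 0 ≤ B ^ 4 by positivity]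
    rw [abs_div, abs_of_pos (show 0 < (h ^ 2 + (g - t) ^ 2) * (h ^ 2 + (g + t) ^ 2) by positivity),
      div_mul_eq_mul_div, div_le_div_iff₀ (by positivity) (by positivity)]
    calc _ ≤ (6 * B ^ 4 * (1 + t ^ 2)) * (1 + t ^ 2) * c ^ 2 := by gcongr
      _ = 6 * B ^ 4 * ((c * (1 + t ^ 2)) * (c * (1 + t ^ 2))) := by ring
      _ ≤ _ := by gcongr

/-- A bound on the weighted integrand that is uniform in the weight parameter `ε`. -/
theorem weighted_bound {c C1 C2 C3 B ε q0 q1 P g t Y0 Y1 k : ℝ} (hc : 0 < c) (hε : 0 < ε)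
    (ht : 0 < t) (hC1 : 0 < C1) (hB : 0 < B) (hg : |g| ≤ B)
    (hq0 : q0 = P - 2 * g * t) (hq1 : q1 = P + 2 * g * t)
    (d0 : 0 ≤ q0) (d1 : 0 ≤ q1) (dP : c * (1 + t ^ 2) ≤ P)
    (b0 : |t * Y0| ≤ C1) (b1 : |t * Y1| ≤ C1)
    (s0 : |Y0 - k| * (1 + t ^ 2) ≤ C2) (s1 : |Y1 - k| * (1 + t ^ 2) ≤ C2)
    (l : |t * (Y0 + Y1 - 2 * k)| * (1 + t ^ 2) ≤ C3) :
    |t * (1 / (1 + ε * q0) * Y0 + 1 / (1 + ε * q1) * Y1 - 2 * k / (1 + ε * P))| ≤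
      (C3 + 4 * B * C2 / c + 8 * B ^ 2 * C1 / c ^ 2) * (1 + t ^ 2)⁻¹ := by
  have hω : 0 < 1 + t ^ 2 := by positivity
  have hP0 : 0 < P := lt_of_lt_of_le (by positivity) dP
  have u0 : 0 < 1 + ε * q0 := by positivity
  have u1 : 0 < 1 + ε * q1 := by positivity
  have uP : 0 < 1 + ε * P := by positivity
  set V0 := 1 / (1 + ε * q0) with hV0
  set V1 := 1 / (1 + ε * q1) with hV1
  set W := 1 / (1 + ε * P) with hW
  have v0 : 0 < V0 := by positivity
  have v1 : 0 < V1 := by positivity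
  have w : 0 < W := by positivity
  have v0' : V0 ≤ 1 := by rw [hV0, div_le_one u0]; nlinarith
  have v1' : V1 ≤ 1 := by rw [hV1, div_le_one u1]; nlinarith
  have w' : W ≤ 1 := by rw [hW, div_le_one uP]; nlinarith
  have ew : ε * W ≤ 1 / (c * (1 + t ^ 2)) := by
    rw [hW, mul_one_div, div_le_div_iff₀ uP (by positivity)]
    nlinarith
  have E0 : V0 - W = 2 * ε * g * t * V0 * W := by
    rw [hV0, hW]; field_simp; rw [hq0]; ring
  have E1 : V1 - W = -(2 * ε * g * t * V1 * W) := by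
    rw [hV1, hW]; field_simp; rw [hq1]; ring
  have key : t * (V0 * Y0 + V1 * Y1 - 2 * k / (1 + ε * P)) =
      W * (t * (Y0 + Y1 - 2 * k)) + 2 * g * (ε * W) * W * (t ^ 2 * ((Y0 - k) - (Y1 - k))) +
        4 * g ^ 2 * (ε * W) ^ 2 * t ^ 2 * (V0 * (t * Y0) + V1 * (t * Y1)) := by
    have e1 : 2 * k / (1 + ε * P) = 2 * k * W := by rw [hW]; ring
    rw [e1]
    linear_combination (t * Y0 + 2 * ε * g * t * W * t * Y0) * E0 +
      (t * Y1 - 2 * ε * g * t * W * t * Y1) * E1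
  rw [key, ← div_eq_mul_inv, le_div_iff₀ hω]
  have T1 : |W * (t * (Y0 + Y1 - 2 * k))| * (1 + t ^ 2) ≤ C3 := by
    rw [abs_mul, abs_of_pos w, mul_assoc]
    exact (mul_le_of_le_one_left (by positivity) w').trans l
  have T2 : |2 * g * (ε * W) * W * (t ^ 2 * ((Y0 - k) - (Y1 - k)))| * (1 + t ^ 2) ≤
      4 * B * C2 / c := by
    have f1 : |t ^ 2 * ((Y0 - k) - (Y1 - k))| ≤ 2 * C2 := by
      rw [abs_mul, abs_of_nonneg (sq_nonneg t)]
      have := abs_sub (Y0 - k) (Y1 - k)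
      have h0 := abs_nonneg (Y0 - k)
      have h1 := abs_nonneg (Y1 - k)
      nlinarith [sq_nonneg t]
    have f2 : |2 * g * (ε * W) * W| ≤ 2 * B * (1 / (c * (1 + t ^ 2))) := by
      rw [abs_mul, abs_mul, abs_mul, abs_of_pos w, abs_of_pos (show 0 < ε * W by positivity),
        abs_of_pos (show (0:ℝ) < 2 by norm_num)]
      calc 2 * |g| * (ε * W) * W ≤ 2 * B * (1 / (c * (1 + t ^ 2))) * 1 := by gcongr
        _ = _ := by ring
    rw [abs_mul]
    calc _ ≤ 2 * B * (1 / (c * (1 + t ^ 2))) * (2 * C2) * (1 + t ^ 2) := by gcongr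
      _ = _ := by field_simp; ring
  have T3 : |4 * g ^ 2 * (ε * W) ^ 2 * t ^ 2 * (V0 * (t * Y0) + V1 * (t * Y1))| * (1 + t ^ 2) ≤
      8 * B ^ 2 * C1 / c ^ 2 := by
    have f1 : |V0 * (t * Y0) + V1 * (t * Y1)| ≤ 2 * C1 := by
      refine (abs_add_le _ _).trans ?_
      rw [abs_mul, abs_mul V1, abs_of_pos v0, abs_of_pos v1]
      have g0 := mul_le_mul v0' b0 (abs_nonneg _) zero_le_one
      have g1 := mul_le_mul v1' b1 (abs_nonneg _) zero_le_one
      linarith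
    have g2 : g ^ 2 ≤ B ^ 2 := sq_le_sq' (abs_le.1 hg).1 (abs_le.1 hg).2
    have f2 : |4 * g ^ 2 * (ε * W) ^ 2 * t ^ 2| ≤
        4 * B ^ 2 * (1 / (c * (1 + t ^ 2))) ^ 2 * (1 + t ^ 2) := by
      rw [abs_of_nonneg (by positivity)]
      gcongr
      linarith
    rw [abs_mul]
    calc _ ≤ 4 * B ^ 2 * (1 / (c * (1 + t ^ 2))) ^ 2 * (1 + t ^ 2) * (2 * C1) * (1 + t ^ 2) := by
          gcongr
      _ = _ := by field_simp; ring
  have A1 := abs_add_le (W * (t * (Y0 + Y1 - 2 * k)) +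
    2 * g * (ε * W) * W * (t ^ 2 * ((Y0 - k) - (Y1 - k))))
    (4 * g ^ 2 * (ε * W) ^ 2 * t ^ 2 * (V0 * (t * Y0) + V1 * (t * Y1)))
  have A2 := abs_add_le (W * (t * (Y0 + Y1 - 2 * k)))
    (2 * g * (ε * W) * W * (t ^ 2 * ((Y0 - k) - (Y1 - k))))
  calc _ ≤ (|W * (t * (Y0 + Y1 - 2 * k))| + |2 * g * (ε * W) * W * (t ^ 2 * ((Y0 - k) - (Y1 - k)))|
      + |4 * g ^ 2 * (ε * W) ^ 2 * t ^ 2 * (V0 * (t * Y0) + V1 * (t * Y1))|) * (1 + t ^ 2) := by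
        gcongr; linarith
    _ ≤ _ := by linarith

/-- The `t`-integral of the limiting integrand. -/
theorem integral_limit {h g r : ℝ} (hh : 0 < h) (hr : 0 < r)
    (hi : IntegrableOn (fun t => t * (rY h g r t + rY h (-g) r t - 2 * rk h r t)) (Ioi 0)) :
    ∫ t in Ioi (0:ℝ), t * (rY h g r t + rY h (-g) r t - 2 * rk h r t) =
      π * (√(r / h) - 1) := by
  have hc : 0 < h * r := by positivity
  set w := √(h * r) with hw
  have hw0 : 0 < w := sqrt_pos.2 hc
  have hw2 : w ^ 2 = h * r := sq_sqrt hc.le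
  -- an explicit antiderivative, by partial fractions in `limit_eq`
  set F : ℝ → ℝ := fun t => 2 / h * (w * arctan (t / w) -
    (h / 2 * (arctan ((t - g) / h) + arctan ((t + g) / h)) +
      g / 4 * (log (h ^ 2 + (g + t) ^ 2) - log (h ^ 2 + (g - t) ^ 2)))) with hF
  have hd : ∀ t ∈ Ici (0:ℝ), HasDerivAt F (t * (rY h g r t + rY h (-g) r t - 2 * rk h r t)) t := by
    intro t _
    have q0 : 0 < h ^ 2 + (g - t) ^ 2 := by positivity
    have q1 : 0 < h ^ 2 + (g + t) ^ 2 := by positivity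
    have d1 := ((hasDerivAt_id t).div_const w).arctan
    have d2 := (((hasDerivAt_id t).sub_const g).div_const h).arctan
    have d3 := (((hasDerivAt_id t).add_const g).div_const h).arctan
    have d4 := ((((hasDerivAt_id t).const_add g).pow 2).const_add (h ^ 2)).log q1.ne'
    have d5 := ((((hasDerivAt_id t).const_sub g).pow 2).const_add (h ^ 2)).log q0.ne'
    have := ((d1.const_mul w).sub (((d2.add d3).const_mul (h / 2)).add
      ((d4.sub d5).const_mul (g / 4)))).const_mul (2 / h)
    refine this.congr_deriv ?_
    rw [limit_eq hh hr, ← hw2]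
    simp only [id, Nat.cast_ofNat, Nat.reduceSub, pow_one, Pi.pow_apply]
    have p1 : 0 < t ^ 2 + w ^ 2 := by positivity
    have p2 : (1 + (t / w) ^ 2) = (t ^ 2 + w ^ 2) / w ^ 2 := by field_simp; ring
    have p3 : (1 + ((t - g) / h) ^ 2) = (h ^ 2 + (g - t) ^ 2) / h ^ 2 := by field_simp; ring
    have p4 : (1 + ((t + g) / h) ^ 2) = (h ^ 2 + (g + t) ^ 2) / h ^ 2 := by field_simp; ring
    rw [p2, p3, p4]
    congr 1
    field_simp
    ring
  have hl : Filter.Tendsto F Filter.atTop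
      (nhds (2 / h * (w * (π / 2) - (h / 2 * (π / 2 + π / 2) + g / 4 * 0)))) := by
    have at1 : ∀ u v : ℝ, 0 < v → Filter.Tendsto (fun t => arctan ((t + u) / v)) Filter.atTop
        (nhds (π / 2)) := fun u v hv =>
      ((tendsto_arctan_atTop.mono_right nhdsWithin_le_nhds).comp
        ((Filter.tendsto_atTop_add_const_right _ u Filter.tendsto_id).atTop_div_const hv))
    have l1 : Filter.Tendsto (fun t => arctan (t / w)) Filter.atTop (nhds (π / 2)) := by
      simpa using at1 0 w hw0
    have l2 := at1 (-g) h hh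
    have l3 := at1 g h hh
    have l4 : Filter.Tendsto (fun t => log (h ^ 2 + (g + t) ^ 2) - log (h ^ 2 + (g - t) ^ 2))
        Filter.atTop (nhds 0) := by
      have r1 : ∀ t : ℝ, log (h ^ 2 + (g + t) ^ 2) - log (h ^ 2 + (g - t) ^ 2) =
          log (1 + 4 * g * (t / (h ^ 2 + (g - t) ^ 2))) := by
        intro t
        have q0 : 0 < h ^ 2 + (g - t) ^ 2 := by positivity
        have q1 : 0 < h ^ 2 + (g + t) ^ 2 := by positivity
        rw [← log_div q1.ne' q0.ne']
        congr 1
        field_simp; ring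
      simp only [r1]
      have z : Filter.Tendsto (fun t => t / (h ^ 2 + (g - t) ^ 2)) Filter.atTop (nhds 0) := by
        have hi0 : Filter.Tendsto (fun t : ℝ => t⁻¹) Filter.atTop (nhds 0) :=
          tendsto_inv_atTop_zero
        have den : Filter.Tendsto (fun t : ℝ => h ^ 2 * t⁻¹ ^ 2 + (g * t⁻¹ - 1) ^ 2) Filter.atTop
            (nhds (h ^ 2 * 0 ^ 2 + (g * 0 - 1) ^ 2)) :=
          ((hi0.pow 2).const_mul _).add (((hi0.const_mul g).sub_const 1).pow 2)
        have := hi0.div den (by norm_num)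
        rw [zero_div] at this
        refine this.congr' ?_
        filter_upwards [Filter.eventually_gt_atTop 0] with t ht
        have q0 : 0 < h ^ 2 + (g - t) ^ 2 := by positivity
        have e : h ^ 2 * t⁻¹ ^ 2 + (g * t⁻¹ - 1) ^ 2 = (h ^ 2 + (g - t) ^ 2) / t ^ 2 := by
          field_simp
        simp only [Pi.div_apply]
        rw [e]; field_simp
      have := (((z.const_mul (4 * g)).const_add 1)).log (by norm_num)
      simpa using this
    simp only [← sub_eq_add_neg] at l2
    exact ((l1.const_mul w).sub (((l2.add l3).const_mul (h / 2)).add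
      (l4.const_mul (g / 4)))).const_mul (2 / h)
  rw [integral_Ioi_of_hasDerivAt_of_tendsto' hd hi hl]
  have F0 : F 0 = 0 := by
    simp only [hF, zero_div, arctan_zero, zero_sub, zero_add, add_zero, sub_zero, neg_div,
      arctan_neg]
    ring
  rw [F0]
  have hs : √(r / h) = w / h := by
    rw [hw, sqrt_eq_iff_mul_self_eq (by positivity) (by positivity), ← sq, div_pow, sq_sqrt hc.le]
    field_simp
  rw [hs]
  field_simp
  ring

namespace NormalParam

variable {K : Set (ℝ × ℝ)} {a b ρ : ℝ → ℝ} {T : ℝ × ℝ → ℝ × ℝ} {s : ℝ × ℝ}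

/-- In the absence of conjugate points, `∫ √(ρ / h) ≥ 2π`: the limit `ε → 0` of the weighted
inequality, integrated along the tangent lines. -/
theorem integral_sqrt_ge (hP : NormalParam K a b ρ) (hcomp : IsCompact K)
    (hT : IsOuterBilliard K T) (hs : s ∈ interior K)
    (hN : ∀ x, x ∉ K → ∀ n : ℕ, 1 ≤ n → ∀ c : ℝ, c ≠ 0 →
      fderiv ℝ (T^[n]) x (x - s) ≠ c • (T^[n] x - s)) :
    2 * π ≤ ∫ θ in Ioc 0 (2 * π), √(ρ θ / supH a b s θ) := by
  obtain ⟨m, B, hm, hB, hbd⟩ := hP.exists_Bd hs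
  obtain ⟨c, hc, hden⟩ := den_bounds hm hB
  obtain ⟨C1, hC1, hY⟩ := rY_bound hm hB
  obtain ⟨C2, hC2, hS⟩ := rY_sub_bound hm hB
  obtain ⟨C3, hC3, hL⟩ := limit_bound hm hB
  have hB0 : 0 < B := by linarith
  set f : ℝ × ℝ → ℝ := fun z => z.2 * (zY0 a b ρ s z + zY1 a b ρ s z - 2 * zk a b ρ s z) with hf
  set C := C3 + 4 * B * C2 / c + 8 * B ^ 2 * C1 / c ^ 2 with hCd
  have hbound : ∀ ε : ℝ, 0 < ε → ∀ z : ℝ × ℝ, 0 < z.2 →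
      |jInt a b ρ s ε z| ≤ C * (1 + z.2 ^ 2)⁻¹ := by
    intro ε hε z hz
    have bd := hbd z.1
    refine weighted_bound (g := supG a b s z.1) hc hε hz hC1 hB0 bd.2.2.1 ?_ ?_ ?_ ?_ ?_
      (hY _ _ _ _ hz bd) (hY _ _ _ _ hz bd.neg) (hS _ _ _ _ hz bd) (hS _ _ _ _ hz bd.neg)
      (hL _ _ _ _ hz bd)
    · rw [zq0, zP]; ring
    · rw [zq1, zP]; ring
    · unfold zq0; positivity
    · unfold zq1; positivity
    · have e1 := (hden _ _ _ z.2 bd).2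
      have e2 := (hden _ _ _ z.2 bd.neg).2
      unfold zP; nlinarith
  have hfb : ∀ z : ℝ × ℝ, 0 < z.2 → |f z| ≤ C3 * (1 + z.2 ^ 2)⁻¹ := by
    intro z hz
    have := hL _ _ _ _ hz (hbd z.1)
    rw [← div_eq_mul_inv, le_div_iff₀ (by positivity)]
    exact this
  have hfc : ContinuousOn f {z | 0 < z.2} :=
    continuousOn_snd.mul (((hP.contOn_zY0 hs).add (hP.contOn_zY1 hs)).sub
      (continuousOn_const.mul (hP.contOn_zk hs)))
  have hfi : IntegrableOn f Dom := integrableOn_Dom hfc C3 hfb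
  have hdom : IntegrableOn (fun z : ℝ × ℝ => C * (1 + z.2 ^ 2)⁻¹) Dom := by
    refine integrableOn_Dom ?_ |C| fun z _ => ?_
    · refine Continuous.continuousOn (continuous_const.mul (Continuous.inv₀ (by fun_prop) ?_))
      intro z; positivity
    · rw [abs_mul, abs_of_pos (show 0 < (1 + z.2 ^ 2)⁻¹ by positivity)]
  have hlim : Filter.Tendsto (fun ε => ∫ z in Dom, jInt a b ρ s ε z) (nhdsWithin 0 (Ioi 0))
      (nhds (∫ z in Dom, f z)) := by
    refine tendsto_integral_filter_of_dominated_convergence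
      (fun z : ℝ × ℝ => C * (1 + z.2 ^ 2)⁻¹) ?_ ?_ hdom ?_
    · filter_upwards [self_mem_nhdsWithin] with ε hε
      obtain ⟨i0, i1, i2⟩ := hP.integrable_terms hs hε
      refine ((i0.add i1).sub i2).aestronglyMeasurable.congr
        (Filter.Eventually.of_forall fun z => ?_)
      simp only [Pi.sub_apply, Pi.add_apply, jInt]; ring
    · filter_upwards [self_mem_nhdsWithin] with ε hε
      rw [ae_restrict_iff' measurableSet_Dom]
      exact Filter.Eventually.of_forall fun z hz => hbound ε hε z (Dom_pos hz)
    · refine Filter.Eventually.of_forall fun z => ?_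
      have hc : ContinuousAt (fun ε => jInt a b ρ s ε z) 0 := by
        unfold jInt
        fun_prop (disch := simp)
      have h0 : jInt a b ρ s 0 z = f z := by simp [jInt, hf]
      have := hc.tendsto
      rw [h0] at this
      exact this.mono_left nhdsWithin_le_nhds
  have hnn : 0 ≤ ∫ z in Dom, f z := by
    refine ge_of_tendsto hlim ?_
    filter_upwards [self_mem_nhdsWithin] with ε hε
    exact hP.integral_jInt_nonneg hcomp hT hs hN hε
  have hinner : ∀ θ, ∫ t in Ioi (0:ℝ), f (θ, t) = π * (√(ρ θ / supH a b s θ) - 1) := by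
    intro θ
    refine integral_limit (g := supG a b s θ) (hP.H_pos hs θ) (hP.pos θ) ?_
    refine Integrable.mono' ((integrable_inv_one_add_sq.const_mul C3).integrableOn) ?_ ?_
    · refine ContinuousOn.aestronglyMeasurable ?_ measurableSet_Ioi
      exact hfc.comp (f := fun t : ℝ => (θ, t)) (by fun_prop) fun t ht => ht
    · rw [ae_restrict_iff' measurableSet_Ioi]
      exact Filter.Eventually.of_forall fun t ht => hfb (θ, t) ht
  have hfub : ∫ z in Dom, f z = ∫ θ in Ioc 0 (2 * π), ∫ t in Ioi (0:ℝ), f (θ, t) :=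
    setIntegral_prod f hfi
  rw [hfub] at hnn
  simp only [hinner] at hnn
  rw [integral_const_mul, integral_sub] at hnn
  · have : ∫ _ in Ioc 0 (2 * π), (1:ℝ) = 2 * π := by
      simp [pi_pos.le]
    rw [this] at hnn
    have := pi_pos
    by_contra! hlt
    nlinarith
  · have hc : Continuous fun θ => √(ρ θ / supH a b s θ) :=
      (hP.cρ.div (hP.cH s) fun θ => (hP.H_pos hs θ).ne').sqrt
    exact hc.integrableOn_Ioc
  · exact integrableOn_const measure_Ioc_lt_top.ne

end NormalParam

/-! ### A Blaschke–Santaló inequality in the plane -/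

/-- If `u` and `v` vanish at `p` and `v` has a simple zero there, then `u ^ 2 / v` tends to zero. It gives
the boundary values of `u ^ 2 * cot` in Wirtinger's inequality. -/
theorem tendsto_sq_div {u v : ℝ → ℝ} {u' v' p : ℝ} (hu : HasDerivAt u u' p) (hv : HasDerivAt v v' p)
    (u0 : u p = 0) (v0 : v p = 0) (hv' : v' ≠ 0) :
    Filter.Tendsto (fun t => u t ^ 2 / v t) (nhdsWithin p {p}ᶜ) (nhds 0) := by
  have h1 := hasDerivAt_iff_tendsto_slope.1 hu
  have h2 := hasDerivAt_iff_tendsto_slope.1 hv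
  have h3 : Filter.Tendsto u (nhdsWithin p {p}ᶜ) (nhds 0) := by
    have := hu.continuousAt.tendsto
    rw [u0] at this
    exact this.mono_left nhdsWithin_le_nhds
  have := h3.mul (h1.div h2 hv')
  rw [zero_mul] at this
  refine this.congr' ?_
  filter_upwards [self_mem_nhdsWithin] with t ht
  have ht : t - p ≠ 0 := sub_ne_zero.2 ht
  simp only [Pi.div_apply, slope_def_field, u0, v0, sub_zero]
  by_cases hv : v t = 0
  · simp [hv]
  · field_simp

/-- Wirtinger's inequality on an interval of length `π` with Dirichlet boundary conditions. The
integral of `u' ^ 2 - u ^ 2 = (u' - u cot) ^ 2 + (u ^ 2 cot)'` is nonnegative. -/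
theorem wirtinger_dirichlet {u u' : ℝ → ℝ} {x : ℝ} (hu : ∀ t, HasDerivAt u (u' t) t)
    (hc : Continuous u') (h0 : u x = 0) (h1 : u (x + π) = 0) :
    0 ≤ ∫ t in x..x + π, (u' t ^ 2 - u t ^ 2) := by
  have cu : Continuous u := continuous_iff_continuousAt.2 fun t => (hu t).continuousAt
  have cint : Continuous fun t => u' t ^ 2 - u t ^ 2 := by fun_prop
  set w : ℝ → ℝ := fun t => u t ^ 2 / sin (t - x) * cos (t - x) with hw
  set Φ : ℝ → ℝ := fun t => (∫ y in x..t, (u' y ^ 2 - u y ^ 2)) - w t with hΦ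
  have hdsin : ∀ t, HasDerivAt (fun t => sin (t - x)) (cos (t - x)) t := fun t => by
    simpa using ((hasDerivAt_id t).sub_const x).sin
  have hdcos : ∀ t, HasDerivAt (fun t => cos (t - x)) (-sin (t - x)) t := fun t => by
    simpa using ((hasDerivAt_id t).sub_const x).cos
  have hspos : ∀ t ∈ Ioo x (x + π), 0 < sin (t - x) := fun t ht =>
    sin_pos_of_pos_of_lt_pi (by linarith [ht.1]) (by linarith [ht.2])
  have hend : ∀ p, u p = 0 → sin (p - x) = 0 → cos (p - x) ≠ 0 → ContinuousAt w p := by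
    intro p hp hs hcp
    have h1 := tendsto_sq_div (hu p) (hdsin p) hp hs hcp
    have h2 : Filter.Tendsto (fun t => cos (t - x)) (nhdsWithin p {p}ᶜ) (nhds (cos (p - x))) :=
      (hdcos p).continuousAt.tendsto.mono_left nhdsWithin_le_nhds
    have h3 := h1.mul h2
    rw [zero_mul] at h3
    have hwp : w p = 0 := by simp [hw, hp]
    rw [continuousAt_iff_punctured_nhds, hwp]
    exact h3
  have hwd : ∀ t ∈ Ioo x (x + π), HasDerivAt w
      ((2 * u t * u' t * sin (t - x) - u t ^ 2 * cos (t - x)) / sin (t - x) ^ 2 * cos (t - x) +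
        u t ^ 2 / sin (t - x) * -sin (t - x)) t := by
    intro t ht
    have := (((hu t).pow 2).div (hdsin t) (hspos t ht).ne').mul (hdcos t)
    refine this.congr_deriv ?_
    simp only [Pi.pow_apply, Pi.div_apply, Nat.cast_ofNat, Nat.reduceSub, pow_one]
  have hwc : ContinuousOn w (Icc x (x + π)) := by
    intro t ht
    apply ContinuousAt.continuousWithinAt
    rcases ht.1.eq_or_lt with rfl | hl
    · exact hend _ h0 (by simp) (by simp)
    rcases ht.2.eq_or_lt with rfl | hr
    · exact hend _ h1 (by simp) (by simp)
    exact (hwd t ⟨hl, hr⟩).continuousAt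
  have hId : ∀ t, HasDerivAt (fun t => ∫ y in x..t, (u' y ^ 2 - u y ^ 2)) (u' t ^ 2 - u t ^ 2) t :=
    fun t => intervalIntegral.integral_hasDerivAt_right (cint.intervalIntegrable _ _)
      (cint.stronglyMeasurableAtFilter _ _) cint.continuousAt
  have hmono : MonotoneOn Φ (Icc x (x + π)) := by
    refine monotoneOn_of_deriv_nonneg (convex_Icc _ _) ?_ ?_ ?_
    · exact (Continuous.continuousOn
        (continuous_iff_continuousAt.2 fun t => (hId t).continuousAt)).sub hwc
    · rw [interior_Icc]
      intro t ht
      exact ((hId t).sub (hwd t ht)).differentiableAt.differentiableWithinAt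
    · rw [interior_Icc]
      intro t ht
      have hΦd : HasDerivAt Φ _ t := (hId t).sub (hwd t ht)
      rw [hΦd.deriv]
      have hs := hspos t ht
      have : u' t ^ 2 - u t ^ 2 -
          ((2 * u t * u' t * sin (t - x) - u t ^ 2 * cos (t - x)) / sin (t - x) ^ 2 * cos (t - x) +
            u t ^ 2 / sin (t - x) * -sin (t - x)) =
          (u' t - u t * cos (t - x) / sin (t - x)) ^ 2 := by
        field_simp
        ring
      rw [this]; positivity
  have hpi := pi_pos
  have := hmono ⟨le_rfl, by linarith⟩ ⟨by linarith, le_rfl⟩ (by linarith : x ≤ x + π)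
  simpa [hΦ, hw, h0, h1] using this

/-- Wirtinger's inequality for antiperiodic functions; subtracting a multiple of `cos (t - x)` reduces
it to Dirichlet boundary conditions. -/
theorem wirtinger_antiper {f f' : ℝ → ℝ} {x : ℝ} (hf : ∀ t, HasDerivAt f (f' t) t)
    (hc : Continuous f') (h1 : f (x + π) = -f x) :
    0 ≤ ∫ t in x..x + π, (f' t ^ 2 - f t ^ 2) := by
  have cf : Continuous f := continuous_iff_continuousAt.2 fun t => (hf t).continuousAt
  have hdsin : ∀ t, HasDerivAt (fun t => sin (t - x)) (cos (t - x)) t := fun t => by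
    simpa using ((hasDerivAt_id t).sub_const x).sin
  have hdcos : ∀ t, HasDerivAt (fun t => cos (t - x)) (-sin (t - x)) t := fun t => by
    simpa using ((hasDerivAt_id t).sub_const x).cos
  set u : ℝ → ℝ := fun t => f t - f x * cos (t - x) with hu
  set u' : ℝ → ℝ := fun t => f' t + f x * sin (t - x) with hu'
  have hd : ∀ t, HasDerivAt u (u' t) t := fun t =>
    ((hf t).sub ((hdcos t).const_mul (f x))).congr_deriv (by simp only [hu']; ring)
  have cu' : Continuous u' := by simp only [hu']; fun_prop
  have cu : Continuous u := continuous_iff_continuousAt.2 fun t => (hd t).continuousAt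
  have u0 : u x = 0 := by simp [hu]
  have u1 : u (x + π) = 0 := by simp [hu, h1]
  have key := wirtinger_dirichlet hd cu' u0 u1
  -- the difference of the two integrands is an exact derivative vanishing at both ends
  have hex : ∀ t, HasDerivAt (fun t => -2 * f x * u t * sin (t - x) -
      f x ^ 2 * sin (t - x) * cos (t - x))
      ((f' t ^ 2 - f t ^ 2) - (u' t ^ 2 - u t ^ 2)) t := by
    intro t
    refine (((hd t).const_mul (-2 * f x)).mul (hdsin t)).sub
      (((hdsin t).const_mul (f x ^ 2)).mul (hdcos t)) |>.congr_deriv ?_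
    simp only [hu, hu']
    ring
  have hint := intervalIntegral.integral_eq_sub_of_hasDerivAt (a := x) (b := x + π)
    (fun t _ => hex t) (Continuous.intervalIntegrable (by fun_prop) _ _)
  rw [intervalIntegral.integral_sub (Continuous.intervalIntegrable (by fun_prop) _ _)
    (Continuous.intervalIntegrable (by fun_prop) _ _)] at hint
  simp at hint
  linarith

/-- The one-dimensional Blaschke–Santaló inequality on a half turn. With `σ` a multiple of `∫ h⁻²`
normalized to total increase `π`, it is Wirtinger's inequality for the antiperiodic functions
`h cos σ` and `h sin σ`. -/
theorem half_ineq {h g r : ℝ → ℝ} {x : ℝ} (hh : ∀ t, HasDerivAt h (g t) t)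
    (hg : ∀ t, HasDerivAt g (r t - h t) t) (hr : Continuous r) (hpos : ∀ t, 0 < h t)
    (h1 : h (x + π) = h x) (g1 : g (x + π) = g x) :
    (∫ t in x..x + π, h t * r t) * (∫ t in x..x + π, (h t ^ 2)⁻¹) ≤ π ^ 2 := by
  have ch : Continuous h := continuous_iff_continuousAt.2 fun t => (hh t).continuousAt
  have cg : Continuous g := continuous_iff_continuousAt.2 fun t => (hg t).continuousAt
  have ci : Continuous fun t => (h t ^ 2)⁻¹ :=
    (ch.pow 2).inv₀ fun t => (pow_pos (hpos t) 2).ne'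
  have hpi := pi_pos
  set L := ∫ t in x..x + π, (h t ^ 2)⁻¹ with hL
  have hL0 : 0 < L := intervalIntegral.intervalIntegral_pos_of_pos (ci.intervalIntegrable _ _)
    (fun t => inv_pos.2 (pow_pos (hpos t) 2)) (by linarith)
  set l := π / L with hl
  set σ : ℝ → ℝ := fun t => l * ∫ y in x..t, (h y ^ 2)⁻¹ with hσ
  have dσ : ∀ t, HasDerivAt σ (l * (h t ^ 2)⁻¹) t := fun t =>
    (intervalIntegral.integral_hasDerivAt_right (ci.intervalIntegrable _ _)
      (ci.stronglyMeasurableAtFilter _ _) ci.continuousAt).const_mul l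
  have cσ : Continuous σ := continuous_iff_continuousAt.2 fun t => (dσ t).continuousAt
  have σ0 : σ x = 0 := by simp [hσ]
  have σ1 : σ (x + π) = π := by
    simp only [hσ, ← hL, hl]; field_simp
  have d1 : ∀ t, HasDerivAt (fun t => h t * cos (σ t))
      (g t * cos (σ t) - h t * (l * (h t ^ 2)⁻¹) * sin (σ t)) t := fun t =>
    ((hh t).mul (dσ t).cos).congr_deriv (by ring)
  have d2 : ∀ t, HasDerivAt (fun t => h t * sin (σ t))
      (g t * sin (σ t) + h t * (l * (h t ^ 2)⁻¹) * cos (σ t)) t := fun t =>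
    ((hh t).mul (dσ t).sin).congr_deriv (by ring)
  have w1 := wirtinger_antiper (x := x) d1 (by fun_prop) (by simp [σ0, σ1, h1])
  have w2 := wirtinger_antiper (x := x) d2 (by fun_prop) (by simp [σ0, σ1])
  have w := add_nonneg w1 w2
  rw [← intervalIntegral.integral_add (Continuous.intervalIntegrable (by fun_prop) _ _)
    (Continuous.intervalIntegrable (by fun_prop) _ _)] at w
  have e1 : ∀ t, (g t * cos (σ t) - h t * (l * (h t ^ 2)⁻¹) * sin (σ t)) ^ 2 -
      (h t * cos (σ t)) ^ 2 + ((g t * sin (σ t) + h t * (l * (h t ^ 2)⁻¹) * cos (σ t)) ^ 2 -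
      (h t * sin (σ t)) ^ 2) = (g t ^ 2 + h t * (r t - h t)) - h t * r t + l ^ 2 * (h t ^ 2)⁻¹ := by
    intro t
    have hsc := sin_sq_add_cos_sq (σ t)
    have hp := (hpos t).ne'
    have e2 : h t ^ 2 * (h t ^ 2)⁻¹ = 1 := by field_simp
    linear_combination (g t ^ 2 - h t ^ 2 + h t ^ 2 * (l * (h t ^ 2)⁻¹) ^ 2) * hsc +
      l ^ 2 * (h t ^ 2)⁻¹ * e2
  simp only [e1] at w
  have hgh : ∀ t, HasDerivAt (fun t => h t * g t) (g t ^ 2 + h t * (r t - h t)) t := fun t =>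
    ((hh t).mul (hg t)).congr_deriv (by ring)
  have hb := intervalIntegral.integral_eq_sub_of_hasDerivAt (a := x) (b := x + π)
    (fun t _ => hgh t) (Continuous.intervalIntegrable (by fun_prop) _ _)
  rw [intervalIntegral.integral_add (Continuous.intervalIntegrable (by fun_prop) _ _)
    (Continuous.intervalIntegrable (by fun_prop) _ _),
    intervalIntegral.integral_sub (Continuous.intervalIntegrable (by fun_prop) _ _)
    (Continuous.intervalIntegrable (by fun_prop) _ _), hb, h1, g1,
    intervalIntegral.integral_const_mul, ← hL] at w
  have e3 : l ^ 2 * L * L = π ^ 2 := by rw [hl]; field_simp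
  nlinarith

namespace NormalParam

variable {K : Set (ℝ × ℝ)} {a b ρ : ℝ → ℝ} {s : ℝ × ℝ}

theorem supH_sub (s : ℝ × ℝ) (θ : ℝ) :
    supH a b s θ = supH a b 0 θ - s.1 * cos θ - s.2 * sin θ := by
  simp [supH]; ring

/-- The integral of `h ρ` over an arc, for the support function `h` with respect to `s`. -/
theorem integral_Hρ (hP : NormalParam K a b ρ) (s : ℝ × ℝ) (x y : ℝ) :
    ∫ t in x..y, supH a b s t * ρ t = (∫ t in x..y, supH a b 0 t * ρ t) -
      s.1 * (b y - b x) + s.2 * (a y - a x) := by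
  have c0 := hP.cH 0
  have cr := hP.cρ
  have hb := intervalIntegral.integral_eq_sub_of_hasDerivAt (a := x) (b := y)
    (fun t _ => hP.db t) (Continuous.intervalIntegrable (by fun_prop) _ _)
  have ha := intervalIntegral.integral_eq_sub_of_hasDerivAt (a := x) (b := y)
    (fun t _ => hP.da t) (Continuous.intervalIntegrable (by fun_prop) _ _)
  have e : ∀ t, supH a b s t * ρ t =
      supH a b 0 t * ρ t - s.1 * (ρ t * cos t) + s.2 * (-(ρ t * sin t)) := by
    intro t; rw [supH_sub s]; ring
  simp only [e]
  rw [intervalIntegral.integral_add (Continuous.intervalIntegrable (by fun_prop) _ _)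
    (Continuous.intervalIntegrable (by fun_prop) _ _),
    intervalIntegral.integral_sub (Continuous.intervalIntegrable (by fun_prop) _ _)
    (Continuous.intervalIntegrable (by fun_prop) _ _),
    intervalIntegral.integral_const_mul, intervalIntegral.integral_const_mul, ha, hb]

/-- A Blaschke–Santaló type inequality: some interior point `c` satisfies
`(∫ h ρ) (∫ h_c⁻²) ≤ 4π²`. The point `c` is the midpoint of two boundary points with parallel
tangents whose chord splits `∫ h_c ρ` into equal halves. -/
theorem exists_bs (hP : NormalParam K a b ρ) (hconv : Convex ℝ K) (hcomp : IsCompact K) :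
    ∃ c ∈ interior K, ∀ s : ℝ × ℝ, (∫ t in (0:ℝ)..2 * π, supH a b s t * ρ t) *
      (∫ t in (0:ℝ)..2 * π, (supH a b c t ^ 2)⁻¹) ≤ 4 * π ^ 2 := by
  have hpi := pi_pos
  set c : ℝ → ℝ × ℝ := fun x => ((a x + a (x + π)) / 2, (b x + b (x + π)) / 2) with hc
  set W : ℝ → ℝ := fun x => ∫ t in x..x + π, supH a b (c x) t * ρ t with hW
  have c0 := hP.cH 0
  have cr := hP.cρ
  have hca := hP.ca
  have hcb := hP.cb
  have cU : Continuous fun x => ∫ t in (0:ℝ)..x, supH a b 0 t * ρ t :=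
    intervalIntegral.continuous_primitive
      (fun _ _ => Continuous.intervalIntegrable (by fun_prop) _ _) 0
  have cW : Continuous W := by
    have : W = fun x => ((∫ t in (0:ℝ)..(x + π), supH a b 0 t * ρ t) -
        ∫ t in (0:ℝ)..x, supH a b 0 t * ρ t) -
        (c x).1 * (b (x + π) - b x) + (c x).2 * (a (x + π) - a x) := by
      funext x
      rw [intervalIntegral.integral_interval_sub_left
        (Continuous.intervalIntegrable (by fun_prop) _ _)
        (Continuous.intervalIntegrable (by fun_prop) _ _)]
      exact hP.integral_Hρ _ _ _
    rw [this]
    have cU' : Continuous fun x => ∫ t in (0:ℝ)..(x + π), supH a b 0 t * ρ t :=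
      cU.comp (by fun_prop : Continuous fun x : ℝ => x + π)
    simp only [hc]
    fun_prop
  have ea : ∀ x, a (x + π + π) = a x := fun x => by rw [← hP.pa x]; ring_nf
  have eb : ∀ x, b (x + π + π) = b x := fun x => by rw [← hP.pb x]; ring_nf
  have ec : ∀ x, c (x + π) = c x := by
    intro x; simp only [hc, ea, eb]; rw [add_comm (a (x + π)), add_comm (b (x + π))]
  have hper : ∀ s, Function.Periodic (fun t => supH a b s t * ρ t) (2 * π) := by
    intro s t; simp only [hP.pH, hP.pρ]
  have hWW : ∀ x, W (x + π + π) = W x := by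
    intro x
    simp only [hW]
    rw [ec, ec]
    have := intervalIntegral.integral_comp_add_right (a := x) (b := x + π)
      (fun t => supH a b (c x) t * ρ t) (2 * π)
    simp only [hP.pH, hP.pρ] at this
    rw [this]
    congr 1 <;> ring
  -- `W x - W (x + π)` changes sign under a half turn
  obtain ⟨x, -, hx⟩ : ∃ x ∈ Icc 0 π, W x - W (x + π) = 0 := by
    have hcont : Continuous fun x => W x - W (x + π) :=
      cW.sub (cW.comp (by fun_prop : Continuous fun x : ℝ => x + π))
    have e0 : W π - W (π + π) = -(W 0 - W (0 + π)) := by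
      have := hWW 0
      rw [zero_add] at this ⊢
      rw [this]; ring
    rcases le_total (W 0 - W (0 + π)) 0 with h | h
    · exact intermediate_value_Icc hpi.le hcont.continuousOn ⟨h, by simp only [e0]; linarith⟩
    · exact intermediate_value_Icc' hpi.le hcont.continuousOn ⟨by simp only [e0]; linarith, h⟩
  have m0 := hP.mem hcomp x
  have m1 := hP.mem hcomp (x + π)
  have hcK : c x ∈ K := by
    have := hconv m0 m1 (show (0:ℝ) ≤ 1 / 2 by norm_num) (show (0:ℝ) ≤ 1 / 2 by norm_num)
      (by norm_num)
    convert this using 1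
    ext <;> simp [hc] <;> ring
  have hci : c x ∈ interior K := by
    by_contra hni
    have hf : c x ∈ frontier K := ⟨subset_closure hcK, hni⟩
    rw [hP.fr] at hf
    obtain ⟨θ, hθ⟩ := hf
    have h0 := hP.supp θ _ m0
    have h1 := hP.supp θ _ m1
    have e1 : a θ = (a x + a (x + π)) / 2 := congrArg Prod.fst hθ
    have e2 : b θ = (b x + b (x + π)) / 2 := congrArg Prod.snd hθ
    have hsum : (a x * cos θ + b x * sin θ) + (a (x + π) * cos θ + b (x + π) * sin θ) =
        2 * (a θ * cos θ + b θ * sin θ) := by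
      rw [e1, e2]; ring
    obtain ⟨n, hn⟩ := hP.angle_eq θ x (by simp only at h0 h1; linarith)
    obtain ⟨k, hk⟩ := hP.angle_eq θ (x + π) (by simp only at h0 h1; linarith)
    have : (2 * (k - n) - 1 : ℝ) * π = 0 := by
      linear_combination hn - hk
    rcases mul_eq_zero.1 this with h | h
    · have : (2 * (k - n) - 1 : ℤ) = 0 := by exact_mod_cast h
      omega
    · exact hpi.ne' h
  refine ⟨c x, hci, fun s => ?_⟩
  have H1 : supH a b (c x) (x + π) = supH a b (c x) x := by
    simp only [supH, hc, cos_add_pi, sin_add_pi]; ring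
  have G1 : supG a b (c x) (x + π) = supG a b (c x) x := by
    simp only [supG, hc, cos_add_pi, sin_add_pi]; ring
  have eH : supH a b (c x) (x + π + π) = supH a b (c x) x := by
    rw [← hP.pH (c x) x]; ring_nf
  have eG : supG a b (c x) (x + π + π) = supG a b (c x) x := by
    rw [← hP.pG (c x) x]; ring_nf
  have hpos := fun t => hP.H_pos hci t
  have I1 := half_ineq (hP.hasDerivAt_H (c x)) (hP.hasDerivAt_G (c x)) hP.cρ hpos H1 G1
  have I2 := half_ineq (x := x + π) (hP.hasDerivAt_H (c x)) (hP.hasDerivAt_G (c x)) hP.cρ hpos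
    (eH.trans H1.symm) (eG.trans G1.symm)
  have cH := hP.cH (c x)
  have ci : Continuous fun t => (supH a b (c x) t ^ 2)⁻¹ :=
    (cH.pow 2).inv₀ fun t => (pow_pos (hpos t) 2).ne'
  have pA : ∫ t in (0:ℝ)..2 * π, supH a b s t * ρ t = W x + W (x + π) := by
    have e1 : ∫ t in (0:ℝ)..2 * π, supH a b s t * ρ t =
        ∫ t in (0:ℝ)..2 * π, supH a b (c x) t * ρ t := by
      rw [hP.integral_Hρ s, hP.integral_Hρ (c x)]
      have e1 := hP.pa 0
      have e2 := hP.pb 0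
      rw [zero_add] at e1 e2
      rw [e1, e2]; ring
    have e2 := (hper (c x)).intervalIntegral_add_eq 0 x
    rw [zero_add] at e2
    rw [e1, e2]
    simp only [hW, ec]
    rw [intervalIntegral.integral_add_adjacent_intervals
      (Continuous.intervalIntegrable (by fun_prop) _ _)
      (Continuous.intervalIntegrable (by fun_prop) _ _)]
    congr 1; ring
  have pL : ∫ t in (0:ℝ)..2 * π, (supH a b (c x) t ^ 2)⁻¹ =
      (∫ t in x..x + π, (supH a b (c x) t ^ 2)⁻¹) +
        ∫ t in (x + π)..(x + π + π), (supH a b (c x) t ^ 2)⁻¹ := by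
    have hp : Function.Periodic (fun t => (supH a b (c x) t ^ 2)⁻¹) (2 * π) := by
      intro t; simp only [hP.pH]
    have e2 := hp.intervalIntegral_add_eq 0 x
    rw [zero_add] at e2
    rw [e2, intervalIntegral.integral_add_adjacent_intervals (ci.intervalIntegrable _ _)
      (ci.intervalIntegrable _ _)]
    congr 1; ring
  rw [pA, pL]
  have J1 : W x * (∫ t in x..x + π, (supH a b (c x) t ^ 2)⁻¹) ≤ π ^ 2 := I1
  have J2 : W (x + π) * (∫ t in (x + π)..(x + π + π), (supH a b (c x) t ^ 2)⁻¹) ≤ π ^ 2 := by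
    simp only [hW, ec]; exact I2
  have J3 : W (x + π) = W x := by linarith
  rw [J3] at J2 ⊢
  linarith

end NormalParam

/-! ### The Santaló point and the equality case -/

namespace NormalParam

variable {K : Set (ℝ × ℝ)} {a b ρ : ℝ → ℝ} {s : ℝ × ℝ}

/-- In polar coordinates the polar dual is the region below the graph `r = 1 / h θ`. -/
theorem polar_mem_iff (hP : NormalParam K a b ρ) (hcomp : IsCompact K) (x : ℝ × ℝ) {r θ : ℝ}
    (hr : 0 < r) : (r * cos θ, r * sin θ) ∈ polarDual K x ↔ r * supH a b x θ ≤ 1 := by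
  constructor
  · intro h
    have := h _ (hP.mem hcomp θ)
    simp only at this
    simp only [supH]; linarith
  · intro h c hc
    have := hP.supp θ c hc
    simp only [supH] at h
    have h2 := mul_le_mul_of_nonneg_left this hr.le
    simp only; linarith

/-- The area of the polar dual with respect to `x` is `(1/2) ∫ h⁻²`, with `h` the support function based
at `x`. -/
theorem volume_polarDual (hP : NormalParam K a b ρ) (hcomp : IsCompact K) {x : ℝ × ℝ}
    (hx : x ∈ interior K) : volume (polarDual K x) =
      ENNReal.ofReal (∫ t in (0:ℝ)..2 * π, (supH a b x t ^ 2)⁻¹ / 2) := by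
  have hpi := pi_pos
  have hpos := fun t => hP.H_pos hx t
  have cH := hP.cH x
  have ci : Continuous fun t => (supH a b x t ^ 2)⁻¹ / 2 :=
    ((cH.pow 2).inv₀ fun t => (pow_pos (hpos t) 2).ne').div_const 2
  have hcl : IsClosed (polarDual K x) := by
    have : polarDual K x =
        ⋂ c ∈ K, {y : ℝ × ℝ | y.1 * (c.1 - x.1) + y.2 * (c.2 - x.2) ≤ 1} := by
      ext y; simp [polarDual]
    rw [this]
    exact isClosed_biInter fun c _ => isClosed_le (by fun_prop) (by fun_prop)
  have h1 : volume (polarDual K x) = ∫⁻ p, (polarDual K x).indicator 1 p :=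
    (lintegral_indicator_one hcl.measurableSet).symm
  rw [h1, ← lintegral_comp_polarCoord_symm]
  have h2 : ∫⁻ p in polarCoord.target, ENNReal.ofReal p.1 •
      (polarDual K x).indicator (1 : ℝ × ℝ → ENNReal) (polarCoord.symm p) =
      ∫⁻ p in Ioi (0:ℝ) ×ˢ Ioo (-π) π,
        {p : ℝ × ℝ | p.1 * supH a b x p.2 ≤ 1}.indicator (fun p => ENNReal.ofReal p.1) p := by
    refine setLIntegral_congr_fun (measurableSet_Ioi.prod measurableSet_Ioo) fun p hp => ?_
    have hp1 : 0 < p.1 := hp.1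
    have := hP.polar_mem_iff hcomp x (θ := p.2) hp1
    by_cases hm : p.1 * supH a b x p.2 ≤ 1
    · have h3 : polarCoord.symm p ∈ polarDual K x := this.2 hm
      have h4 : p ∈ {p : ℝ × ℝ | p.1 * supH a b x p.2 ≤ 1} := hm
      simp only [indicator_of_mem h3, indicator_of_mem h4, Pi.one_apply, smul_eq_mul, mul_one]
    · have h3 : polarCoord.symm p ∉ polarDual K x := fun h => hm (this.1 h)
      have h4 : p ∉ {p : ℝ × ℝ | p.1 * supH a b x p.2 ≤ 1} := hm
      simp only [indicator_of_notMem h3, indicator_of_notMem h4, smul_eq_mul, mul_zero]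
  have hmS : MeasurableSet {p : ℝ × ℝ | p.1 * supH a b x p.2 ≤ 1} :=
    (isClosed_le (by fun_prop) (by fun_prop)).measurableSet
  rw [h2, Measure.volume_eq_prod, setLIntegral_prod_symm _
    ((Measurable.indicator (by fun_prop) hmS).aemeasurable)]
  have h5 : ∀ θ, ∫⁻ r in Ioi (0:ℝ),
      {p : ℝ × ℝ | p.1 * supH a b x p.2 ≤ 1}.indicator (fun p => ENNReal.ofReal p.1) (r, θ) =
      ENNReal.ofReal ((supH a b x θ ^ 2)⁻¹ / 2) := by
    intro θ
    have hθ := hpos θ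
    have e1 : ∀ r : ℝ, {p : ℝ × ℝ | p.1 * supH a b x p.2 ≤ 1}.indicator
        (fun p => ENNReal.ofReal p.1) (r, θ) =
        (Iic (1 / supH a b x θ)).indicator (fun r => ENNReal.ofReal r) r := by
      intro r
      simp only [indicator, mem_setOf_eq, mem_Iic, le_div_iff₀ hθ]
    simp only [e1]
    rw [setLIntegral_indicator measurableSet_Iic, inter_comm, Ioi_inter_Iic,
      ← ofReal_integral_eq_lintegral_ofReal, ← intervalIntegral.integral_of_le (by positivity),
      integral_id]
    · congr 1; field_simp; ring
    · exact continuous_id.integrableOn_Ioc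
    · rw [Filter.EventuallyLE, ae_restrict_iff' measurableSet_Ioc]
      exact Filter.Eventually.of_forall fun r hr => hr.1.le
  simp only [h5]
  rw [restrict_Ioo_eq_restrict_Ioc, ← ofReal_integral_eq_lintegral_ofReal,
    ← intervalIntegral.integral_of_le (by linarith)]
  · have hp : Function.Periodic (fun t => (supH a b x t ^ 2)⁻¹ / 2) (2 * π) := by
      intro t; simp only [hP.pH]
    have e2 := hp.intervalIntegral_add_eq (-π) 0
    rw [zero_add] at e2
    rw [← e2]
    congr 2; ring
  · exact ci.integrableOn_Ioc
  · exact Filter.Eventually.of_forall fun t => by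
      simp only [Pi.zero_apply]; positivity

/-- The Santaló point minimizes `∫ h⁻²` among interior base points. -/
theorem santalo_le (hP : NormalParam K a b ρ) (hcomp : IsCompact K) (hs : IsSantaloPoint K s)
    {c : ℝ × ℝ} (hc : c ∈ interior K) :
    ∫ t in (0:ℝ)..2 * π, (supH a b s t ^ 2)⁻¹ ≤ ∫ t in (0:ℝ)..2 * π, (supH a b c t ^ 2)⁻¹ := by
  have h := hs.2 c hc
  have hpi := pi_pos
  rw [hP.volume_polarDual hcomp hs.1, hP.volume_polarDual hcomp hc, ENNReal.ofReal_le_ofReal_iff,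
    intervalIntegral.integral_div, intervalIntegral.integral_div] at h
  · linarith
  · exact intervalIntegral.integral_nonneg (by linarith) fun t _ => by positivity

/-- Equality case: `∫ √(ρ / h) ≥ 2π` and the Blaschke–Santaló inequality force `ρ h³` to be
constant. -/
theorem exists_const (hP : NormalParam K a b ρ) (hconv : Convex ℝ K) (hcomp : IsCompact K)
    (hs : IsSantaloPoint K s)
    (hI : 2 * π ≤ ∫ θ in Ioc 0 (2 * π), √(ρ θ / supH a b s θ)) :
    ∃ l : ℝ, 0 < l ∧ ∀ θ, ρ θ = l ^ 2 / supH a b s θ ^ 3 := by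
  have hpi := pi_pos
  have hpos := fun t => hP.H_pos hs.1 t
  have hρ := hP.pos
  have cH := hP.cH s
  have cρ := hP.cρ
  have ci : Continuous fun t => (supH a b s t ^ 2)⁻¹ :=
    (cH.pow 2).inv₀ fun t => (pow_pos (hpos t) 2).ne'
  have ci1 : Continuous fun t => (supH a b s t)⁻¹ := cH.inv₀ fun t => (hpos t).ne'
  have csq : Continuous fun t => √(ρ t / supH a b s t) :=
    (cρ.div cH fun t => (hpos t).ne').sqrt
  obtain ⟨c, hc, hbs⟩ := hP.exists_bs hconv hcomp
  set A := ∫ t in (0:ℝ)..2 * π, supH a b s t * ρ t with hA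
  set L := ∫ t in (0:ℝ)..2 * π, (supH a b s t ^ 2)⁻¹ with hL
  have hA0 : 0 < A := intervalIntegral.intervalIntegral_pos_of_pos
    (Continuous.intervalIntegrable (by fun_prop) _ _)
    (fun t => mul_pos (hpos t) (hρ t)) (by linarith)
  have hAL : A * L ≤ 4 * π ^ 2 :=
    (mul_le_mul_of_nonneg_left (hP.santalo_le hcomp hs hc) hA0.le).trans (hbs s)
  rw [← intervalIntegral.integral_of_le (by linarith)] at hI
  -- for this `l` the square below has integral at most `A + l² L - 4π l ≤ 0`
  set l := A / (2 * π) with hl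
  have hl0 : 0 < l := by positivity
  have hAl : A = 2 * π * l := by rw [hl]; field_simp
  set f : ℝ → ℝ := fun t => (√(supH a b s t * ρ t) - l * (supH a b s t)⁻¹) ^ 2 with hf
  have cf : Continuous f := by
    have : Continuous fun t => √(supH a b s t * ρ t) := (cH.mul cρ).sqrt
    simp only [hf]; fun_prop
  have ef : ∀ t, f t = supH a b s t * ρ t - 2 * l * √(ρ t / supH a b s t) +
      l ^ 2 * (supH a b s t ^ 2)⁻¹ := by
    intro t
    have h0 := hpos t
    have h1 := hρ t
    have e1 : √(supH a b s t * ρ t) ^ 2 = supH a b s t * ρ t := sq_sqrt (by positivity)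
    have e2 : √(supH a b s t * ρ t) * (supH a b s t)⁻¹ = √(ρ t / supH a b s t) := by
      symm
      rw [sqrt_eq_iff_mul_self_eq (by positivity) (by positivity), ← sq, mul_pow, e1]
      field_simp
    have e3 : (supH a b s t)⁻¹ ^ 2 = (supH a b s t ^ 2)⁻¹ := inv_pow _ _
    simp only [hf]
    linear_combination e1 - 2 * l * e2 + l ^ 2 * e3
  have hint : ∫ t in (0:ℝ)..2 * π, f t =
      A - 2 * l * (∫ t in (0:ℝ)..2 * π, √(ρ t / supH a b s t)) + l ^ 2 * L := by
    simp only [ef]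
    rw [intervalIntegral.integral_add (Continuous.intervalIntegrable (by fun_prop) _ _)
      (Continuous.intervalIntegrable (by fun_prop) _ _),
      intervalIntegral.integral_sub (Continuous.intervalIntegrable (by fun_prop) _ _)
      (Continuous.intervalIntegrable (by fun_prop) _ _),
      intervalIntegral.integral_const_mul, intervalIntegral.integral_const_mul]
  have hle : ∫ t in (0:ℝ)..2 * π, f t ≤ 0 := by
    rw [hint]
    have e1 : 2 * l * (2 * π) ≤ 2 * l * ∫ t in (0:ℝ)..2 * π, √(ρ t / supH a b s t) := by gcongr
    have e2 : l * L ≤ 2 * π := by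
      rw [hAl] at hAL
      have : 2 * π * (l * L) ≤ 2 * π * (2 * π) := by linarith
      exact le_of_mul_le_mul_left this (by positivity)
    have e3 : l * (l * L) ≤ l * (2 * π) := by gcongr
    nlinarith
  have hf0 : ∀ t ∈ Icc 0 (2 * π), f t = 0 := by
    intro t ht
    by_contra hne
    have : 0 < ∫ t in (0:ℝ)..2 * π, f t := intervalIntegral.integral_pos (by linarith)
      cf.continuousOn (fun t _ => sq_nonneg _) ⟨t, ht, lt_of_le_of_ne (sq_nonneg _) (Ne.symm hne)⟩
    linarith
  have hfp : ∀ t, f (t + 2 * π) = f t := by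
    intro t; simp only [hf, hP.pH, hP.pρ]
  refine ⟨l, hl0, fun θ => ?_⟩
  obtain ⟨n, hn⟩ := exists_Ioc θ
  have h0 := hf0 _ ⟨hn.1.le, hn.2⟩
  rw [per_int hfp] at h0
  have h1 : √(supH a b s θ * ρ θ) = l * (supH a b s θ)⁻¹ := by
    have : √(supH a b s θ * ρ θ) - l * (supH a b s θ)⁻¹ = 0 := pow_eq_zero_iff two_ne_zero |>.1 h0
    linarith
  have h2 : supH a b s θ * ρ θ = (l * (supH a b s θ)⁻¹) ^ 2 := by
    rw [← h1, sq_sqrt (mul_pos (hpos θ) (hρ θ)).le]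
  have hp := hpos θ
  rw [eq_div_iff (by positivity)]
  field_simp at h2
  linarith

end NormalParam

/-- Solutions of `x' = κ y`, `y' = -κ x` rotate by the angle `ψ = ∫ κ`. -/
theorem rotation_solution {x y κ ψ : ℝ → ℝ} (hx : ∀ t, HasDerivAt x (κ t * y t) t)
    (hy : ∀ t, HasDerivAt y (-(κ t * x t)) t) (hψ : ∀ t, HasDerivAt ψ (κ t) t) (h0 : ψ 0 = 0)
    (t : ℝ) : x t = cos (ψ t) * x 0 + sin (ψ t) * y 0 := by
  have d1 : ∀ t, HasDerivAt (fun t => x t * cos (ψ t) - y t * sin (ψ t)) 0 t := fun t =>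
    (((hx t).mul (hψ t).cos).sub ((hy t).mul (hψ t).sin)).congr_deriv (by ring)
  have d2 : ∀ t, HasDerivAt (fun t => x t * sin (ψ t) + y t * cos (ψ t)) 0 t := fun t =>
    (((hx t).mul (hψ t).sin).add ((hy t).mul (hψ t).cos)).congr_deriv (by ring)
  have c1 := is_const_of_deriv_eq_zero (fun t => (d1 t).differentiableAt) (fun t => (d1 t).deriv) t 0
  have c2 := is_const_of_deriv_eq_zero (fun t => (d2 t).differentiableAt) (fun t => (d2 t).deriv) t 0
  simp only [h0, cos_zero, sin_zero] at c1 c2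
  linear_combination cos (ψ t) * c1 + sin (ψ t) * c2 - x t * sin_sq_add_cos_sq (ψ t)

namespace NormalParam

variable {K : Set (ℝ × ℝ)} {a b ρ : ℝ → ℝ} {s : ℝ × ℝ}

/-- If `ρ h³` is constant, the boundary is an ellipse centred at `s`. In the parameter `ψ = ∫ l h⁻²` the
position vector relative to `s` satisfies the equation of a harmonic oscillator. -/
theorem isEllipse_of_const (hP : NormalParam K a b ρ) (hs : s ∈ interior K) {l : ℝ} (hl : 0 < l)
    (hρ : ∀ θ, ρ θ = l ^ 2 / supH a b s θ ^ 3) : IsEllipse (frontier K) := by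
  have hpos := fun t => hP.H_pos hs t
  have cH := hP.cH s
  set κ : ℝ → ℝ := fun t => l * (supH a b s t ^ 2)⁻¹ with hκ
  have cκ : Continuous κ :=
    ((cH.pow 2).inv₀ fun t => (pow_pos (hpos t) 2).ne').const_mul l
  set ψ : ℝ → ℝ := fun t => ∫ y in (0:ℝ)..t, κ y with hψ
  have dψ : ∀ t, HasDerivAt ψ (κ t) t := fun t =>
    intervalIntegral.integral_hasDerivAt_right (cκ.intervalIntegrable _ _)
      (cκ.stronglyMeasurableAtFilter _ _) cκ.continuousAt
  have ψ0 : ψ 0 = 0 := by simp [hψ]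
  have cψ : Continuous ψ := continuous_iff_continuousAt.2 fun t => (dψ t).continuousAt
  have hsurj : Function.Surjective ψ := by
    obtain ⟨m, B, hm, hB, hbd⟩ := hP.exists_Bd hs
    have hB0 : 0 < B := by linarith
    set k := l * (B ^ 2)⁻¹ with hk
    have hk0 : 0 < k := by positivity
    have hkκ : ∀ t, k ≤ κ t := by
      intro t
      have h1 := hpos t
      have h2 := (hbd t).2.1
      simp only [hk, hκ]
      gcongr
    have hd : ∀ t, HasDerivAt (fun t => ψ t - k * t) (κ t - k) t := fun t =>
      ((dψ t).sub ((hasDerivAt_id t).const_mul k)).congr_deriv (by simp)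
    have hmono : Monotone fun t => ψ t - k * t :=
      monotone_of_deriv_nonneg (fun t => (hd t).differentiableAt) fun t => by
        rw [(hd t).deriv]; linarith [hkκ t]
    refine cψ.surjective ?_ ?_
    · refine Filter.tendsto_atTop_mono' _ ?_ (Filter.tendsto_id.const_mul_atTop hk0)
      filter_upwards [Filter.eventually_ge_atTop 0] with t ht
      have := hmono ht
      simp only [ψ0] at this
      simp only [id]; linarith
    · refine Filter.tendsto_atBot_mono' _ ?_ (Filter.tendsto_id.const_mul_atBot hk0)
      filter_upwards [Filter.eventually_le_atBot 0] with t ht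
      have := hmono ht
      simp only [ψ0] at this
      simp only [id]; linarith
  have ea : ∀ t, a t - s.1 = supH a b s t * cos t - supG a b s t * sin t := by
    intro t; simp only [supH, supG]; linear_combination -(a t - s.1) * sin_sq_add_cos_sq t
  have eb : ∀ t, b t - s.2 = supH a b s t * sin t + supG a b s t * cos t := by
    intro t; simp only [supH, supG]; linear_combination -(b t - s.2) * sin_sq_add_cos_sq t
  have dinv : ∀ t, HasDerivAt (fun t => l * (supH a b s t)⁻¹)
      (l * (-supG a b s t / supH a b s t ^ 2)) t := fun t =>
    ((hP.hasDerivAt_H s t).fun_inv (hpos t).ne').const_mul l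
  have s1 := rotation_solution (x := fun t => a t - s.1)
    (y := fun t => l * (supH a b s t)⁻¹ * -sin t) (κ := κ) (ψ := ψ)
    (fun t => ((hP.da t).sub_const s.1).congr_deriv (by
      have := (hpos t).ne'
      simp only [hκ, hρ]; field_simp))
    (fun t => ((dinv t).mul (hasDerivAt_sin t).neg).congr_deriv (by
      have := (hpos t).ne'
      simp only [hκ, ea, Pi.neg_apply]; field_simp; ring)) dψ ψ0
  have s2 := rotation_solution (x := fun t => b t - s.2)
    (y := fun t => l * (supH a b s t)⁻¹ * cos t) (κ := κ) (ψ := ψ)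
    (fun t => ((hP.db t).sub_const s.2).congr_deriv (by
      have := (hpos t).ne'
      simp only [hκ, hρ]; field_simp))
    (fun t => ((dinv t).mul (hasDerivAt_cos t)).congr_deriv (by
      have := (hpos t).ne'
      simp only [hκ, eb]; field_simp; ring)) dψ ψ0
  simp only [sin_zero, cos_zero, neg_zero, mul_zero, add_zero, mul_one] at s1 s2
  have p0 : 0 < a 0 - s.1 := by
    have := hpos 0
    simpa [supH] using this
  have q0 := hpos 0
  set h0 := a 0 - s.1 with hh0
  set g0 := b 0 - s.2 with hg0
  set e0 := l * (supH a b s 0)⁻¹ with he0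
  have e0p : 0 < e0 := by positivity
  let M : (ℝ × ℝ) →ₗ[ℝ] ℝ × ℝ :=
    { toFun := fun x => (x.1 * h0, x.1 * g0 + x.2 * e0)
      map_add' := fun x y => by ext <;> simp <;> ring
      map_smul' := fun c x => by ext <;> simp <;> ring }
  have hM : ∀ x, M x = (x.1 * h0, x.1 * g0 + x.2 * e0) := fun _ => rfl
  refine ⟨M, s, ⟨?_, ?_⟩, ?_⟩
  · intro x y hxy
    rw [hM, hM, Prod.mk.injEq] at hxy
    obtain ⟨h1, h2⟩ := hxy
    have h3 : x.1 = y.1 := mul_right_cancel₀ p0.ne' h1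
    rw [h3] at h2
    have h4 : x.2 = y.2 := mul_right_cancel₀ e0p.ne' (add_left_cancel h2)
    exact Prod.ext h3 h4
  · intro y
    refine ⟨(y.1 / h0, (y.2 - y.1 / h0 * g0) / e0), ?_⟩
    rw [hM]
    ext
    · simp only; field_simp
    · simp only; field_simp; ring
  · rw [hP.fr]
    have hp : ∀ θ, s + M (cos (ψ θ), sin (ψ θ)) = (a θ, b θ) := by
      intro θ
      rw [hM]
      ext
      · simp only [Prod.fst_add]; linarith [s1 θ]
      · simp only [Prod.snd_add]; linarith [s2 θ]
    ext p
    constructor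
    · rintro ⟨θ, rfl⟩
      exact ⟨(cos (ψ θ), sin (ψ θ)), cos_sq_add_sin_sq _, hp θ⟩
    · rintro ⟨x, hx, rfl⟩
      have hx : x.1 ^ 2 + x.2 ^ 2 = 1 := hx
      obtain ⟨y, hy1, hy2⟩ : ∃ y, cos y = x.1 ∧ sin y = x.2 := by
        refine ⟨Complex.arg ⟨x.1, x.2⟩, ?_, ?_⟩
        all_goals
          have hn : ‖(⟨x.1, x.2⟩ : ℂ)‖ = 1 := by
            rw [Complex.norm_def, Complex.normSq_mk, ← sq, ← sq, hx, sqrt_one]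
        · rw [Complex.cos_arg (by rw [← norm_pos_iff, hn]; norm_num), hn, div_one]
        · rw [Complex.sin_arg, hn, div_one]
      obtain ⟨θ, rfl⟩ := hsurj y
      refine ⟨θ, ?_⟩
      simp only
      rw [← hp θ, hy1, hy2]

end NormalParam

/-- The outer billiard map `T` is `C¹` on `Ω = ℝ² ∖ K`, and if `∂K` is not an
ellipse then some power of `T` maps some radial vector (based at the Santalo point `s`)
to a radial vector. -/
theorem outer_billiard_conjugate_points
    (K : Set (ℝ × ℝ)) (hconv : Convex ℝ K) (hcomp : IsCompact K)
    (hint : (interior K).Nonempty)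
    (hbd : ∃ O r, HasC2PosCurvBoundary K O r)
    (T : ℝ × ℝ → ℝ × ℝ) (hT : IsOuterBilliard K T)
    (s : ℝ × ℝ) (hs : IsSantaloPoint K s) :
    ContDiffOn ℝ 1 T Kᶜ ∧
    (¬ IsEllipse (frontier K) →
      ∃ x ∈ (Kᶜ : Set (ℝ × ℝ)), ∃ n : ℕ, 1 ≤ n ∧ ∃ c : ℝ, c ≠ 0 ∧
        fderiv ℝ (T^[n]) x (x - s) = c • (T^[n] x - s)) := by
  obtain ⟨O, r, h⟩ := hbd
  obtain ⟨a, b, ρ, hP⟩ := exists_normalParam K hconv hcomp O r h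
  refine ⟨hP.contDiffOn_T hcomp hT, fun hE => ?_⟩
  by_contra hN
  refine hE ?_
  have hI := hP.integral_sqrt_ge hcomp hT hs.1 fun x hx n hn c hc e =>
    hN ⟨x, hx, n, hn, c, hc, e⟩
  obtain ⟨l, hl, hρ⟩ := hP.exists_const hconv hcomp hs hI
  exact hP.isEllipse_of_const hs.1 hl hρ
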